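/- arXiv:0807.0706 — 3 statements merged into one kernel-verified Lean document; each statement's English description precedes it below -/
import Mathlib

section
/- Let R be a commutative noetherian ring and let M be a nonzero R-module of finite Gorenstein injective dimension g = Gid_R(M). Then g = sup{ depth(R_p) − width_{R_p}(M_p) : p a prime ideal of R }. More precisely: (a) for every prime ideal p of R with width_{R_p}(M_p) < ∞ one has depth(R_p) − width_{R_p}(M_p) ≤ g; and (b) there exists a prime ideal p of R with width_{R_p}(M_p) < ∞ and depth(R_p) − width_{R_p}(M_p) = g. -/
/-!
Chouinard formula for Gorenstein injective dimension: if `M` is a nonzero `R`-module of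
finite Gorenstein injective dimension `g`, then
`g = sup { depth R_p - width_{R_p} M_p : p prime }`. More precisely:
(a) `depth R_p - width_{R_p} M_p ≤ g` for every prime `p` with `width_{R_p} M_p < ∞`, and
(b) some prime `p` has `width_{R_p} M_p < ∞` and `depth R_p - width_{R_p} M_p = g`.
-/

universe u

open CategoryTheory

/-- A witness that `J` is a Gorenstein injective `R`-module: an exact complex `I` of
injective `R`-modules (with differentials `d i : I (i+1) →ₗ[R] I i`) such that
`Hom_R(E, I)` is exact for every injective `R`-module `E`, together with an
isomorphism `J ≅ ker (I 0 → I (-1))`. -/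
structure GorensteinInjectiveWitness (R : Type u) [CommRing R]
    (J : Type u) [AddCommGroup J] [Module R J] : Type (u + 1) where
  I : ℤ → Type u
  [acg : ∀ i, AddCommGroup (I i)]
  [mod : ∀ i, Module R (I i)]
  inj : ∀ i, Module.Injective R (I i)
  d : ∀ i : ℤ, I (i + 1) →ₗ[R] I i
  d_comp_d : ∀ i : ℤ, (d i).comp (d (i + 1)) = 0
  exact : ∀ i : ℤ, LinearMap.ker (d i) = LinearMap.range (d (i + 1))
  hom_exact : ∀ (E : Type u) [AddCommGroup E] [Module R E], Module.Injective R E →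
    ∀ (i : ℤ) (f : E →ₗ[R] I (i + 1)), (d i).comp f = 0 →
      ∃ g : E →ₗ[R] I (i + 1 + 1), (d (i + 1)).comp g = f
  ker_iso : Nonempty (J ≃ₗ[R] LinearMap.ker (d (-1)))

/-- `J` is a Gorenstein injective `R`-module. -/
def IsGorensteinInjective (R : Type u) [CommRing R]
    (J : Type u) [AddCommGroup J] [Module R J] : Prop :=
  Nonempty (GorensteinInjectiveWitness R J)

/-- A witness for an exact sequence `0 → M → J⁰ → J¹ → ⋯ → Jⁿ → 0` with each `Jⁱ`
Gorenstein injective (modules beyond index `n` are trivial, which encodes that the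
sequence stops at `Jⁿ`). -/
structure GidWitness (R : Type u) [CommRing R]
    (M : Type u) [AddCommGroup M] [Module R M] (n : ℕ) : Type (u + 1) where
  J : ℕ → Type u
  [acg : ∀ i, AddCommGroup (J i)]
  [mod : ∀ i, Module R (J i)]
  gi : ∀ i ≤ n, IsGorensteinInjective R (J i)
  triv : ∀ i, n < i → Subsingleton (J i)
  ε : M →ₗ[R] J 0
  ε_inj : Function.Injective ε
  d : ∀ i : ℕ, J i →ₗ[R] J (i + 1)
  exact_zero : LinearMap.ker (d 0) = LinearMap.range ε
  exact : ∀ i : ℕ, LinearMap.ker (d (i + 1)) = LinearMap.range (d i)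

/-- The Gorenstein injective dimension of a module: the least `n` admitting an exact
sequence `0 → M → J⁰ → ⋯ → Jⁿ → 0` of Gorenstein injective modules, as an element
of `ℕ∞` (`⊤` if there is no such `n`). -/
noncomputable def gid (R : Type u) [CommRing R]
    (M : Type u) [AddCommGroup M] [Module R M] : ℕ∞ :=
  sInf {c : ℕ∞ | ∃ n : ℕ, c = n ∧ Nonempty (GidWitness R M n)}

/-- The depth of a noetherian local ring `A`: the supremum (in `ℕ∞`) of lengths of
`A`-regular sequences contained in the maximal ideal. -/
noncomputable def ringDepth (A : Type u) [CommRing A] [IsLocalRing A] : ℕ∞ :=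
  sSup {c : ℕ∞ | ∃ rs : List A, c = rs.length ∧
    (∀ r ∈ rs, r ∈ IsLocalRing.maximalIdeal A) ∧ RingTheory.Sequence.IsRegular A rs}

/-- The width of a module `N` over a local ring `A`:
`inf { i | Tor_i^A(k, N) ≠ 0 } ∈ ℕ∞`, where `k` is the residue field of `A`. -/
noncomputable def modWidth (A : Type u) [CommRing A] [IsLocalRing A]
    (N : Type u) [AddCommGroup N] [Module A N] : ℕ∞ :=
  sInf {c : ℕ∞ | ∃ i : ℕ, c = i ∧
    ¬ Subsingleton (((Tor (ModuleCat.{u} A) i).obj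
      (ModuleCat.of A (IsLocalRing.ResidueField A))).obj (ModuleCat.of A N))}



namespace GorInj
section gi
variable {R : Type u} [CommRing R]

/-- `0 → A → B → C → 0` is exact. -/
def SE {A B C : Type*} [AddCommGroup A] [Module R A] [AddCommGroup B] [Module R B]
    [AddCommGroup C] [Module R C] (f : A →ₗ[R] B) (g : B →ₗ[R] C) : Prop :=
  Function.Injective f ∧ Function.Surjective g ∧ Function.Exact f g

/-- Maps from injective modules lift along `g`. -/
def HomSurj {B C : ModuleCat.{u} R} (g : B →ₗ[R] C) : Prop :=
  ∀ (E : Type u) [AddCommGroup E] [Module R E], Module.Injective R E →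
    ∀ h : E →ₗ[R] C, ∃ k : E →ₗ[R] B, g.comp k = h

/-- `A` is a syzygy of `B` by a proper short exact sequence with injective middle term. -/
def Rel (A B : ModuleCat.{u} R) : Prop :=
  ∃ (I : ModuleCat.{u} R) (f : A →ₗ[R] I) (g : I →ₗ[R] B),
    Module.Injective R I ∧ SE f g ∧ HomSurj g

/-- Coinductive version of Gorenstein injectivity. -/
def GIp (M : ModuleCat.{u} R) : Prop :=
  ∃ C : ModuleCat.{u} R → Prop,
    (∀ A, C A → (∃ B, C B ∧ Rel B A) ∧ (∃ B, C B ∧ Rel A B)) ∧ C M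

lemma GIp.left {M : ModuleCat.{u} R} (h : GIp M) : ∃ B, GIp B ∧ Rel B M := by
  obtain ⟨C, hC, hM⟩ := h
  obtain ⟨⟨B, hB, hr⟩, -⟩ := hC M hM
  exact ⟨B, ⟨C, hC, hB⟩, hr⟩

lemma GIp.right {M : ModuleCat.{u} R} (h : GIp M) : ∃ B, GIp B ∧ Rel M B := by
  obtain ⟨C, hC, hM⟩ := h
  obtain ⟨-, ⟨B, hB, hr⟩⟩ := hC M hM
  exact ⟨B, ⟨C, hC, hB⟩, hr⟩

lemma GIp.coind (C : ModuleCat.{u} R → Prop)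
    (hC : ∀ A, C A → (∃ B, (C B ∨ GIp B) ∧ Rel B A) ∧ (∃ B, (C B ∨ GIp B) ∧ Rel A B))
    {M} (hM : C M) : GIp M := by
  refine ⟨fun A => C A ∨ GIp A, ?_, Or.inl hM⟩
  rintro A (hA | hA)
  · exact hC A hA
  · obtain ⟨B, hB, hr⟩ := hA.left
    obtain ⟨B', hB', hr'⟩ := hA.right
    exact ⟨⟨B, Or.inr hB, hr⟩, ⟨B', Or.inr hB', hr'⟩⟩

lemma exists_desc {A B C D : Type*} [AddCommGroup A] [Module R A] [AddCommGroup B] [Module R B]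
    [AddCommGroup C] [Module R C] [AddCommGroup D] [Module R D] {f : A →ₗ[R] B} {g : B →ₗ[R] C}
    (hs : Function.Surjective g) (he : Function.Exact f g) (h : B →ₗ[R] D)
    (hh : ∀ a, h (f a) = 0) : ∃ k : C →ₗ[R] D, ∀ b, k (g b) = h b := by
  let e := g.quotKerEquivOfSurjective hs
  refine ⟨(Submodule.liftQ _ h ?_) ∘ₗ e.symm.toLinearMap, fun b => ?_⟩
  · intro b hb
    obtain ⟨a, rfl⟩ := (he b).1 hb
    exact hh a
  · have : e.symm (g b) = Submodule.Quotient.mk b := by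
      rw [LinearEquiv.symm_apply_eq]; rfl
    simp [this]

/-- lift of a map landing in the kernel -/
lemma exists_lift {A B C D : Type*} [AddCommGroup A] [Module R A] [AddCommGroup B] [Module R B]
    [AddCommGroup C] [Module R C] [AddCommGroup D] [Module R D] {f : A →ₗ[R] B} {g : B →ₗ[R] C}
    (hi : Function.Injective f) (he : Function.Exact f g) (h : D →ₗ[R] B)
    (hh : ∀ a, g (h a) = 0) : ∃ k : D →ₗ[R] A, ∀ b, f (k b) = h b := by
  let e := LinearEquiv.ofInjective f hi
  refine ⟨e.symm.toLinearMap ∘ₗ h.codRestrict (LinearMap.range f) (fun d => (he _).1 (hh d)), ?_⟩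
  intro b
  have := congrArg Subtype.val (e.apply_symm_apply
    (h.codRestrict (LinearMap.range f) (fun d => (he _).1 (hh d)) b))
  exact this

lemma GIp.ext1 {G X Y : ModuleCat.{u} R} (hG : GIp G) {i : G →ₗ[R] X} {π : X →ₗ[R] Y}
    (h : SE i π) : HomSurj π := by
  obtain ⟨Q, -, I, f, g, hI, ⟨hf, hg, hfg⟩, hl⟩ := hG.right
  obtain ⟨hi, hπ, hiπ⟩ := h
  obtain ⟨a, ha⟩ := hI.out i hi f
  obtain ⟨b, hb⟩ := exists_desc hπ hiπ (g ∘ₗ a) (fun x => by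
    simp only [LinearMap.comp_apply, ha]; exact hfg.apply_apply_eq_zero x)
  intro E _ _ hE h
  obtain ⟨k, hk⟩ := hl E hE (b ∘ₗ h)
  -- the pairs
  have key : ∀ e : E, ∃! x : X, π x = h e ∧ a x = k e := by
    intro e
    obtain ⟨x0, hx0⟩ := hπ (h e)
    have h1 : g (k e - a x0) = 0 := by
      have h2 := LinearMap.congr_fun hk e
      have h3 := hb x0
      simp only [LinearMap.comp_apply] at h2 h3
      rw [map_sub, h2, ← h3, hx0, sub_self]
    obtain ⟨y, hy⟩ := (hfg _).1 h1
    refine ⟨x0 + i y, ⟨?_, ?_⟩, ?_⟩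
    · rw [map_add, hx0, hiπ.apply_apply_eq_zero, add_zero]
    · rw [map_add, ha, hy]; abel
    · rintro z ⟨hz1, hz2⟩
      have h4 : π (z - x0) = 0 := by rw [map_sub, hz1, hx0, sub_self]
      obtain ⟨w, hw⟩ := (hiπ _).1 h4
      have h5 : f w = f y := by rw [← ha w, hw, map_sub, hz2, hy]
      rw [hf h5] at hw
      rw [hw]; abel
  choose s hs hu using key
  refine ⟨{ toFun := s, map_add' := ?_, map_smul' := ?_ }, ?_⟩
  · intro x y
    refine (hu _ _ ⟨?_, ?_⟩).symm
    · rw [map_add, (hs x).1, (hs y).1, map_add]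
    · rw [map_add, (hs x).2, (hs y).2, map_add]
  · intro r x
    refine (hu _ _ ⟨?_, ?_⟩).symm
    · simp [(hs x).1]
    · simp [(hs x).2]
  · ext e; exact (hs e).1

lemma injective_prod {A B : Type u} [AddCommGroup A] [Module R A] [AddCommGroup B] [Module R B]
    (hA : Module.Injective R A) (hB : Module.Injective R B) : Module.Injective R (A × B) where
  out := by
    intro X Y _ _ _ _ f hf g
    obtain ⟨a, ha⟩ := hA.out f hf (LinearMap.fst R A B ∘ₗ g)
    obtain ⟨b, hb⟩ := hB.out f hf (LinearMap.snd R A B ∘ₗ g)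
    exact ⟨a.prod b, fun x => Prod.ext (ha x) (hb x)⟩

lemma injective_punit : Module.Injective R PUnit.{u+1} where
  out := by intros; exact ⟨0, fun _ => rfl⟩

lemma GIp.of_injective {M : ModuleCat.{u} R} (hM : Module.Injective R M) : GIp M := by
  refine GIp.coind (fun A => Module.Injective R A) (fun A hA => ⟨?_, ?_⟩) hM
  · refine ⟨ModuleCat.of R PUnit, Or.inl injective_punit, A, 0, LinearMap.id, hA,
      ⟨fun _ _ _ => rfl, fun x => ⟨x, rfl⟩, fun x => ?_⟩, ?_⟩
    · constructor
      · rintro rfl; exact ⟨0, rfl⟩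
      · rintro ⟨y, rfl⟩; rfl
    · intro E _ _ _ h; exact ⟨h, rfl⟩
  · refine ⟨ModuleCat.of R PUnit, Or.inl injective_punit, A, LinearMap.id, 0, hA,
      ⟨fun _ _ h => h, fun x => ⟨0, rfl⟩, fun x => ?_⟩, ?_⟩
    · constructor
      · intro _; exact ⟨x, rfl⟩
      · rintro ⟨y, rfl⟩; rfl
    · intro E _ _ _ h; exact ⟨0, rfl⟩

/-- extension closure -/
lemma GIp.extension {A P C : ModuleCat.{u} R} (hA : GIp A) (hC : GIp C)
    {i : A →ₗ[R] P} {p : P →ₗ[R] C} (h : SE i p) : GIp P := by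
  refine GIp.coind (fun P => ∃ (A C : ModuleCat.{u} R) (i : A →ₗ[R] P) (p : P →ₗ[R] C),
    GIp A ∧ GIp C ∧ SE i p) ?_ ⟨A, C, i, p, hA, hC, h⟩
  clear h hA hC i p A P C
  rintro P ⟨A, C, i, p, hA, hC, h⟩
  constructor
  · obtain ⟨A', hA', IA, fA, gA, hIA, ⟨hfA, hgA, hfgA⟩, hlA⟩ := hA.left
    obtain ⟨C', hC', IC, fC, gC, hIC, ⟨hfC, hgC, hfgC⟩, hlC⟩ := hC.left
    obtain ⟨l, hl⟩ := hA.ext1 h IC hIC gC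
    obtain ⟨hi, hp, hip⟩ := h
    have hl' : ∀ x, p (l x) = gC x := fun x => LinearMap.congr_fun hl x
    let G : (IA × IC) →ₗ[R] P := (i ∘ₗ gA).coprod l
    have hG : ∀ a c, G (a, c) = i (gA a) + l c := fun a c => by simp [G]
    have hGs : Function.Surjective G := by
      intro x
      obtain ⟨c, hc⟩ := hgC (p x)
      obtain ⟨a, ha⟩ := (hip (x - l c)).1 (by rw [map_sub, hl', hc, sub_self])
      obtain ⟨a', rfl⟩ := hgA a
      exact ⟨(a', c), by rw [hG, ha]; abel⟩
    have hq : ∀ z : LinearMap.ker G, gC z.1.2 = 0 := by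
      rintro ⟨⟨a, c⟩, hz⟩
      have h1 : i (gA a) + l c = 0 := by rw [← hG]; exact hz
      have h2 := congrArg p h1
      rw [map_add, hip.apply_apply_eq_zero, zero_add, map_zero, hl'] at h2
      exact h2
    obtain ⟨q, hq'⟩ := exists_lift hfC hfgC
      (LinearMap.snd R IA IC ∘ₗ (LinearMap.ker G).subtype) (fun z => hq z)
    have hq2 : ∀ z : LinearMap.ker G, fC (q z) = z.1.2 := hq'
    let j : A' →ₗ[R] LinearMap.ker G := LinearMap.codRestrict _ (LinearMap.inl R IA IC ∘ₗ fA)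
      (fun x => by
        rw [LinearMap.mem_ker]
        change G (fA x, 0) = 0
        rw [hG, hfgA.apply_apply_eq_zero, map_zero, map_zero, add_zero])
    have hj : ∀ x, (j x).1 = (fA x, 0) := fun x => rfl
    refine ⟨ModuleCat.of R (LinearMap.ker G), Or.inl ⟨A', C', j, q, hA', hC', ?_, ?_, ?_⟩,
      ModuleCat.of R (IA × IC), (LinearMap.ker G).subtype, G, injective_prod hIA hIC,
      ⟨Subtype.val_injective, hGs, ?_⟩, ?_⟩
    · intro x y hxy
      apply hfA
      have := congrArg (fun z : LinearMap.ker G => z.1.1) hxy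
      exact this
    · intro c
      have h1 : p (l (fC c)) = 0 := by rw [hl', hfgC.apply_apply_eq_zero]
      obtain ⟨a, ha⟩ := (hip _).1 h1
      obtain ⟨a', rfl⟩ := hgA a
      refine ⟨⟨(-a', fC c), ?_⟩, ?_⟩
      · rw [LinearMap.mem_ker, hG, map_neg, map_neg, ha]; abel
      · apply hfC; rw [hq2]
    · intro z
      constructor
      · intro hz
        have h1 := hq2 z
        rw [hz, map_zero] at h1
        have h2 : G z.1 = 0 := z.2
        have h3 : z.1 = (z.1.1, 0) := Prod.ext rfl h1.symm
        rw [h3, hG, map_zero, add_zero] at h2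
        have h4 : gA z.1.1 = 0 := hi (by rw [h2, map_zero])
        obtain ⟨x, hx⟩ := (hfgA _).1 h4
        exact ⟨x, Subtype.ext (by rw [hj, hx, ← h3])⟩
      · rintro ⟨x, rfl⟩
        apply hfC; rw [hq2, hj, map_zero]
    · intro z
      constructor
      · intro hz; exact ⟨⟨z, hz⟩, rfl⟩
      · rintro ⟨y, rfl⟩; exact y.2
    · intro E _ _ hE h
      obtain ⟨k, hk⟩ := hlC E hE (p ∘ₗ h)
      have hk' : ∀ e, gC (k e) = p (h e) := fun e => LinearMap.congr_fun hk e
      obtain ⟨m, hm⟩ := exists_lift hi hip (h - l ∘ₗ k) (fun e => by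
        simp [hl', hk'])
      obtain ⟨n, hn⟩ := hlA E hE m
      refine ⟨n.prod k, ?_⟩
      ext e
      have h1 : G (n e, k e) = i (gA (n e)) + l (k e) := hG _ _
      have h2 : gA (n e) = m e := LinearMap.congr_fun hn e
      change G (n e, k e) = h e
      rw [h1, h2, hm]; simp
  · obtain ⟨A', hA', IA, fA, gA, hIA, ⟨hfA, hgA, hfgA⟩, hlA⟩ := hA.right
    obtain ⟨C', hC', IC, fC, gC, hIC, ⟨hfC, hgC, hfgC⟩, hlC⟩ := hC.right
    obtain ⟨hi, hp, hip⟩ := h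
    obtain ⟨l, hl⟩ := hIA.out i hi fA
    let F : P →ₗ[R] (IA × IC) := l.prod (fC ∘ₗ p)
    have hF : ∀ x, F x = (l x, fC (p x)) := fun x => rfl
    have hFi : Function.Injective F := by
      rw [← LinearMap.ker_eq_bot, LinearMap.ker_eq_bot']
      intro x hx
      rw [hF] at hx
      have h1 : l x = 0 := congrArg Prod.fst hx
      have h2 : fC (p x) = 0 := congrArg Prod.snd hx
      obtain ⟨a, rfl⟩ := (hip x).1 (hfC (by rw [h2, map_zero]))
      rw [hl] at h1
      rw [hfA (h1.trans (map_zero _).symm), map_zero]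
    let π : (IA × IC) →ₗ[R] ((IA × IC) ⧸ LinearMap.range F) := (LinearMap.range F).mkQ
    have hπ : Function.Surjective π := Submodule.mkQ_surjective _
    have hFπ : Function.Exact F π := by
      intro z
      rw [Submodule.mkQ_apply, Submodule.Quotient.mk_eq_zero]; rfl
    obtain ⟨j, hj⟩ := exists_desc hgA hfgA (π ∘ₗ LinearMap.inl R IA IC) (fun a => by
      change π (fA a, 0) = 0
      rw [hFπ]
      exact ⟨i a, by rw [hF, hl, hip.apply_apply_eq_zero, map_zero]⟩)
    have hj' : ∀ b, j (gA b) = π (b, 0) := hj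
    obtain ⟨q, hq⟩ := exists_desc hπ hFπ (gC ∘ₗ LinearMap.snd R IA IC) (fun x => by
      change gC (fC (p x)) = 0
      exact hfgC.apply_apply_eq_zero _)
    have hq' : ∀ b, q (π b) = gC b.2 := hq
    have hse : SE j q := by
      refine ⟨?_, ?_, ?_⟩
      · rw [← LinearMap.ker_eq_bot, LinearMap.ker_eq_bot']
        intro x hx
        obtain ⟨b, rfl⟩ := hgA x
        rw [hj', hFπ] at hx
        obtain ⟨y, hy⟩ := hx
        rw [hF] at hy
        have h1 : l y = b := congrArg Prod.fst hy
        have h2 : fC (p y) = 0 := congrArg Prod.snd hy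
        obtain ⟨a, rfl⟩ := (hip y).1 (hfC (by rw [h2, map_zero]))
        rw [hl] at h1
        rw [← h1, hfgA.apply_apply_eq_zero]
      · intro c
        obtain ⟨c', rfl⟩ := hgC c
        exact ⟨π (0, c'), by rw [hq']⟩
      · intro z
        constructor
        · intro hz
          obtain ⟨⟨a, c⟩, rfl⟩ := hπ z
          rw [hq'] at hz
          obtain ⟨c', hc'⟩ := (hfgC _).1 hz
          obtain ⟨x, rfl⟩ := hp c'
          refine ⟨gA (a - l x), ?_⟩
          rw [hj', ← sub_eq_zero, ← map_sub, hFπ]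
          refine ⟨-x, ?_⟩
          rw [hF]
          simp only at hc'
          ext
          · simp
          · simp [hc']
        · rintro ⟨y, rfl⟩
          obtain ⟨b, rfl⟩ := hgA y
          rw [hj', hq', map_zero]
    refine ⟨ModuleCat.of R ((IA × IC) ⧸ LinearMap.range F), Or.inl ⟨A', C', j, q, hA', hC', hse⟩,
      ModuleCat.of R (IA × IC), F, π, injective_prod hIA hIC, ⟨hFi, hπ, hFπ⟩, ?_⟩
    obtain ⟨hji, hqs, hjq⟩ := hse
    intro E _ _ hE h
    obtain ⟨k, hk⟩ := hlC E hE (q ∘ₗ h)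
    have hk' : ∀ e, gC (k e) = q (h e) := fun e => LinearMap.congr_fun hk e
    obtain ⟨m, hm⟩ := exists_lift hji hjq (h - π ∘ₗ (LinearMap.inr R IA IC) ∘ₗ k) (fun e => by
      have h0 : q (π (0, k e)) = gC (k e) := hq' _
      simp [h0, hk'])
    obtain ⟨n, hn⟩ := hlA E hE m
    refine ⟨n.prod k, ?_⟩
    ext e
    have h2 : gA (n e) = m e := LinearMap.congr_fun hn e
    change π (n e, k e) = h e
    have h3 := hm e
    rw [← h2, hj'] at h3
    have h4 : π (n e, 0) = h e - π (0, k e) := h3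
    have h5 : ((n e, k e) : IA × IC) = (n e, 0) + (0, k e) := by simp
    rw [h5, map_add, h4]; abel

end gi
end GorInj


namespace GorInj
section gi2
variable {R : Type u} [CommRing R]

lemma inj_of_zero {A B : Type*} [AddCommGroup A] [Module R A] [AddCommGroup B] [Module R B]
    (f : A →ₗ[R] B) (h : ∀ x, f x = 0 → x = 0) : Function.Injective f := by
  rw [← LinearMap.ker_eq_bot, LinearMap.ker_eq_bot']; exact h

lemma quot_SE {A B : Type*} [AddCommGroup A] [Module R A] [AddCommGroup B] [Module R B]
    (f : A →ₗ[R] B) (h : Function.Injective f) : SE f (LinearMap.range f).mkQ := by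
  refine ⟨h, Submodule.mkQ_surjective _, ?_⟩
  intro z
  rw [Submodule.mkQ_apply, Submodule.Quotient.mk_eq_zero]; rfl

/-- The quotient of a composition of two monomorphisms. -/
lemma quot_comp_SE {M P I J Q : ModuleCat.{u} R} {s : M →ₗ[R] P} {r : P →ₗ[R] I}
    {f : P →ₗ[R] J} {g : J →ₗ[R] Q} (h1 : SE s r) (h2 : SE f g) :
    ∃ (a : I →ₗ[R] J ⧸ LinearMap.range (f ∘ₗ s)) (b : (J ⧸ LinearMap.range (f ∘ₗ s)) →ₗ[R] Q),
      SE a b ∧ (∀ x, a (r x) = (LinearMap.range (f ∘ₗ s)).mkQ (f x)) ∧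
      (∀ x, b ((LinearMap.range (f ∘ₗ s)).mkQ x) = g x) := by
  obtain ⟨hs, hr, hsr⟩ := h1
  obtain ⟨hf, hg, hfg⟩ := h2
  obtain ⟨-, hπ, hex⟩ := quot_SE (f ∘ₗ s) (by
    rw [LinearMap.coe_comp]; exact hf.comp hs)
  set π := (LinearMap.range (f ∘ₗ s)).mkQ
  obtain ⟨a, ha⟩ := exists_desc hr hsr (π ∘ₗ f) (fun x => hex.apply_apply_eq_zero x)
  obtain ⟨b, hb⟩ := exists_desc hπ hex g (fun x => hfg.apply_apply_eq_zero (s x))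
  have ha' : ∀ x, a (r x) = π (f x) := ha
  refine ⟨a, b, ⟨?_, ?_, ?_⟩, ha, hb⟩
  · apply inj_of_zero
    intro x hx
    obtain ⟨y, rfl⟩ := hr x
    rw [ha', hex] at hx
    obtain ⟨z, hz⟩ := hx
    have : s z = y := hf hz
    rw [← this, hsr.apply_apply_eq_zero]
  · intro q
    obtain ⟨x, rfl⟩ := hg q
    exact ⟨π x, hb x⟩
  · intro z
    constructor
    · intro hz
      obtain ⟨x, rfl⟩ := hπ z
      rw [hb] at hz
      obtain ⟨y, rfl⟩ := (hfg _).1 hz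
      exact ⟨r y, ha y⟩
    · rintro ⟨y, rfl⟩
      obtain ⟨x, rfl⟩ := hr y
      rw [ha', hb, hfg.apply_apply_eq_zero]

lemma GIp.cosyz {B H M : ModuleCat.{u} R} (hB : GIp B) (hH : Module.Injective R H)
    {β : B →ₗ[R] H} {γ : H →ₗ[R] M} (h : SE β γ) : GIp M := by
  refine GIp.coind (fun N => N = M) ?_ rfl
  rintro _ rfl
  refine ⟨⟨B, Or.inr hB, H, β, γ, hH, h, hB.ext1 h⟩, ?_⟩
  obtain ⟨B'', hB'', I, f, g, hI, ⟨hf, hg, hfg⟩, hl⟩ := hB.right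
  obtain ⟨hβ, hγ, hβγ⟩ := h
  let F : B →ₗ[R] (H × I) := β.prod (-f)
  have hF : ∀ x, F x = (β x, - f x) := fun x => rfl
  obtain ⟨-, hπ, hFπ⟩ := quot_SE F (by
    intro x y hxy
    exact hβ (congrArg Prod.fst hxy))
  set π := (LinearMap.range F).mkQ
  let P : ModuleCat.{u} R := ModuleCat.of R ((H × I) ⧸ LinearMap.range F)
  let i1 : H →ₗ[R] P := π ∘ₗ LinearMap.inl R H I
  let i2 : I →ₗ[R] P := π ∘ₗ LinearMap.inr R H I
  have hi1 : ∀ x, i1 x = π (x, 0) := fun x => rfl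
  have hi2 : ∀ x, i2 x = π (0, x) := fun x => rfl
  obtain ⟨p1, hp1⟩ := exists_desc hπ hFπ (g ∘ₗ LinearMap.snd R H I) (fun x => by
    change g (- f x) = 0
    rw [map_neg, hfg.apply_apply_eq_zero, neg_zero])
  obtain ⟨p2, hp2⟩ := exists_desc hπ hFπ (γ ∘ₗ LinearMap.fst R H I) (fun x => by
    change γ (β x) = 0
    exact hβγ.apply_apply_eq_zero _)
  have hp1' : ∀ x, p1 (π x) = g x.2 := hp1
  have hp2' : ∀ x, p2 (π x) = γ x.1 := hp2
  have hPG : GIp P := by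
    refine GIp.extension (GIp.of_injective hH) hB'' (i := i1) (p := p1) ⟨?_, ?_, ?_⟩
    · apply inj_of_zero
      intro x hx
      rw [hi1, hFπ] at hx
      obtain ⟨b, hb⟩ := hx
      rw [hF] at hb
      have h1 : β b = x := congrArg Prod.fst hb
      have h2 : - f b = 0 := congrArg Prod.snd hb
      have h3 : b = 0 := hf (by rw [map_zero]; exact neg_eq_zero.1 h2)
      rw [← h1, h3, map_zero]
    · intro x
      obtain ⟨y, rfl⟩ := hg x
      exact ⟨π (0, y), hp1' _⟩
    · intro z
      constructor
      · intro hz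
        obtain ⟨⟨a, c⟩, rfl⟩ := hπ z
        rw [hp1'] at hz
        obtain ⟨b, hb⟩ := (hfg _).1 hz
        simp only at hb
        refine ⟨a + β b, ?_⟩
        rw [hi1, ← sub_eq_zero, ← map_sub, hFπ]
        exact ⟨b, by rw [hF]; ext <;> simp [hb]⟩
      · rintro ⟨y, rfl⟩
        rw [hi1, hp1', map_zero]
  have hi2i : Function.Injective i2 := by
    apply inj_of_zero
    intro x hx
    rw [hi2, hFπ] at hx
    obtain ⟨b, hb⟩ := hx
    rw [hF] at hb
    have h1 : β b = 0 := congrArg Prod.fst hb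
    have h2 : - f b = x := congrArg Prod.snd hb
    have h3 : b = 0 := hβ (by rw [map_zero]; exact h1)
    rw [← h2, h3, map_zero, neg_zero]
  have hi2p2 : Function.Exact i2 p2 := by
    intro z
    constructor
    · intro hz
      obtain ⟨⟨a, c⟩, rfl⟩ := hπ z
      rw [hp2'] at hz
      obtain ⟨b, hb⟩ := (hβγ _).1 hz
      simp only at hb
      refine ⟨c + f b, ?_⟩
      rw [hi2, ← sub_eq_zero, ← map_sub, hFπ]
      exact ⟨-b, by rw [hF]; ext <;> simp [hb]⟩
    · rintro ⟨y, rfl⟩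
      rw [hi2, hp2', map_zero]
  have hp2s : Function.Surjective p2 := by
    intro x
    obtain ⟨y, rfl⟩ := hγ x
    exact ⟨π (y, 0), hp2' _⟩
  obtain ⟨r, hr⟩ := hI.out i2 hi2i LinearMap.id
  have hr' : ∀ x, r (i2 x) = x := hr
  obtain ⟨s, hs⟩ := exists_desc hp2s hi2p2 (LinearMap.id - i2 ∘ₗ r) (fun x => by simp [hr'])
  have hs' : ∀ x, s (p2 x) = x - i2 (r x) := hs
  have hsr : SE s r := by
    refine ⟨?_, fun x => ⟨i2 x, hr' x⟩, ?_⟩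
    · apply inj_of_zero
      intro x hx
      obtain ⟨y, rfl⟩ := hp2s x
      rw [hs', sub_eq_zero] at hx
      rw [hx, hi2p2.apply_apply_eq_zero]
    · intro z
      constructor
      · intro hz
        exact ⟨p2 z, by rw [hs', hz, map_zero, sub_zero]⟩
      · rintro ⟨y, rfl⟩
        obtain ⟨x, rfl⟩ := hp2s y
        rw [hs', map_sub, hr', sub_self]
  obtain ⟨Q, hQ, J, f', g', hJ, hfg', hl'⟩ := hPG.right
  obtain ⟨a, b, hab, ha, hb⟩ := quot_comp_SE hsr hfg'
  set τ := (LinearMap.range (f' ∘ₗ s)).mkQ with hτ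
  have hGQ : GIp (ModuleCat.of R (J ⧸ LinearMap.range (f' ∘ₗ s))) :=
    GIp.extension (GIp.of_injective hI) hQ (i := a) (p := b) hab
  refine ⟨_, Or.inr hGQ, J, f' ∘ₗ s, τ, hJ, quot_SE _ ?_, ?_⟩
  · rw [LinearMap.coe_comp]; exact hfg'.1.comp hsr.1
  · intro E _ _ hE h
    obtain ⟨k, hk⟩ := hl' E hE (b ∘ₗ h)
    have hk' : ∀ e, g' (k e) = b (h e) := fun e => LinearMap.congr_fun hk e
    obtain ⟨m, hm⟩ := exists_lift hab.1 hab.2.2 (h - τ ∘ₗ k) (fun e => by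
      have h0 : b (τ (k e)) = g' (k e) := hb _
      simp only [LinearMap.sub_apply, LinearMap.comp_apply, map_sub]
      rw [h0, hk', sub_self])
    refine ⟨k + f' ∘ₗ i2 ∘ₗ m, ?_⟩
    ext e
    have h1 : a (m e) = h e - τ (k e) := hm e
    have h2 : τ (f' (i2 (m e))) = a (m e) := by rw [← ha, hr']
    change τ (k e + f' (i2 (m e))) = h e
    rw [map_add, h2, h1]; abel

/-- injective dimension at most `n` -/
def IdLE : ℕ → ModuleCat.{u} R → Prop
  | 0, H => Module.Injective R H
  | n + 1, H => ∃ (I H' : ModuleCat.{u} R) (f : H →ₗ[R] I) (g : I →ₗ[R] H'),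
      Module.Injective R I ∧ SE f g ∧ IdLE n H'

def GidLE : ℕ → ModuleCat.{u} R → Prop
  | 0, H => GIp H
  | n + 1, H => ∃ (I H' : ModuleCat.{u} R) (f : H →ₗ[R] I) (g : I →ₗ[R] H'),
      GIp I ∧ SE f g ∧ GidLE n H'

lemma IdLE.gidLE {n : ℕ} : ∀ {H : ModuleCat.{u} R}, IdLE n H → GidLE n H := by
  induction n with
  | zero => exact fun h => GIp.of_injective h
  | succ n ih =>
    rintro H ⟨I, H', f, g, hI, h, hH'⟩
    exact ⟨I, H', f, g, GIp.of_injective hI, h, ih hH'⟩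

lemma GidLE.approx {n : ℕ} : ∀ {M : ModuleCat.{u} R}, GidLE n M →
    ∃ (B H : ModuleCat.{u} R) (i : B →ₗ[R] H) (p : H →ₗ[R] M), GIp B ∧ IdLE n H ∧ SE i p := by
  induction n with
  | zero =>
    intro M h
    obtain ⟨B, hB, I, f, g, hI, hfg, -⟩ := GIp.left h
    exact ⟨B, I, f, g, hB, hI, hfg⟩
  | succ n ih =>
    rintro M ⟨J, C, a, b, hJ, ⟨ha, hb, hab⟩, hC⟩
    obtain ⟨B', H', i', p', hB', hH', ⟨hi', hp', hip'⟩⟩ := ih hC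
    let D : (J × H') →ₗ[R] C := b.coprod (-p')
    have hD : ∀ x y, D (x, y) = b x - p' y := fun x y => by simp [D, sub_eq_add_neg]
    let P : ModuleCat.{u} R := ModuleCat.of R (LinearMap.ker D)
    let j : B' →ₗ[R] P := LinearMap.codRestrict _ (LinearMap.inr R J H' ∘ₗ i') (fun x => by
      rw [LinearMap.mem_ker]
      change D (0, i' x) = 0
      rw [hD, hip'.apply_apply_eq_zero, map_zero, sub_zero])
    let q : P →ₗ[R] J := LinearMap.fst R J H' ∘ₗ (LinearMap.ker D).subtype
    let q' : P →ₗ[R] H' := LinearMap.snd R J H' ∘ₗ (LinearMap.ker D).subtype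
    have hqq : ∀ x, b (q x) = p' (q' x) := fun x => by
      have : D (q x, q' x) = 0 := x.2
      rw [hD, sub_eq_zero] at this; exact this
    have hPG : GIp P := by
      refine GIp.extension hB' hJ (i := j) (p := q) ⟨?_, ?_, ?_⟩
      · intro x y hxy
        exact hi' (congrArg (fun z : LinearMap.ker D => z.1.2) hxy)
      · intro x
        obtain ⟨y, hy⟩ := hp' (b x)
        exact ⟨⟨(x, y), by rw [LinearMap.mem_ker, hD, hy, sub_self]⟩, rfl⟩
      · intro z
        constructor
        · intro hz
          have h1 := hqq z
          rw [hz, map_zero] at h1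
          obtain ⟨w, hw⟩ := (hip' _).1 h1.symm
          exact ⟨w, Subtype.ext (Prod.ext hz.symm hw)⟩
        · rintro ⟨y, rfl⟩; rfl
    have hq's : Function.Surjective q' := by
      intro y
      obtain ⟨x, hx⟩ := hb (p' y)
      exact ⟨⟨(x, y), by rw [LinearMap.mem_ker, hD, hx, sub_self]⟩, rfl⟩
    obtain ⟨P1, hP1, I, f, g, hI, ⟨hf, hg, hfg⟩, -⟩ := GIp.left hPG
    let H : ModuleCat.{u} R := ModuleCat.of R (LinearMap.ker (q' ∘ₗ g))
    let v : P1 →ₗ[R] H := LinearMap.codRestrict _ f (fun x => by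
      rw [LinearMap.mem_ker, LinearMap.comp_apply, hfg.apply_apply_eq_zero, map_zero])
    obtain ⟨w, hw⟩ := exists_lift ha hab (q ∘ₗ g ∘ₗ (LinearMap.ker (q' ∘ₗ g)).subtype)
      (fun x => by
        change b (q (g x.1)) = 0
        have : q' (g x.1) = 0 := x.2
        rw [hqq, this, map_zero])
    have hw' : ∀ x : LinearMap.ker (q' ∘ₗ g), a (w x) = q (g x.1) := hw
    refine ⟨P1, H, v, w, hP1, ⟨I, H', (LinearMap.ker (q' ∘ₗ g)).subtype, q' ∘ₗ g, hI,
      ⟨Subtype.val_injective, ?_, ?_⟩, hH'⟩, ?_, ?_, ?_⟩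
    · rw [LinearMap.coe_comp]; exact hq's.comp hg
    · intro z
      constructor
      · intro hz; exact ⟨⟨z, hz⟩, rfl⟩
      · rintro ⟨y, rfl⟩; exact y.2
    · intro x y hxy
      exact hf (congrArg Subtype.val hxy)
    · intro m
      obtain ⟨z, hz⟩ := hg ⟨(a m, 0), by
        rw [LinearMap.mem_ker, hD, map_zero, hab.apply_apply_eq_zero, sub_zero]⟩
      refine ⟨⟨z, ?_⟩, ?_⟩
      · rw [LinearMap.mem_ker, LinearMap.comp_apply, hz]; rfl
      · apply ha; rw [hw', hz]; rfl
    · intro z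
      constructor
      · intro hz
        have h1 := hw' z
        rw [hz, map_zero] at h1
        have h2 : q' (g z.1) = 0 := z.2
        have h3 : g z.1 = 0 := Subtype.ext (Prod.ext h1.symm h2)
        obtain ⟨x, hx⟩ := (hfg _).1 h3
        exact ⟨x, Subtype.ext hx⟩
      · rintro ⟨y, rfl⟩
        apply ha
        rw [hw', map_zero]
        change q (g (f y)) = 0
        rw [hfg.apply_apply_eq_zero, map_zero]

lemma GidLE.of_approx {n : ℕ} {B H M : ModuleCat.{u} R} (hB : GIp B) (hH : IdLE n H)
    {i : B →ₗ[R] H} {p : H →ₗ[R] M} (h : SE i p) : GidLE n M := by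
  cases n with
  | zero => exact hB.cosyz hH h
  | succ n =>
    obtain ⟨I, H', f, g, hI, hfg, hH'⟩ := hH
    obtain ⟨a, b, hab, ha, hb⟩ := quot_comp_SE h hfg
    refine ⟨ModuleCat.of R (I ⧸ LinearMap.range (f ∘ₗ i)), H', a, b, ?_, hab, hH'.gidLE⟩
    refine hB.cosyz hI (quot_SE (f ∘ₗ i) ?_)
    rw [LinearMap.coe_comp]; exact hfg.1.comp h.1

/-- kernel-of-differentials in a complete resolution -/
lemma GIp.of_witness {J : Type u} [AddCommGroup J] [Module R J]
    (W : IsGorensteinInjective R J) : GIp (ModuleCat.of R J) := by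
  obtain ⟨W⟩ := W
  let _ := W.acg
  let _ := W.mod
  refine ⟨fun A => ∃ i, Nonempty (A ≃ₗ[R] LinearMap.ker (W.d i)), ?_, ⟨-1, W.ker_iso⟩⟩
  have key : ∀ (i : ℤ) (A B : ModuleCat.{u} R) (e : A ≃ₗ[R] LinearMap.ker (W.d (i + 1)))
      (e' : B ≃ₗ[R] LinearMap.ker (W.d i)), Rel A B := by
    intro i A B e e'
    let D : W.I (i + 1 + 1) →ₗ[R] LinearMap.ker (W.d i) :=
      LinearMap.codRestrict _ (W.d (i + 1)) (fun x => by
        rw [W.exact i]; exact ⟨x, rfl⟩)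
    refine ⟨ModuleCat.of R (W.I (i + 1 + 1)), (LinearMap.ker (W.d (i + 1))).subtype ∘ₗ e.toLinearMap,
      e'.symm.toLinearMap ∘ₗ D, W.inj _, ⟨?_, ?_, ?_⟩, ?_⟩
    · rw [LinearMap.coe_comp]; exact Subtype.val_injective.comp e.injective
    · rw [LinearMap.coe_comp]
      refine e'.symm.surjective.comp ?_
      rintro ⟨y, hy⟩
      rw [W.exact i] at hy
      obtain ⟨x, rfl⟩ := hy
      exact ⟨x, rfl⟩
    · intro z
      constructor
      · intro hz
        have h1 : e'.symm (D z) = 0 := hz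
        rw [LinearEquiv.map_eq_zero_iff] at h1
        have h2 : W.d (i + 1) z = 0 := congrArg Subtype.val h1
        exact ⟨e.symm ⟨z, h2⟩, by simp⟩
      · rintro ⟨y, rfl⟩
        change e'.symm (D (e y).1) = 0
        rw [LinearEquiv.map_eq_zero_iff]
        exact Subtype.ext (e y).2
    · intro E _ _ hE h
      obtain ⟨k, hk⟩ := W.hom_exact E hE i ((LinearMap.ker (W.d i)).subtype ∘ₗ e'.toLinearMap ∘ₗ h)
        (by ext x; exact (e' (h x)).2)
      refine ⟨k, ?_⟩
      ext x
      change e'.symm (D (k x)) = h x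
      rw [LinearEquiv.symm_apply_eq]
      exact Subtype.ext (LinearMap.congr_fun hk x)
  rintro A ⟨i, ⟨e⟩⟩
  constructor
  · exact ⟨ModuleCat.of R (LinearMap.ker (W.d (i + 1))), ⟨i + 1, ⟨LinearEquiv.refl _ _⟩⟩,
      key i _ _ (LinearEquiv.refl _ _) e⟩
  · obtain ⟨j, rfl⟩ : ∃ j, i = j + 1 := ⟨i - 1, by ring⟩
    exact ⟨ModuleCat.of R (LinearMap.ker (W.d j)), ⟨j, ⟨LinearEquiv.refl _ _⟩⟩,
      key j _ _ e (LinearEquiv.refl _ _)⟩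

lemma exists_int_seq (C : ModuleCat.{u} R → Prop)
    (hC : ∀ A, C A → (∃ B, C B ∧ Rel B A) ∧ (∃ B, C B ∧ Rel A B)) (M : ModuleCat.{u} R)
    (hM : C M) : ∃ G : ℤ → ModuleCat.{u} R, G 0 = M ∧ ∀ i, Rel (G (i + 1)) (G i) := by
  choose! l hl hlr using fun A hA => (hC A hA).1
  choose! r hr hrr using fun A hA => (hC A hA).2
  let L : ℕ → ModuleCat.{u} R := fun n => l^[n] M
  let Q : ℕ → ModuleCat.{u} R := fun n => r^[n] M
  have hL : ∀ n, C (L n) := fun n => by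
    induction n with
    | zero => exact hM
    | succ n ih => simp only [L, Function.iterate_succ_apply']; exact hl _ ih
  have hQ : ∀ n, C (Q n) := fun n => by
    induction n with
    | zero => exact hM
    | succ n ih => simp only [Q, Function.iterate_succ_apply']; exact hr _ ih
  have hL' : ∀ n, Rel (L (n + 1)) (L n) := fun n => by
    have := hlr _ (hL n)
    simpa only [L, Function.iterate_succ_apply'] using this
  have hQ' : ∀ n, Rel (Q n) (Q (n + 1)) := fun n => by
    have := hrr _ (hQ n)
    simpa only [Q, Function.iterate_succ_apply'] using this
  refine ⟨fun i => match i with | Int.ofNat n => L n | Int.negSucc n => Q (n + 1), rfl, ?_⟩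
  intro i
  match i with
  | Int.ofNat n => exact hL' n
  | Int.negSucc 0 => exact hQ' 0
  | Int.negSucc (n + 1) => exact hQ' (n + 1)

lemma GIp.witness {J : ModuleCat.{u} R} (h : GIp J) : IsGorensteinInjective R J := by
  obtain ⟨C, hC, hJ⟩ := h
  obtain ⟨G, hG0, hG⟩ := exists_int_seq C hC J hJ
  have key : ∀ i, ∃ (I : ModuleCat.{u} R) (f : G i →ₗ[R] I), Module.Injective R I ∧
      ∀ j, j + 1 = i → ∃ g : I →ₗ[R] G j, SE f g ∧ HomSurj g := by
    intro i
    obtain ⟨k, rfl⟩ : ∃ k, i = k + 1 := ⟨i - 1, by ring⟩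
    obtain ⟨I, f, g, hI, hfg, hl⟩ := hG k
    refine ⟨I, f, hI, fun j hj => ?_⟩
    obtain rfl : j = k := by omega
    exact ⟨g, hfg, hl⟩
  choose I a hI hb using key
  choose b hab hl using fun i => hb (i + 1) i rfl
  have hker : ∀ i, LinearMap.ker (a i ∘ₗ b i) = LinearMap.range (a (i + 1)) := by
    intro i
    ext x
    rw [LinearMap.mem_ker, LinearMap.comp_apply, LinearMap.mem_range]
    rw [← map_zero (a i)]
    have hai : Function.Injective (a i) := by
      obtain ⟨k, rfl⟩ : ∃ k, i = k + 1 := ⟨i - 1, by ring⟩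
      exact (hab k).1
    rw [hai.eq_iff]
    exact (hab i).2.2 x
  refine ⟨{ I := fun i => I i, inj := hI, d := fun i => a i ∘ₗ b i, d_comp_d := ?_, exact := ?_, hom_exact := ?_, ker_iso := ?_ }⟩
  · intro i
    ext x
    change a i (b i (a (i + 1) (b (i + 1) x))) = 0
    rw [(hab i).2.2.apply_apply_eq_zero, map_zero]
  · intro i
    rw [hker, LinearMap.range_comp, LinearMap.range_eq_top.2 (hab (i + 1)).2.1, Submodule.map_top]
  · intro E _ _ hE i f hf
    have h1 : ∀ e, f e ∈ LinearMap.ker (a i ∘ₗ b i) := fun e => LinearMap.congr_fun hf e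
    obtain ⟨k, hk⟩ := exists_lift (hab i).1 (hab i).2.2 f (fun e => by
      have := h1 e
      rw [hker] at this
      exact ((hab i).2.2 _).2 this)
    obtain ⟨m, hm⟩ := hl (i + 1) E hE k
    refine ⟨m, ?_⟩
    ext e
    change a (i + 1) (b (i + 1) (m e)) = f e
    rw [show b (i + 1) (m e) = k e from LinearMap.congr_fun hm e, hk]
  · subst hG0
    rw [hker]
    exact ⟨LinearEquiv.ofInjective (a (-1 + 1)) (hab (-1)).1⟩

end gi2
end GorInj


namespace GorInj
section gi3
variable {R : Type u} [CommRing R]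

lemma GidLE.of_witness {n : ℕ} : ∀ {M : Type u} [AddCommGroup M] [Module R M],
    GidWitness R M n → GidLE n (ModuleCat.of R M) := by
  induction n with
  | zero =>
    intro M _ _ W
    let _ := W.acg
    let _ := W.mod
    have : Subsingleton (W.J (0 + 1)) := W.triv _ (by omega)
    have hs : Function.Surjective W.ε := by
      intro x
      have : x ∈ LinearMap.ker (W.d 0) := Subsingleton.elim _ _
      rw [W.exact_zero] at this
      exact this
    let e : M ≃ₗ[R] W.J 0 := LinearEquiv.ofBijective W.ε ⟨W.ε_inj, hs⟩
    obtain ⟨V⟩ := W.gi 0 le_rfl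
    let _ := V.acg
    let _ := V.mod
    obtain ⟨e'⟩ := V.ker_iso
    refine GIp.of_witness ⟨{ I := V.I, inj := V.inj, d := V.d, d_comp_d := V.d_comp_d, exact := V.exact, hom_exact := V.hom_exact, ker_iso := ⟨e.trans e'⟩ }⟩
  | succ n ih =>
    intro M _ _ W
    let _ := W.acg
    let _ := W.mod
    have hC : GidLE n (ModuleCat.of R (LinearMap.range (W.d 0))) := by
      refine ih { J := fun i => W.J (i + 1), gi := fun i hi => W.gi _ (by omega), triv := fun i hi => W.triv _ (by omega), ε := (LinearMap.range (W.d 0)).subtype, ε_inj := Subtype.val_injective, d := fun i => W.d (i + 1), exact_zero := ?_, exact := fun i => W.exact _ }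
      rw [Submodule.range_subtype]; exact W.exact 0
    refine ⟨ModuleCat.of R (W.J 0), _, W.ε, (W.d 0).rangeRestrict, GIp.of_witness (W.gi 0 (by omega)),
      ⟨W.ε_inj, LinearMap.surjective_rangeRestrict _, ?_⟩, hC⟩
    intro z
    have h1 : z ∈ LinearMap.ker (W.d 0) ↔ z ∈ LinearMap.range W.ε := by rw [W.exact_zero]
    rw [LinearMap.mem_ker] at h1
    refine Iff.trans ?_ h1
    exact ⟨fun h => congrArg Subtype.val h, fun h => Subtype.ext h⟩

lemma GidLE.witness {n : ℕ} : ∀ {M : ModuleCat.{u} R}, GidLE n M →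
    Nonempty (GidWitness R M n) := by
  induction n with
  | zero =>
    intro M h
    refine ⟨{ J := fun i => match i with | 0 => M | _ + 1 => ModuleCat.of R PUnit.{u+1}, acg := fun i => match i with | 0 => inferInstance | _ + 1 => inferInstance, mod := fun i => match i with | 0 => inferInstance | _ + 1 => inferInstance, gi := ?_, triv := ?_, ε := LinearMap.id, ε_inj := fun _ _ h => h, d := fun i => 0, exact_zero := ?_, exact := ?_ }⟩
    · intro i hi
      obtain rfl : i = 0 := by omega
      exact GIp.witness h
    · intro i hi
      match i, hi with
      | i + 1, _ => exact (inferInstance : Subsingleton PUnit)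
    · rw [LinearMap.ker_zero, LinearMap.range_id]
    · intro i
      exact Subsingleton.elim (α := Submodule R PUnit.{u+1}) _ _
  | succ n ih =>
    rintro M ⟨J, C, f, g, hJ, ⟨hf, hg, hfg⟩, hC⟩
    obtain ⟨W⟩ := ih hC
    let _ := W.acg
    let _ := W.mod
    refine ⟨{ J := fun i => match i with | 0 => J | i + 1 => W.J i, acg := fun i => match i with | 0 => inferInstance | i + 1 => W.acg i, mod := fun i => match i with | 0 => inferInstance | i + 1 => W.mod i, gi := ?_, triv := ?_, ε := f, ε_inj := hf, d := fun i => match i with | 0 => W.ε ∘ₗ g | i + 1 => W.d i, exact_zero := ?_, exact := ?_ }⟩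
    · intro i hi
      match i, hi with
      | 0, _ => exact GIp.witness hJ
      | i + 1, hi => exact W.gi i (by omega)
    · intro i hi
      match i, hi with
      | i + 1, hi => exact W.triv i (by omega)
    · ext x
      change W.ε (g x) = 0 ↔ x ∈ LinearMap.range f
      rw [← map_zero W.ε, W.ε_inj.eq_iff]
      exact hfg x
    · intro i
      match i with
      | 0 =>
        refine W.exact_zero.trans ?_
        change _ = LinearMap.range (W.ε ∘ₗ g)
        rw [LinearMap.range_comp, LinearMap.range_eq_top.2 hg, Submodule.map_top]
      | i + 1 => exact W.exact i

/-- Translation of `gid R M = g`. -/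
lemma gid_eq {M : Type u} [AddCommGroup M] [Module R M] {g : ℕ} (h : gid R M = g) :
    GidLE g (ModuleCat.of R M) ∧ ∀ n < g, ¬ GidLE n (ModuleCat.of R M) := by
  constructor
  · have hne : {c : ℕ∞ | ∃ n : ℕ, c = n ∧ Nonempty (GidWitness R M n)}.Nonempty := by
      by_contra hne
      rw [Set.not_nonempty_iff_eq_empty] at hne
      rw [gid, hne, sInf_empty] at h
      exact ENat.top_ne_natCast _ h
    obtain ⟨n, hn, ⟨W⟩⟩ := csInf_mem hne
    have h' : gid R M = n := hn
    rw [h] at h'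
    obtain rfl : g = n := by exact_mod_cast h'
    exact GidLE.of_witness W
  · intro n hn hM
    have h1 : gid R M ≤ n := sInf_le ⟨n, rfl, GidLE.witness hM⟩
    rw [h] at h1
    have : g ≤ n := by exact_mod_cast h1
    omega

end gi3
end GorInj


namespace GorInj
section tor
open MonoidalCategory
variable (A : Type u) [CommRing A] [IsLocalRing A]

/-- The residue field as a module category object. -/
noncomputable abbrev kk : ModuleCat.{u} A := ModuleCat.of A (IsLocalRing.ResidueField A)

/-- A projective resolution of the residue field. -/
noncomputable def PR : ProjectiveResolution (kk A) := projectiveResolution (kk A)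

/-- Tensoring with the resolution of the residue field. -/
noncomputable def Phi : ModuleCat.{u} A ⥤ ChainComplex (ModuleCat.{u} A) ℕ where
  obj N := (((tensoringRight (ModuleCat.{u} A)).obj N).mapHomologicalComplex _).obj (PR A).complex
  map f := (NatTrans.mapHomologicalComplex ((tensoringRight (ModuleCat.{u} A)).map f) _).app
    (PR A).complex
  map_id N := by ext; simp
  map_comp f g := by ext; simp

/-- Homology of `N` tensored with the resolution. -/
noncomputable def Tf (i : ℕ) : ModuleCat.{u} A ⥤ ModuleCat.{u} A :=
  Phi A ⋙ HomologicalComplex.homologyFunctor _ _ i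

lemma Phi_map_f {N N' : ModuleCat.{u} A} (f : N ⟶ N') (i : ℕ) :
    ((Phi A).map f).f i = ((PR A).complex.X i) ◁ f := rfl

instance : (Phi A).PreservesZeroMorphisms where
  map_zero X Y := by
    ext i : 1
    rw [Phi_map_f]; simp; rfl

instance flatP (i : ℕ) : Module.Flat A ((PR A).complex.X i) := by
  have : Projective ((PR A).complex.X i) := (PR A).projective i
  have : Module.Projective A ((PR A).complex.X i) := inferInstance
  infer_instance

lemma Phi_shortExact (S : ShortComplex (ModuleCat.{u} A)) (hS : S.ShortExact) :
    (S.map (Phi A)).ShortExact := by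
  apply HomologicalComplex.shortExact_of_degreewise_shortExact
  intro i
  have h1 : (S.map (tensorLeft ((PR A).complex.X i))).Exact :=
    Module.Flat.lTensor_shortComplex_exact _ _ hS.exact
  have := hS.mono_f
  have := hS.epi_g
  have h2 := hS.map (tensorLeft ((PR A).complex.X i))
  exact h2

variable {A}
/-- bundled short complex of a short exact sequence -/
def SES {X Y Z : Type u} [AddCommGroup X] [Module A X] [AddCommGroup Y] [Module A Y]
    [AddCommGroup Z] [Module A Z] {f : X →ₗ[A] Y} {g : Y →ₗ[A] Z} (h : SE f g) :
    ShortComplex (ModuleCat.{u} A) :=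
  ShortComplex.mk (ModuleCat.ofHom f) (ModuleCat.ofHom g) (by
    ext x; exact h.2.2.apply_apply_eq_zero x)

lemma SES_shortExact {X Y Z : Type u} [AddCommGroup X] [Module A X] [AddCommGroup Y] [Module A Y]
    [AddCommGroup Z] [Module A Z] {f : X →ₗ[A] Y} {g : Y →ₗ[A] Z} (h : SE f g) :
    (SES h).ShortExact where
  exact := (ShortComplex.ShortExact.moduleCat_exact_iff_function_exact _).2 h.2.2
  mono_f := (ModuleCat.mono_iff_injective _).2 h.1
  epi_g := (ModuleCat.epi_iff_surjective _).2 h.2.1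

variable (A) in
/-- Tor of the residue field, as a type. -/
noncomputable def TT (i : ℕ) (N : Type u) [AddCommGroup N] [Module A N] : ModuleCat.{u} A :=
  (Tf A i).obj (ModuleCat.of A N)

variable {X Y Z : Type u} [AddCommGroup X] [Module A X] [AddCommGroup Y] [Module A Y]
    [AddCommGroup Z] [Module A Z] {f : X →ₗ[A] Y} {g : Y →ₗ[A] Z} 
/-- functoriality -/
noncomputable def Tm (i : ℕ) (f : X →ₗ[A] Y) : TT A i X →ₗ[A] TT A i Y :=
  ((Tf A i).map (ModuleCat.ofHom f)).hom

lemma Tm_comp (i : ℕ) (g : Y →ₗ[A] Z) (f : X →ₗ[A] Y) : Tm i (g ∘ₗ f) = Tm i g ∘ₗ Tm i f := by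
  simp [Tm, ModuleCat.ofHom_comp]; rfl

lemma Tm_id (i : ℕ)  : Tm i (LinearMap.id : X →ₗ[A] X) = LinearMap.id := by
  have := (Tf A i).map_id (ModuleCat.of A X)
  exact congrArg ModuleCat.Hom.hom this

/-- connecting map -/
noncomputable def Td (h : SE f g) (i : ℕ) : TT A (i+1) Z →ₗ[A] TT A i X :=
  ((Phi_shortExact A _ (SES_shortExact h)).δ (i+1) i rfl).hom

lemma Tex2 (h : SE f g) (i : ℕ) : Function.Exact (Tm i f) (Tm i g) :=
  (ShortComplex.ShortExact.moduleCat_exact_iff_function_exact _).1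
    ((Phi_shortExact A _ (SES_shortExact h)).homology_exact₂ i)
lemma Tex3 (h : SE f g) (i : ℕ) : Function.Exact (Tm (i+1) g) (Td h i) :=
  (ShortComplex.ShortExact.moduleCat_exact_iff_function_exact _).1
    ((Phi_shortExact A _ (SES_shortExact h)).homology_exact₃ (i+1) i rfl)
lemma Tex1 (h : SE f g) (i : ℕ) : Function.Exact (Td h i) (Tm i f) :=
  (ShortComplex.ShortExact.moduleCat_exact_iff_function_exact _).1
    ((Phi_shortExact A _ (SES_shortExact h)).homology_exact₁ (i+1) i rfl)

lemma Td_nat {X' Y' Z' : Type u} [AddCommGroup X'] [Module A X'] [AddCommGroup Y'] [Module A Y']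
    [AddCommGroup Z'] [Module A Z'] {f' : X' →ₗ[A] Y'} {g' : Y' →ₗ[A] Z'} (h : SE f g)
    (h' : SE f' g') (a : X →ₗ[A] X') (b : Y →ₗ[A] Y') (c : Z →ₗ[A] Z')
    (h1 : b ∘ₗ f = f' ∘ₗ a) (h2 : c ∘ₗ g = g' ∘ₗ b) (i : ℕ) :
    Tm i a ∘ₗ Td h i = Td h' i ∘ₗ Tm (i+1) c := by
  let φ : SES h ⟶ SES h' :=
    { τ₁ := ModuleCat.ofHom a
      τ₂ := ModuleCat.ofHom b
      τ₃ := ModuleCat.ofHom c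
      comm₁₂ := by
        simp only [SES, ← ModuleCat.ofHom_comp, h1]
      comm₂₃ := by
        simp only [SES, ← ModuleCat.ofHom_comp, h2] }
  exact congrArg ModuleCat.Hom.hom (HomologicalComplex.HomologySequence.δ_naturality
    ((Phi A).mapShortComplex.map φ) (Phi_shortExact A _ (SES_shortExact h))
    (Phi_shortExact A _ (SES_shortExact h')) (i+1) i rfl)

lemma Tm_smul (i : ℕ) {x : A} (hx : x ∈ IsLocalRing.maximalIdeal A) (f : X →ₗ[A] Y) :
    Tm i (x • f) = 0 := by
  have e : x • f = f ∘ₗ (x • LinearMap.id) := by ext; simp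
  rw [e, Tm_comp]
  suffices Tm i (x • (LinearMap.id : X →ₗ[A] X)) = 0 by rw [this]; simp
  have h0 : (x • 𝟙 (kk A)) = 0 := by
    ext t
    change x • t = 0
    rw [Algebra.smul_def]
    have : algebraMap A (IsLocalRing.ResidueField A) x = 0 := by
      exact (IsLocalRing.residue_eq_zero_iff x).2 hx
    rw [this, zero_mul]
  let hh : Homotopy (x • 𝟙 (PR A).complex) 0 := ProjectiveResolution.liftHomotopyZero _ (by
    apply HomologicalComplex.to_single_hom_ext
    ext t
    change ((PR A).π.f 0).hom (x • t) = 0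
    rw [map_smul]
    exact congrArg (fun f => f.hom (((PR A).π.f 0).hom t)) h0)
  have h3 := (((tensoringRight (ModuleCat.{u} A)).obj (ModuleCat.of A X)).mapHomotopy hh).homologyMap_eq i
  have h2 : (Phi A).map (ModuleCat.ofHom (x • (LinearMap.id : X →ₗ[A] X))) =
    (((tensoringRight (ModuleCat.{u} A)).obj (ModuleCat.of A X)).mapHomologicalComplex _).map
      (x • 𝟙 (PR A).complex) := by
    ext i : 1
    rw [Phi_map_f]
    change _ ◁ (x • 𝟙 (ModuleCat.of A X)) = (x • 𝟙 _) ▷ _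
    rw [MonoidalLinear.whiskerLeft_smul, MonoidalLinear.smul_whiskerRight]
    simp
  have h4 : (Tf A i).map (ModuleCat.ofHom (x • (LinearMap.id : X →ₗ[A] X))) = 0 := by
    simp only [Tf, Functor.comp_map, h2, HomologicalComplex.homologyFunctor_map]
    refine h3.trans ?_
    simp; rfl
  simp only [Tm, h4]; rfl
end tor
end GorInj


namespace GorInj
section tor
open MonoidalCategory
variable {A : Type u} [CommRing A] [IsLocalRing A]

lemma isIso_aux {C D : Type*} [Category C] [Category D] [Abelian C] [Abelian D]
    (F : C ⥤ D) [F.Additive] (hF : Limits.PreservesFiniteColimits F) {X : C}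
    (P : ProjectiveResolution X) : IsIso (P.fromLeftDerivedZero' F) := inferInstance

lemma pres_aux (N : ModuleCat.{u} A) :
    Limits.PreservesFiniteColimits ((tensoringRight (ModuleCat.{u} A)).obj N) :=
  inferInstanceAs (Limits.PreservesFiniteColimits (tensorRight N))

/-- augmentation -/
noncomputable def eps (N : ModuleCat.{u} A) : ((Phi A).obj N).opcycles 0 ⟶ kk A ⊗ N :=
  (PR A).fromLeftDerivedZero' ((tensoringRight (ModuleCat.{u} A)).obj N)

lemma eps_iso (N : ModuleCat.{u} A) : IsIso (eps N) := isIso_aux _ (pres_aux N) (PR A)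

/-- augmentation in degree zero -/
noncomputable def pia (N : ModuleCat.{u} A) : ((Phi A).obj N).X 0 ⟶ kk A ⊗ N :=
  ((tensoringRight (ModuleCat.{u} A)).obj N).map ((PR A).π.f 0)

lemma p_eps (N : ModuleCat.{u} A) :
    ((Phi A).obj N).pOpcycles 0 ≫ eps N = pia N :=
  ProjectiveResolution.pOpcycles_comp_fromLeftDerivedZero' (PR A)
    ((tensoringRight (ModuleCat.{u} A)).obj N)

lemma pia_nat {N N' : ModuleCat.{u} A} (f : N ⟶ N') :
    ((Phi A).map f).f 0 ≫ pia N' = pia N ≫ (kk A ◁ f) :=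
  whisker_exchange ((PR A).π.f 0) f

/-- degree zero comparison -/
noncomputable def T0iso (N : ModuleCat.{u} A) : (Tf A 0).obj N ≅ kk A ⊗ N :=
  ChainComplex.isoHomologyι₀ ((Phi A).obj N) ≪≫ @asIso _ _ _ _ (eps N) (eps_iso N)

lemma T0iso_nat {N N' : ModuleCat.{u} A} (f : N ⟶ N') :
    (Tf A 0).map f ≫ (T0iso N').hom = (T0iso N).hom ≫ (kk A ◁ f) := by
  have h1 : HomologicalComplex.opcyclesMap ((Phi A).map f) 0 ≫ eps N' =
      eps N ≫ (kk A ◁ f) := by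
    rw [← cancel_epi (((Phi A).obj N).pOpcycles 0), HomologicalComplex.p_opcyclesMap_assoc,
      p_eps, pia_nat, ← Category.assoc, p_eps]
  have h2 := HomologicalComplex.homologyι_naturality ((Phi A).map f) 0
  have h3 := congrArg (fun t => t ≫ eps N') h2
  simp only [Category.assoc, h1] at h3
  simp only [T0iso, Iso.trans_hom, asIso_hom, Category.assoc]
  exact h3

variable {X Y Z : Type u} [AddCommGroup X] [Module A X] [AddCommGroup Y] [Module A Y]
    [AddCommGroup Z] [Module A Z] {f : X →ₗ[A] Y} {g : Y →ₗ[A] Z} 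

open TensorProduct in
/-- degree zero comparison, linear form -/
noncomputable def T0e (X : Type u) [AddCommGroup X] [Module A X] :
    TT A 0 X ≃ₗ[A] (IsLocalRing.ResidueField A) ⊗[A] X := (T0iso (ModuleCat.of A X)).toLinearEquiv

lemma T0e_nat (f : X →ₗ[A] Y) (t : TT A 0 X) :
    T0e Y (Tm 0 f t) = f.lTensor (IsLocalRing.ResidueField A) (T0e X t) :=
  congrArg (fun h => h.hom t) (T0iso_nat (ModuleCat.ofHom f))

lemma Tm0_surj (hf : Function.Surjective f) : Function.Surjective (Tm 0 f) := by
  intro y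
  obtain ⟨x, hx⟩ := LinearMap.lTensor_surjective (IsLocalRing.ResidueField A) hf (T0e Y y)
  refine ⟨(T0e X).symm x, (T0e Y).injective ?_⟩
  rw [T0e_nat]; simpa using hx

lemma Tm0_inj_iff : Function.Injective (Tm 0 f) ↔
    Function.Injective (f.lTensor (IsLocalRing.ResidueField A)) := by
  constructor
  · intro h x y hxy
    apply (T0e X).symm.injective
    apply h
    apply (T0e Y).injective
    simp [T0e_nat, hxy]
  · intro h x y hxy
    apply (T0e X).injective
    apply h
    rw [← T0e_nat, ← T0e_nat, hxy]

lemma nak_of_Tm0_surj (hf : Function.Surjective (Tm 0 f)) (y : Y) :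
    ∃ x, y - f x ∈ (IsLocalRing.maximalIdeal A • ⊤ : Submodule A Y) := by
  have h1 : Function.Surjective (f.lTensor (IsLocalRing.ResidueField A)) := by
    intro z
    obtain ⟨t, ht⟩ := hf ((T0e Y).symm z)
    refine ⟨T0e X t, ?_⟩
    rw [← T0e_nat, ht]; simp
  let m := IsLocalRing.maximalIdeal A
  let q := (TensorProduct.quotTensorEquivQuotSMul Y m)
  obtain ⟨w, hw⟩ := h1 (1 ⊗ₜ y)
  have hw2 : ∃ x : X, w = 1 ⊗ₜ x := by
    clear hw
    induction w using TensorProduct.induction_on with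
    | zero => exact ⟨0, by simp⟩
    | tmul a x =>
      obtain ⟨r, rfl⟩ := IsLocalRing.residue_surjective a
      refine ⟨r • x, ?_⟩
      rw [TensorProduct.tmul_smul, TensorProduct.smul_tmul', Algebra.smul_def, mul_one]
      rfl
    | add a b ha hb =>
      obtain ⟨x, rfl⟩ := ha
      obtain ⟨x', rfl⟩ := hb
      exact ⟨x + x', by rw [TensorProduct.tmul_add]⟩
  obtain ⟨x, rfl⟩ := hw2
  refine ⟨x, ?_⟩
  have h3 : (1 : IsLocalRing.ResidueField A) ⊗ₜ[A] (y - f x) = 0 := by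
    rw [TensorProduct.tmul_sub, ← hw]; simp
  have h4 := congrArg q h3
  have h5 : q ((1 : IsLocalRing.ResidueField A) ⊗ₜ[A] (y - f x)) = Submodule.Quotient.mk (y - f x) := by
    have := TensorProduct.quotTensorEquivQuotSMul_mk_tmul m 1 (y - f x)
    rw [one_smul] at this
    exact this
  have h6 := (h5.symm.trans h4).trans q.map_zero
  exact (Submodule.Quotient.mk_eq_zero _).1 h6

lemma TT_proj [Module.Flat A X] (i : ℕ) : Subsingleton (TT A (i+1) X) := by
  have h1 : ((PR A).complex.sc (i+1)).Exact := (PR A).complex_exactAt_succ i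
  have h2 := Module.Flat.rTensor_shortComplex_exact (ModuleCat.of A X) _ h1
  have h3 : ((Phi A).obj (ModuleCat.of A X)).ExactAt (i+1) := h2
  rw [HomologicalComplex.exactAt_iff_isZero_homology] at h3
  exact ModuleCat.subsingleton_of_isZero h3

lemma TT_congr (e : X ≃ₗ[A] Y) (i : ℕ) : Subsingleton (TT A i X) ↔ Subsingleton (TT A i Y) := by
  have h1 : Tm i (e.symm : Y →ₗ[A] X) ∘ₗ Tm i (e : X →ₗ[A] Y) = LinearMap.id := by
    rw [← Tm_comp, ← Tm_id]; congr 1; ext; simp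
  have h2 : Tm i (e : X →ₗ[A] Y) ∘ₗ Tm i (e.symm : Y →ₗ[A] X) = LinearMap.id := by
    rw [← Tm_comp, ← Tm_id]; congr 1; ext; simp
  exact (LinearEquiv.ofLinearMap _ _ h2 h1).toEquiv.subsingleton_congr

end tor
end GorInj


namespace GorInj
section tor
open MonoidalCategory
variable {A : Type u} [CommRing A] [IsLocalRing A]
variable {X Y Z : Type u} [AddCommGroup X] [Module A X] [AddCommGroup Y] [Module A Y]
    [AddCommGroup Z] [Module A Z] {f : X →ₗ[A] Y} {g : Y →ₗ[A] Z} 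

lemma T_shift [Module.Flat A Y] (h : SE f g) (i : ℕ) :
    Subsingleton (TT A (i+2) Z) ↔ Subsingleton (TT A (i+1) X) := by
  have e1 : Subsingleton (TT A (i+2) Y) := TT_proj (i+1)
  have e2 : Subsingleton (TT A (i+1) Y) := TT_proj i
  have hi : Function.Injective (Td h (i+1)) := by
    apply inj_of_zero
    intro z hz
    obtain ⟨y, rfl⟩ := (Tex3 h (i+1) z).1 hz
    rw [Subsingleton.elim y 0, map_zero]
  have hs : Function.Surjective (Td h (i+1)) := fun x =>
    (Tex1 h (i+1) x).1 (Subsingleton.elim _ _)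
  exact (Equiv.ofBijective _ ⟨hi, hs⟩).subsingleton_congr

lemma T_one [Module.Flat A Y] (h : SE f g) :
    Subsingleton (TT A 1 Z) ↔ Function.Injective (f.lTensor (IsLocalRing.ResidueField A)) := by
  have e1 : Subsingleton (TT A 1 Y) := TT_proj 0
  rw [← Tm0_inj_iff]
  constructor
  · intro hz
    apply inj_of_zero
    intro x hx
    obtain ⟨y, rfl⟩ := (Tex1 h 0 x).1 hx
    rw [Subsingleton.elim y 0, map_zero]
  · intro hf
    refine subsingleton_of_forall_eq 0 fun z => ?_
    have h1 : Tm 0 f (Td h 0 z) = Tm 0 f 0 := by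
      rw [map_zero]; exact (Tex1 h 0).apply_apply_eq_zero z
    obtain ⟨y, rfl⟩ := (Tex3 h 0 z).1 (hf h1)
    rw [Subsingleton.elim y 0, map_zero]

lemma exact_iff_inj {k X2 X1 X0 C1 : Type u} [AddCommGroup k] [Module A k]
    [AddCommGroup X2] [Module A X2] [AddCommGroup X1] [Module A X1] [AddCommGroup X0] [Module A X0]
    [AddCommGroup C1] [Module A C1]
    {d2 : X2 →ₗ[A] X1} {d1 : X1 →ₗ[A] X0} {p : X1 →ₗ[A] C1} {j : C1 →ₗ[A] X0}
    (hp : Function.Surjective p) (hd : Function.Exact d2 p) (h : d1 = j ∘ₗ p) :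
    Function.Exact (d2.lTensor k) (d1.lTensor k) ↔ Function.Injective (j.lTensor k) := by
  have h1 := lTensor_exact k hd hp
  have h2 := LinearMap.lTensor_surjective k hp
  subst h
  rw [LinearMap.lTensor_comp]
  constructor
  · intro he
    apply inj_of_zero
    intro x hx
    obtain ⟨y, rfl⟩ := h2 x
    obtain ⟨z, rfl⟩ := (he y).1 hx
    exact h1.apply_apply_eq_zero z
  · intro hi y
    rw [← h1 y]
    constructor
    · intro hy
      apply hi
      rw [map_zero]; exact hy
    · intro hy
      simp [hy]

lemma TT_iff (N : ModuleCat.{u} A) (i : ℕ) :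
    Subsingleton (((Tor (ModuleCat.{u} A) i).obj (kk A)).obj N) ↔ Subsingleton (TT A i N) := by
  cases i with
  | zero =>
    have : Limits.PreservesFiniteColimits ((tensoringLeft (ModuleCat.{u} A)).obj (kk A)) :=
      inferInstanceAs (Limits.PreservesFiniteColimits (tensorLeft (kk A)))
    have e := (Functor.leftDerivedZeroIsoSelf ((tensoringLeft (ModuleCat.{u} A)).obj (kk A))).app N
    exact (e.toLinearEquiv.toEquiv.trans (T0e N).symm.toEquiv).subsingleton_congr
  | succ i =>
    let Q := projectiveResolution N
    have hflat (j : ℕ) : Module.Flat A (Q.complex.X j) := by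
      have : Projective (Q.complex.X j) := Q.projective j
      have : Module.Projective A (Q.complex.X j) := inferInstance
      infer_instance
    have hex (j : ℕ) : Function.Exact (Q.complex.d (j+2) (j+1)).hom (Q.complex.d (j+1) j).hom :=
      (ShortComplex.ShortExact.moduleCat_exact_iff_function_exact _).1 (Q.exact_succ j)
    obtain ⟨q, hex0, hs⟩ : ∃ q : Q.complex.X 0 →ₗ[A] N,
        Function.Exact (Q.complex.d 1 0).hom q ∧ Function.Surjective q := by
      refine ⟨(Q.π.f 0).hom, ?_, ?_⟩
      · exact (ShortComplex.ShortExact.moduleCat_exact_iff_function_exact _).1 (Q.exact₀)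
      · exact (ModuleCat.epi_iff_surjective (Q.π.f 0)).1 inferInstance
    -- cosyzygies
    let K (j : ℕ) := LinearMap.range (Q.complex.d (j+1) j).hom
    have h0 : SE (C := N) (K 0).subtype q := by
      refine ⟨Subtype.val_injective, hs, ?_⟩
      rw [LinearMap.exact_iff] at hex0 ⊢
      rw [hex0]; simp [K]
    have hK (j : ℕ) : SE (K (j+1)).subtype (Q.complex.d (j+1) j).hom.rangeRestrict := by
      refine ⟨Subtype.val_injective, LinearMap.surjective_rangeRestrict _, ?_⟩
      have := hex j
      rw [LinearMap.exact_iff] at this ⊢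
      rw [LinearMap.ker_rangeRestrict, this]; simp [K]
    have hKT (j : ℕ) : ∀ l, Subsingleton (TT A (l+j+2) N) ↔ Subsingleton (TT A (l+1) (K j)) := by
      induction j with
      | zero => intro l; exact T_shift h0 l
      | succ j ih =>
        intro l
        rw [← T_shift (hK j) l, ← ih (l+1)]
        rw [show l + (j+1) + 2 = l + 1 + j + 2 by omega]
    have h3 : Subsingleton (TT A (i+1) N) ↔ 
        Function.Injective ((K i).subtype.lTensor (IsLocalRing.ResidueField A)) := by
      cases i with
      | zero => exact T_one h0
      | succ i => 
        rw [← T_one (hK i), ← hKT i 0, show 0 + i + 2 = i+1+1 by omega]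
    rw [h3, ← exact_iff_inj (p := (Q.complex.d (i+1) i).hom.rangeRestrict)
      (d2 := (Q.complex.d (i+2) (i+1)).hom) (d1 := (Q.complex.d (i+1) i).hom)
      (LinearMap.surjective_rangeRestrict _) ?_ ?_]
    · have e := Q.isoLeftDerivedObj ((tensoringLeft (ModuleCat.{u} A)).obj (kk A)) (i+1)
      rw [show Subsingleton (((Tor (ModuleCat.{u} A) (i+1)).obj (kk A)).obj N) ↔ _ from 
        e.toLinearEquiv.toEquiv.subsingleton_congr]
      have h5 : Subsingleton ((((tensoringLeft (ModuleCat.{u} A)).obj (kk A)).mapHomologicalComplex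
          (ComplexShape.down ℕ)).obj Q.complex |>.homology (i+1)) ↔ 
          ((((tensoringLeft (ModuleCat.{u} A)).obj (kk A)).mapHomologicalComplex
          (ComplexShape.down ℕ)).obj Q.complex).ExactAt (i+1) := by
        rw [HomologicalComplex.exactAt_iff_isZero_homology]
        exact ⟨fun h => ModuleCat.isZero_of_subsingleton _, fun h => ModuleCat.subsingleton_of_isZero h⟩
      refine h5.trans ?_
      rw [HomologicalComplex.exactAt_iff' _ (i+2) (i+1) i (by simp) (by simp),
        ShortComplex.ShortExact.moduleCat_exact_iff_function_exact]
      rfl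
    · have := hex i
      rw [LinearMap.exact_iff] at this ⊢
      rw [LinearMap.ker_rangeRestrict, this]
    · rfl
end tor
end GorInj


namespace GorInj
section depth
open RingTheory.Sequence IsLocalRing
open scoped Pointwise
variable {A : Type u} [CommRing A] [IsLocalRing A]

lemma D_SE {Y E : Type u} [AddCommGroup Y] [Module A Y] [AddCommGroup E] [Module A E]
    (hE : Module.Injective A E) {x : A} (hx : IsSMulRegular Y x) :
    SE (LinearMap.lcomp A E (x • (⊤ : Submodule A Y)).mkQ)
      (x • (LinearMap.id : (Y →ₗ[A] E) →ₗ[A] (Y →ₗ[A] E))) := by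
  refine ⟨?_, ?_, ?_⟩
  · intro a b hab
    apply Submodule.linearMap_qext
    exact hab
  · intro f
    obtain ⟨g, hg⟩ := hE.out (x • (LinearMap.id : Y →ₗ[A] Y)) (fun a b h => hx h) f
    refine ⟨g, ?_⟩
    ext y
    have := hg y
    simpa using this
  · intro f
    constructor
    · intro hf
      refine ⟨Submodule.liftQ _ f ?_, ?_⟩
      · rintro _ ⟨y, -, rfl⟩
        have := congrArg (fun t => t y) hf
        simpa using this
      · ext y; simp
    · rintro ⟨g, rfl⟩
      ext y
      have : ((x • (⊤ : Submodule A Y)).mkQ (x • y)) = 0 := by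
        rw [Submodule.mkQ_apply, Submodule.Quotient.mk_eq_zero]
        exact Submodule.smul_mem_pointwise_smul _ _ _ trivial
      have h2 := congrArg g this
      rw [map_smul, map_smul, map_zero] at h2
      exact h2

lemma D1 {E : Type u} [AddCommGroup E] [Module A E] (hE : Module.Injective A E) (rs : List A) :
    ∀ (Y : Type u) [AddCommGroup Y] [Module A Y], (∀ r ∈ rs, r ∈ maximalIdeal A) →
    IsWeaklyRegular Y rs → ∀ i < rs.length, Subsingleton (TT A i (Y →ₗ[A] E)) := by
  induction rs with
  | nil => intro Y _ _ _ _ i hi; simp at hi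
  | cons x rs ih =>
    intro Y _ _ hm hr i hi
    rw [isWeaklyRegular_cons_iff] at hr
    have hx : x ∈ maximalIdeal A := hm x (by simp)
    have h := D_SE hE hr.1
    cases i with
    | zero =>
      refine subsingleton_of_forall_eq 0 fun z => ?_
      obtain ⟨y, rfl⟩ := Tm0_surj h.2.1 z
      rw [Tm_smul 0 hx]; rfl
    | succ i =>
      have h1 := ih (QuotSMulTop x Y) (fun r hr => hm r (by simp [hr])) hr.2 i (by simpa using hi)
      refine subsingleton_of_forall_eq 0 fun z => ?_
      obtain ⟨y, rfl⟩ := (Tex3 h i z).1 (@Subsingleton.elim _ h1 _ _)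
      rw [Tm_smul _ hx]; rfl

lemma D1' {E : Type u} [AddCommGroup E] [Module A E] (hE : Module.Injective A E) {rs : List A}
    (h1 : ∀ r ∈ rs, r ∈ maximalIdeal A) (h2 : IsWeaklyRegular A rs) {i : ℕ} (hi : i < rs.length) :
    Subsingleton (TT A i E) :=
  (TT_congr (LinearMap.ringLmapEquivSelf A A E) i).1 (D1 hE rs A h1 h2 i hi)

/-- maximal regular sequences -/
def MaxReg : List A → ModuleCat.{u} A → Prop
  | [], Y => ∃ s : Y, s ≠ 0 ∧ ∀ a ∈ maximalIdeal A, a • s = 0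
  | x :: rs, Y => x ∈ maximalIdeal A ∧ IsSMulRegular Y x ∧
      MaxReg rs (ModuleCat.of A (QuotSMulTop x Y))

lemma MaxReg.mem {rs : List A} : ∀ {Y : ModuleCat.{u} A}, MaxReg rs Y →
    ∀ r ∈ rs, r ∈ maximalIdeal A := by
  induction rs with
  | nil => simp
  | cons x rs ih =>
    intro Y h r hr
    rcases List.mem_cons.1 hr with rfl | hr
    · exact h.1
    · exact ih h.2.2 r hr

lemma MaxReg.reg {rs : List A} : ∀ {Y : ModuleCat.{u} A}, MaxReg rs Y →
    IsWeaklyRegular Y rs := by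
  induction rs with
  | nil => intro Y _; exact IsWeaklyRegular.nil A Y
  | cons x rs ih =>
    intro Y h
    rw [isWeaklyRegular_cons_iff]
    exact ⟨h.2.1, ih h.2.2⟩

/-- postcomposition -/
def pc (Y : Type u) [AddCommGroup Y] [Module A Y] {E E' : Type u} [AddCommGroup E] [Module A E]
    [AddCommGroup E'] [Module A E'] (φ : E →ₗ[A] E') : (Y →ₗ[A] E) →ₗ[A] (Y →ₗ[A] E') :=
  LinearMap.compRight A φ

lemma D2 {E E' : Type u} [AddCommGroup E] [Module A E] [AddCommGroup E'] [Module A E']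
    (hE : Module.Injective A E) (hE' : Module.Injective A E') (φ : E →ₗ[A] E')
    (rs : List A) : ∀ (Y : ModuleCat.{u} A), MaxReg rs Y → 
    Function.Surjective (Tm rs.length (pc Y φ)) → 
    ∀ y : E', (∀ a ∈ maximalIdeal A, a • y = 0) → 
      ∃ e : E, φ e = y ∧ ∀ a ∈ maximalIdeal A, a • e = 0 := by
  induction rs with
  | nil =>
    rintro Y ⟨s, hs, hms⟩ hsurj y hy
    let α : (A ⧸ maximalIdeal A) →ₗ[A] Y :=
      Submodule.liftQ _ (LinearMap.toSpanSingleton A Y s) (fun a ha => hms a ha)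
    let β : (A ⧸ maximalIdeal A) →ₗ[A] E' :=
      Submodule.liftQ _ (LinearMap.toSpanSingleton A E' y) (fun a ha => hy a ha)
    have hα : Function.Injective α := by
      apply inj_of_zero
      intro z hz
      obtain ⟨a, rfl⟩ := Submodule.Quotient.mk_surjective _ z
      rw [Submodule.Quotient.mk_eq_zero]
      by_contra hne
      have hu : IsUnit a := by simpa using hne
      apply hs
      have : a • s = 0 := hz
      exact hu.smul_eq_zero.1 this
    obtain ⟨e', he'⟩ := hE'.out α hα β
    have he's : e' s = y := by
      have := he' (Submodule.Quotient.mk 1)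
      change e' ((1 : A) • s) = (1 : A) • y at this
      rwa [one_smul, one_smul] at this
    obtain ⟨e, he⟩ := nak_of_Tm0_surj hsurj e'
    have hz : ∀ w ∈ (maximalIdeal A • ⊤ : Submodule A (Y →ₗ[A] E')), w s = 0 := by
      intro w hw
      refine Submodule.smul_induction_on hw ?_ ?_
      · intro a ha f _
        rw [LinearMap.smul_apply, ← map_smul, hms a ha, map_zero]
      · intro f g hf hg
        rw [LinearMap.add_apply, hf, hg, add_zero]
    have h1 := hz _ he
    refine ⟨e s, ?_, fun a ha => by rw [← map_smul, hms a ha, map_zero]⟩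
    rw [LinearMap.sub_apply, he's, sub_eq_zero] at h1
    exact h1.symm
  | cons x rs ih =>
    intro Y h hs
    apply ih _ h.2.2
    have s1 := D_SE hE h.2.1
    have s2 := D_SE hE' h.2.1
    have hn := Td_nat s1 s2 (pc _ φ) (pc _ φ) (pc _ φ) (by ext; rfl) (by ext; simp [pc]) rs.length
    intro w
    have hv : Subsingleton (TT A rs.length (Y →ₗ[A] E')) :=
      D1 hE' (x :: rs) Y h.mem h.reg _ (by simp)
    obtain ⟨z, rfl⟩ := (Tex1 s2 rs.length w).1 (Subsingleton.elim _ _)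
    obtain ⟨z0, rfl⟩ := hs z
    exact ⟨Td s1 rs.length z0, congrArg (fun f => f z0) hn⟩

lemma Tm_equiv_surj {X Y : Type u} [AddCommGroup X] [Module A X] [AddCommGroup Y] [Module A Y]
      (e : X ≃ₗ[A] Y) (i : ℕ) : Function.Surjective (Tm i e.toLinearMap) := by
  intro y
  refine ⟨Tm i e.symm.toLinearMap y, ?_⟩
  have : Tm i e.toLinearMap ∘ₗ Tm i e.symm.toLinearMap = LinearMap.id := by
    rw [← Tm_comp, ← Tm_id]; congr 1; ext; simp
  exact congrArg (fun f => f y) this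

lemma pc_surj {E E' : Type u} [AddCommGroup E] [Module A E] [AddCommGroup E'] [Module A E']
    (φ : E →ₗ[A] E') (i : ℕ) (hs : Function.Surjective (Tm i φ)) :
    Function.Surjective (Tm i (pc A φ)) := by
  have e1 : pc A φ =
    (LinearMap.ringLmapEquivSelf A A E').symm.toLinearMap ∘ₗ φ ∘ₗ
      (LinearMap.ringLmapEquivSelf A A E).toLinearMap := by
    ext f
    simp [pc]
  generalize (LinearMap.ringLmapEquivSelf A A E') = a at e1
  generalize (LinearMap.ringLmapEquivSelf A A E) = b at e1
  intro y
  obtain ⟨y1, rfl⟩ := Tm_equiv_surj a.symm i y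
  obtain ⟨y2, rfl⟩ := hs y1
  obtain ⟨y3, rfl⟩ := Tm_equiv_surj b i y2
  refine ⟨y3, ?_⟩
  rw [e1, Tm_comp, Tm_comp]
  rfl

lemma D2' {E E' : Type u} [AddCommGroup E] [Module A E] [AddCommGroup E'] [Module A E']
    (hE : Module.Injective A E) (hE' : Module.Injective A E') (φ : E →ₗ[A] E')
    {rs : List A} (h : MaxReg rs (ModuleCat.of A A)) 
    (hs : Function.Surjective (Tm rs.length φ)) 
    (y : E') (hy : ∀ a ∈ maximalIdeal A, a • y = 0) :
      ∃ e : E, φ e = y ∧ ∀ a ∈ maximalIdeal A, a • e = 0 :=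
  D2 hE hE' φ rs (ModuleCat.of A A) h (pc_surj φ _ hs) y hy

lemma exists_maxReg_aux [IsNoetherianRing A] (N : Ideal A) : ∀ (Z : ModuleCat.{u} A) (q : A →ₗ[A] Z),
    Function.Surjective q → LinearMap.ker q = N → Nontrivial Z → ∃ rs, MaxReg rs Z := by
  induction N using WellFoundedGT.induction with
  | ind N ih =>
    intro Z q hq hN hZ
    have : Module.Finite A Z := Module.Finite.of_surjective q hq
    by_cases h : ∃ x ∈ maximalIdeal A, IsSMulRegular Z x
    · obtain ⟨x, hx, hr⟩ := h
      have hq' : Function.Surjective ((x • (⊤ : Submodule A Z)).mkQ ∘ₗ q) :=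
        (Submodule.mkQ_surjective _).comp hq
      have hlt : N < LinearMap.ker ((x • (⊤ : Submodule A Z)).mkQ ∘ₗ q) := by
        refine lt_of_le_of_ne ?_ ?_
        · rw [← hN]; exact LinearMap.ker_le_ker_comp _ _
        · intro he
          have h1 : x ∈ N := by
            rw [he, LinearMap.mem_ker, LinearMap.comp_apply, Submodule.mkQ_apply,
              Submodule.Quotient.mk_eq_zero]
            have hx1 : q x = x • q 1 := by rw [← map_smul, smul_eq_mul, mul_one]
            rw [hx1]
            exact Submodule.smul_mem_pointwise_smul (q 1) x (⊤ : Submodule A Z) Submodule.mem_top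
          rw [← hN, LinearMap.mem_ker, show x = x • (1 : A) by simp, map_smul] at h1
          have h2 : q 1 = 0 := hr (h1.trans (smul_zero x).symm)
          have : ∀ z : Z, z = 0 := by
            intro z
            obtain ⟨a, rfl⟩ := hq z
            rw [show a = a • (1 : A) by simp, map_smul, h2, smul_zero]
          exact not_subsingleton Z (subsingleton_of_forall_eq 0 this)
      obtain ⟨rs, hrs⟩ := ih (LinearMap.ker ((x • (⊤ : Submodule A Z)).mkQ ∘ₗ q)) hlt
        (ModuleCat.of A (QuotSMulTop x Z)) ((x • (⊤ : Submodule A Z)).mkQ ∘ₗ q) hq' rfl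
        (nontrivial_quotSMulTop_of_mem_maximalIdeal Z hx)
      exact ⟨x :: rs, hx, hr, hrs⟩
    · have h1 : ¬ Subsingleton ((A ⧸ maximalIdeal A) →ₗ[A] Z) := by
        rw [IsSMulRegular.subsingleton_linearMap_iff]
        rintro ⟨r, hr, hr'⟩
        refine h ⟨r, ?_, hr'⟩
        rwa [Ideal.annihilator_quotient] at hr
      rw [not_subsingleton_iff_nontrivial] at h1
      obtain ⟨f, hf⟩ := exists_ne (0 : (A ⧸ maximalIdeal A) →ₗ[A] Z)
      refine ⟨[], f (Submodule.Quotient.mk 1), ?_, ?_⟩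
      · intro h0
        apply hf
        ext
        simpa using h0
      · intro a ha
        rw [← map_smul, ← Submodule.Quotient.mk_smul, (Submodule.Quotient.mk_eq_zero _).2, map_zero]
        simpa using ha

lemma exists_maxReg [IsNoetherianRing A] : ∃ rs, MaxReg rs (ModuleCat.of A A) :=
  exists_maxReg_aux _ (ModuleCat.of A A) LinearMap.id Function.surjective_id rfl
    (inferInstanceAs (Nontrivial A))

end depth
end GorInj


namespace GorInj
section soc
variable {R : Type u} [CommRing R]

lemma ext_colon {I : Type u} [AddCommGroup I] [Module R I] (hI : Module.Injective R I)
    (a : Ideal R) (x : R) (w : I) (hw : ∀ r, r * x ∈ a → r • w = 0) :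
    ∃ z : I, (∀ r ∈ a, r • z = 0) ∧ x • z = w := by
  have hk : ∀ r, r ∈ LinearMap.ker (LinearMap.toSpanSingleton R (R ⧸ a) (Ideal.Quotient.mk a x)) ↔
      r * x ∈ a := by
    intro r
    rw [LinearMap.mem_ker, LinearMap.toSpanSingleton_apply, ← Ideal.Quotient.eq_zero_iff_mem,
      map_mul]
    rfl
  obtain ⟨h, hh⟩ := hI.out
    ((LinearMap.ker (LinearMap.toSpanSingleton R (R ⧸ a) (Ideal.Quotient.mk a x))).liftQ
      (LinearMap.toSpanSingleton R (R ⧸ a) (Ideal.Quotient.mk a x)) le_rfl)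
    (LinearMap.ker_eq_bot.1 (Submodule.ker_liftQ_eq_bot _ _ _ le_rfl))
    ((LinearMap.ker (LinearMap.toSpanSingleton R (R ⧸ a) (Ideal.Quotient.mk a x))).liftQ
      (LinearMap.toSpanSingleton R I w) (fun r hr => by
        rw [LinearMap.mem_ker, LinearMap.toSpanSingleton_apply]
        exact hw r ((hk r).1 hr)))
  refine ⟨h (Ideal.Quotient.mk a 1), ?_, ?_⟩
  · intro r hr
    rw [← map_smul]
    have : r • (Ideal.Quotient.mk a 1) = 0 := by
      change Ideal.Quotient.mk a (r • 1) = 0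
      rw [Ideal.Quotient.eq_zero_iff_mem]
      simpa using hr
    rw [this, map_zero]
  · have := hh (Submodule.Quotient.mk 1)
    rw [Submodule.liftQ_apply, Submodule.liftQ_apply, LinearMap.toSpanSingleton_apply,
      LinearMap.toSpanSingleton_apply, one_smul, one_smul] at this
    rw [← this, ← map_smul]
    congr 1
    change Ideal.Quotient.mk a (x • 1) = _
    simp

/-- local condition at a prime -/
def SocSurj {I I' : Type u} [AddCommGroup I] [Module R I] [AddCommGroup I'] [Module R I']
    (φ : I →ₗ[R] I') (p : Ideal R) [p.IsPrime] : Prop :=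
  ∀ y : LocalizedModule p.primeCompl I',
    (∀ a ∈ IsLocalRing.maximalIdeal (Localization.AtPrime p), a • y = 0) →
    ∃ e : LocalizedModule p.primeCompl I, LocalizedModule.map p.primeCompl φ e = y ∧
      (∀ a ∈ IsLocalRing.maximalIdeal (Localization.AtPrime p), a • e = 0)

lemma exists_common {I : Type u} [AddCommGroup I] [Module R I] (S : Submonoid R) (z : I)
    (s : Finset R) (h : ∀ a ∈ s, ∃ v ∈ S, v • a • z = 0) :
    ∃ v ∈ S, ∀ a ∈ Ideal.span (s : Set R), a • v • z = 0 := by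
  classical
  choose! v hv hv' using h
  refine ⟨∏ a ∈ s, v a, S.prod_mem hv, ?_⟩
  intro a ha
  have : Ideal.span (s : Set R) ≤ Submodule.comap (LinearMap.toSpanSingleton R I ((∏ a ∈ s, v a) • z)) ⊥ := by
    rw [Ideal.span_le]
    intro b hb
    change b • (∏ a ∈ s, v a) • z = 0
    rw [← Finset.prod_erase_mul s v hb, smul_comm, mul_smul, hv' b hb, smul_zero]
  exact this ha

lemma soc_prime [IsNoetherianRing R] {I I' : Type u} [AddCommGroup I] [Module R I] [AddCommGroup I'] [Module R I']
    (φ : I →ₗ[R] I') (p : Ideal R) [p.IsPrime] (h : SocSurj φ p) (y : I')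
    (hy : ∀ r ∈ p, r • y = 0) : ∃ x ∉ p, ∃ w : I, (∀ r ∈ p, r • w = 0) ∧ φ w = x • y := by
  obtain ⟨e, he, he'⟩ := h (LocalizedModule.mk y 1) (by
    intro a ha
    induction a using Localization.induction_on with
    | H x =>
      obtain ⟨r, s⟩ := x
      have hr : r ∈ p := by
        rw [Localization.mk_eq_mk'] at ha
        exact (IsLocalization.AtPrime.mk'_mem_maximal_iff (Localization.AtPrime p) p r s).1 ha
      rw [LocalizedModule.mk_smul_mk, hy r hr, LocalizedModule.zero_mk])
  induction e using LocalizedModule.induction_on with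
  | h z s =>
  rw [LocalizedModule.map_mk, LocalizedModule.mk_eq] at he
  obtain ⟨u, hu⟩ := he
  obtain ⟨t, ht⟩ := (isNoetherianRing_iff_ideal_fg R).1 ‹_› p
  obtain ⟨v, hv, hv'⟩ := exists_common p.primeCompl z t (by
    intro a ha
    have ha' : a ∈ p := ht ▸ Ideal.subset_span ha
    have := he' (algebraMap R _ a) (by
      rw [← IsLocalization.AtPrime.comap_maximalIdeal (Localization.AtPrime p) p] at ha'
      exact ha')
    rw [algebraMap_smul, LocalizedModule.smul'_mk, ← LocalizedModule.zero_mk 1, LocalizedModule.mk_eq] at this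
    obtain ⟨q, hq⟩ := this
    refine ⟨q, q.2, ?_⟩
    simpa [Submonoid.smul_def] using hq)
  rw [show Ideal.span (t : Set R) = p from ht] at hv'
  refine ⟨u * s * v, p.primeCompl.mul_mem (p.primeCompl.mul_mem u.2 s.2) hv, (u : R) • v • z, ?_, ?_⟩
  · intro r hr
    rw [smul_comm, hv' r hr, smul_zero]
  · rw [map_smul, map_smul]
    simp only [Submonoid.smul_def, one_smul] at hu
    rw [smul_comm, hu, ← mul_smul, ← mul_smul]
    congr 1; ring

lemma soc_all [IsNoetherianRing R] {I I' : Type u} [AddCommGroup I] [Module R I] [AddCommGroup I'] [Module R I']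
    (hI : Module.Injective R I) (φ : I →ₗ[R] I')
    (h : ∀ (p : Ideal R) [p.IsPrime], SocSurj φ p) (a : Ideal R) :
    ∀ y : I', (∀ r ∈ a, r • y = 0) → ∃ z : I, φ z = y ∧ ∀ r ∈ a, r • z = 0 := by
  induction a using WellFoundedGT.induction with
  | ind a ih =>
  intro y hy
  by_cases ht : a = ⊤
  · refine ⟨0, ?_, by simp⟩
    rw [map_zero, ← one_smul R y, hy 1 (ht ▸ trivial)]
  obtain ⟨x, hx, w, hw, hw'⟩ : ∃ x ∉ a, ∃ w : I, (∀ r, r * x ∈ a → r • w = 0) ∧ φ w = x • y := by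
    by_cases hp : a.IsPrime
    · obtain ⟨x, hx, w, hw, hw'⟩ := soc_prime φ a (h a) y hy
      exact ⟨x, hx, w, fun r hr => hw r ((hp.mem_or_mem hr).resolve_right hx), hw'⟩
    · obtain ⟨x, hx, b, hb, hxb⟩ := (Ideal.not_isPrime_iff.1 hp).resolve_left ht
      have hm : ∀ r, r ∈ Submodule.comap (LinearMap.toSpanSingleton R R x) a ↔ r * x ∈ a :=
        fun r => Iff.rfl
      obtain ⟨w, hw, hw'⟩ := ih (Submodule.comap (LinearMap.toSpanSingleton R R x) a) (by
        refine lt_of_le_of_ne (fun r hr => (hm r).2 (a.mul_mem_right _ hr)) ?_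
        intro he
        apply hb
        rw [he, hm, mul_comm]; exact hxb) (x • y) (fun r hr => by
          rw [← mul_smul]; exact hy _ ((hm r).1 hr))
      exact ⟨x, hx, w, fun r hr => hw' r ((hm r).2 hr), hw⟩
  obtain ⟨z, hz, hz'⟩ := ext_colon hI a x w hw
  obtain ⟨z1, h1, h2⟩ := ih (a ⊔ Ideal.span {x}) (by
    refine lt_of_le_of_ne le_sup_left ?_
    intro he
    apply hx
    rw [he]
    exact Ideal.mem_sup_right (Ideal.mem_span_singleton_self x)) (y - φ z) (by
      intro r hr
      obtain ⟨r1, hr1, r2, hr2, rfl⟩ := Submodule.mem_sup.1 hr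
      obtain ⟨c, rfl⟩ := Ideal.mem_span_singleton'.1 hr2
      rw [add_smul, smul_sub, hy r1 hr1, ← map_smul, hz r1 hr1, mul_smul, smul_sub x,
        ← map_smul φ x, hz', hw']
      simp)
  refine ⟨z + z1, by rw [map_add, h1]; abel, fun r hr => ?_⟩
  rw [smul_add, hz r hr, h2 r (Ideal.mem_sup_left hr), add_zero]

lemma soc_surj [IsNoetherianRing R] {I I' : Type u} [AddCommGroup I] [Module R I] [AddCommGroup I'] [Module R I']
    (hI : Module.Injective R I) (φ : I →ₗ[R] I')
    (h : ∀ (p : Ideal R) [p.IsPrime], SocSurj φ p) : Function.Surjective φ := by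
  intro y
  obtain ⟨z, hz, -⟩ := soc_all hI φ h ⊥ y (by rintro r rfl; simp)
  exact ⟨z, hz⟩

lemma soc_inj [IsNoetherianRing R] {H I I' : Type u} [AddCommGroup H] [Module R H]
    [AddCommGroup I] [Module R I] [AddCommGroup I'] [Module R I']
    (hI : Module.Injective R I) {f : H →ₗ[R] I} {φ : I →ₗ[R] I'} (hse : SE f φ)
    (h : ∀ (p : Ideal R) [p.IsPrime], SocSurj φ p) : Module.Injective R H := by
  apply Module.Baer.injective
  intro a g
  obtain ⟨k, hk⟩ := Module.Baer.of_injective hI a (f ∘ₗ g)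
  obtain ⟨z, hz, hz'⟩ := soc_all hI φ h a (φ (k 1)) (by
    intro r hr
    rw [← map_smul, ← map_smul, smul_eq_mul, mul_one, hk r hr]
    exact (hse.2.2 _).2 ⟨_, rfl⟩)
  obtain ⟨t, ht⟩ := (hse.2.2 (k 1 - z)).1 (by rw [map_sub, hz, sub_self])
  refine ⟨LinearMap.toSpanSingleton R H t, fun x hx => hse.1 ?_⟩
  rw [LinearMap.toSpanSingleton_apply, map_smul, ht, smul_sub, hz' x hx, ← map_smul, smul_eq_mul,
    mul_one, hk x hx, sub_zero]
  rfl

lemma SE.loc {X Y Z : Type u} [AddCommGroup X] [Module R X]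
    [AddCommGroup Y] [Module R Y] [AddCommGroup Z] [Module R Z] {f : X →ₗ[R] Y} {g : Y →ₗ[R] Z}
    (h : SE f g) (S : Submonoid R) : SE (LocalizedModule.map S f) (LocalizedModule.map S g) :=
  ⟨LocalizedModule.map_injective S f h.1, LocalizedModule.map_surjective S g h.2.1,
    LocalizedModule.map_exact S f g h.2.2⟩

lemma inj_loc [IsNoetherianRing R] {I : Type u} [AddCommGroup I] [Module R I]
    (hI : Module.Injective R I) (S : Submonoid R) :
    Module.Injective (Localization S) (LocalizedModule S I) :=
  Module.injective_of_isLocalizedModule S (LocalizedModule.mkLinearMap S I)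

lemma loc_comp {X Y Z : Type u} [AddCommGroup X] [Module R X]
    [AddCommGroup Y] [Module R Y] [AddCommGroup Z] [Module R Z] (f : X →ₗ[R] Y) (g : Y →ₗ[R] Z)
    (S : Submonoid R) : LocalizedModule.map S (g ∘ₗ f) =
      LocalizedModule.map S g ∘ₗ LocalizedModule.map S f := by
  ext x
  induction x using LocalizedModule.induction_on with
  | h z s => simp

end soc
end GorInj


namespace GorInj
section van
variable {A : Type u} [CommRing A] [IsLocalRing A]
variable {X Y Z : Type u} [AddCommGroup X] [Module A X] [AddCommGroup Y] [Module A Y]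
  [AddCommGroup Z] [Module A Z] {f : X →ₗ[A] Y} {g : Y →ₗ[A] Z}

lemma van_right0 (h : SE f g) (hY : Subsingleton (TT A 0 Y)) : Subsingleton (TT A 0 Z) :=
  (Tm0_surj h.2.1).subsingleton

lemma van_right (h : SE f g) (i : ℕ) (hY : Subsingleton (TT A (i + 1) Y))
    (hX : Subsingleton (TT A i X)) : Subsingleton (TT A (i + 1) Z) := by
  refine subsingleton_of_forall_eq 0 fun z => ?_
  obtain ⟨y, rfl⟩ := (Tex3 h i z).1 (Subsingleton.elim _ _)
  rw [Subsingleton.elim y 0, map_zero]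

lemma van_left (h : SE f g) (i : ℕ) (hY : Subsingleton (TT A i Y))
    (hZ : Subsingleton (TT A (i + 1) Z)) : Subsingleton (TT A i X) := by
  refine subsingleton_of_forall_eq 0 fun z => ?_
  obtain ⟨y, rfl⟩ := (Tex1 h i z).1 (Subsingleton.elim _ _)
  rw [Subsingleton.elim y 0, map_zero]

lemma van_mid (h : SE f g) (i : ℕ) (hX : Subsingleton (TT A i X))
    (hZ : Subsingleton (TT A i Z)) : Subsingleton (TT A i Y) := by
  refine subsingleton_of_forall_eq 0 fun z => ?_
  obtain ⟨y, rfl⟩ := (Tex2 h i z).1 (Subsingleton.elim _ _)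
  rw [Subsingleton.elim y 0, map_zero]

lemma surj_of_van (h : SE f g) (i : ℕ) (hX : Subsingleton (TT A i X)) :
    Function.Surjective (Tm (i + 1) g) := fun z =>
  (Tex3 h i z).1 (Subsingleton.elim _ _)

end van
section final
open RingTheory.Sequence IsLocalRing
variable {R : Type u} [CommRing R] [IsNoetherianRing R]

/-- Local Tor modules. -/
noncomputable abbrev TL (p : Ideal R) [p.IsPrime] (i : ℕ) (M : Type u) [AddCommGroup M] [Module R M] :
    ModuleCat.{u} (Localization.AtPrime p) :=
  TT (Localization.AtPrime p) i (LocalizedModule p.primeCompl M)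

lemma GI_van (p : Ideal R) [p.IsPrime] {rs : List (Localization.AtPrime p)}
    (h1 : ∀ r ∈ rs, r ∈ maximalIdeal (Localization.AtPrime p))
    (h2 : IsWeaklyRegular (Localization.AtPrime p) rs) (i : ℕ) :
    i < rs.length → ∀ {B : ModuleCat.{u} R}, GIp B → Subsingleton (TL p i B) := by
  induction i with
  | zero =>
    intro hi B hB
    obtain ⟨C, hC, I, f, g, hI, hse, -⟩ := hB.left
    exact van_right0 (hse.loc p.primeCompl) (D1' (inj_loc hI _) h1 h2 hi)
  | succ i ih =>
    intro hi B hB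
    obtain ⟨C, hC, I, f, g, hI, hse, -⟩ := hB.left
    exact van_right (hse.loc p.primeCompl) i (D1' (inj_loc hI _) h1 h2 hi) (ih (by omega) hC)

lemma gid_van (p : Ideal R) [p.IsPrime] {rs : List (Localization.AtPrime p)}
    (h1 : ∀ r ∈ rs, r ∈ maximalIdeal (Localization.AtPrime p))
    (h2 : IsWeaklyRegular (Localization.AtPrime p) rs) (n : ℕ) :
    ∀ i, i + n < rs.length → ∀ {M : ModuleCat.{u} R}, GidLE n M → Subsingleton (TL p i M) := by
  induction n with
  | zero =>
    intro i hi M hM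
    exact GI_van p h1 h2 i hi hM
  | succ n ih =>
    intro i hi M hM
    obtain ⟨J, C, f, g, hJ, hse, hC⟩ := hM
    exact van_left (hse.loc p.primeCompl) i (GI_van p h1 h2 i (by omega) hJ)
      (ih (i + 1) (by omega) hC)

lemma not_soc {I I' : Type u} [AddCommGroup I] [Module R I] [AddCommGroup I'] [Module R I']
    (hI : Module.Injective R I) (hI' : Module.Injective R I') (φ : I →ₗ[R] I')
    (h : ¬ ∀ (p : Ideal R) [p.IsPrime], SocSurj φ p) :
    ∃ (p : Ideal R) (_ : p.IsPrime) (rs : List (Localization.AtPrime p)),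
      MaxReg rs (ModuleCat.of (Localization.AtPrime p) (Localization.AtPrime p)) ∧
      ¬ Function.Surjective (Tm rs.length (LocalizedModule.map p.primeCompl φ)) := by
  push Not at h
  obtain ⟨p, hp, h⟩ := h
  have : IsNoetherianRing (Localization.AtPrime p) :=
    IsLocalization.isNoetherianRing p.primeCompl _ ‹_›
  obtain ⟨rs, hrs⟩ := exists_maxReg (A := Localization.AtPrime p)
  refine ⟨p, hp, rs, hrs, fun hs => h fun y hy => ?_⟩
  exact D2' (inj_loc hI _) (inj_loc hI' _) _ hrs hs y hy

lemma chouinard (n : ℕ) : ∀ {H : ModuleCat.{u} R}, IdLE (n + 1) H → ¬ IdLE n H →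
    ∃ (p : Ideal R) (_ : p.IsPrime) (rs : List (Localization.AtPrime p)) (i : ℕ),
      MaxReg rs (ModuleCat.of (Localization.AtPrime p) (Localization.AtPrime p)) ∧
      i + (n + 1) = rs.length ∧ ¬ Subsingleton (TL p i H) := by
  induction n with
  | zero =>
    intro H h1 h2
    obtain ⟨I, I', f, φ, hI, hse, hI'⟩ := h1
    obtain ⟨p, hp, rs, hrs, hs⟩ := not_soc hI hI' φ (fun h => h2 (soc_inj hI hse h))
    have hse' := hse.loc p.primeCompl
    rcases hd : rs.length with _ | e
    · rw [hd] at hs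
      exact absurd (Tm0_surj hse'.2.1) hs
    · rw [hd] at hs
      exact ⟨p, hp, rs, e, hrs, hd.symm, fun hv => hs (surj_of_van hse' e hv)⟩
  | succ n ih =>
    intro H h1 h2
    obtain ⟨I, H', f, φ, hI, hse, hH'⟩ := h1
    obtain ⟨p, hp, rs, i, hrs, hi, hv⟩ := ih hH' (fun h => h2 ⟨I, H', f, φ, hI, hse, h⟩)
    have hse' := hse.loc p.primeCompl
    have hvI : Subsingleton (TL p i I) := D1' (inj_loc hI _) hrs.mem hrs.reg (by omega)
    rcases i with _ | j
    · exact absurd (van_right0 hse' hvI) hv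
    · exact ⟨p, hp, rs, j, hrs, by omega, fun h => hv (van_right hse' j hvI h)⟩

lemma exists_prime {M : ModuleCat.{u} R} [Nontrivial M] (g : ℕ) (h1 : GidLE g M)
    (h2 : ∀ n < g, ¬ GidLE n M) :
    ∃ (p : Ideal R) (_ : p.IsPrime) (rs : List (Localization.AtPrime p)) (i : ℕ),
      MaxReg rs (ModuleCat.of (Localization.AtPrime p) (Localization.AtPrime p)) ∧
      i + g = rs.length ∧ ¬ Subsingleton (TL p i M) := by
  rcases g with _ | n
  · obtain ⟨B, hB, I, f, q, hI, hse, -⟩ := GIp.left (M := M) h1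
    obtain ⟨B', hB', I', f', q', hI', hse', -⟩ := hB.left
    obtain ⟨p, hp, rs, hrs, hs⟩ := not_soc hI' hI (f ∘ₗ q') (fun h => by
      have hs := soc_surj hI' _ h
      obtain ⟨m, hm⟩ := exists_ne (0 : M)
      obtain ⟨y, rfl⟩ := hse.2.1 m
      obtain ⟨z, rfl⟩ := hs y
      exact hm ((hse.2.2 _).2 ⟨q' z, rfl⟩))
    have l := hse.loc p.primeCompl
    have l' := hse'.loc p.primeCompl
    refine ⟨p, hp, rs, rs.length, hrs, rfl, fun hv => hs ?_⟩
    rw [loc_comp, Tm_comp]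
    have hq : Function.Surjective (Tm rs.length (LocalizedModule.map p.primeCompl q')) := by
      rcases hd : rs.length with _ | e
      · exact Tm0_surj l'.2.1
      · exact surj_of_van l' e (GI_van p hrs.mem hrs.reg e (by omega) hB')
    have hf : Function.Surjective (Tm rs.length (LocalizedModule.map p.primeCompl f)) := fun y =>
      (Tex2 l rs.length y).1 (@Subsingleton.elim _ hv _ _)
    exact hf.comp hq
  · obtain ⟨B, H, a, b, hB, hH, hse⟩ := h1.approx
    obtain ⟨p, hp, rs, i, hrs, hi, hv⟩ := chouinard n hH
      (fun h => h2 n (by omega) (GidLE.of_approx hB h hse))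
    exact ⟨p, hp, rs, i, hrs, hi, fun h => hv (van_mid (hse.loc p.primeCompl) i
      (GI_van p hrs.mem hrs.reg i (by omega) hB) h)⟩

lemma depth_le_width (p : Ideal R) [p.IsPrime] {M : ModuleCat.{u} R} {g : ℕ} (h : GidLE g M)
    {i : ℕ} (hi : ¬ Subsingleton (TL p i M)) :
    ringDepth (Localization.AtPrime p) ≤ (i + g : ℕ) := by
  apply sSup_le
  rintro _ ⟨rs, rfl, h1, h2⟩
  by_contra hlt
  exact hi (gid_van p h1 h2.toIsWeaklyRegular g i (by exact_mod_cast not_le.1 hlt) h)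

lemma width_eq (p : Ideal R) [p.IsPrime] (M : Type u) [AddCommGroup M] [Module R M] :
    modWidth (Localization.AtPrime p) (LocalizedModule p.primeCompl M) =
      sInf {c : ℕ∞ | ∃ i : ℕ, c = i ∧ ¬ Subsingleton (TL p i M)} := by
  unfold modWidth
  congr 1
  ext c
  refine exists_congr fun i => and_congr_right fun _ => not_congr ?_
  exact TT_iff (ModuleCat.of (Localization.AtPrime p) (LocalizedModule p.primeCompl M)) i

end final
end GorInj

open GorInj RingTheory.Sequence

theorem gid_eq_sup_depth_sub_width
    (R : Type u) [CommRing R] [IsNoetherianRing R]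
    (M : Type u) [AddCommGroup M] [Module R M] [Nontrivial M]
    (g : ℕ) (hg : gid R M = g) :
    (∀ (p : Ideal R) [p.IsPrime],
        modWidth (Localization.AtPrime p) (LocalizedModule p.primeCompl M) < ⊤ →
          ringDepth (Localization.AtPrime p) -
            modWidth (Localization.AtPrime p) (LocalizedModule p.primeCompl M) ≤ (g : ℕ∞)) ∧
      (∃ (p : Ideal R) (_ : p.IsPrime),
        modWidth (Localization.AtPrime p) (LocalizedModule p.primeCompl M) < ⊤ ∧
          ringDepth (Localization.AtPrime p) -
            modWidth (Localization.AtPrime p) (LocalizedModule p.primeCompl M) = (g : ℕ∞)) := by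
  obtain ⟨h1, h2⟩ := gid_eq hg
  have : Nontrivial (ModuleCat.of R M) := ‹Nontrivial M›
  constructor
  · intro p hp hw
    rw [width_eq] at hw ⊢
    have hne : {c : ℕ∞ | ∃ i : ℕ, c = i ∧ ¬ Subsingleton (TL p i M)}.Nonempty := by
      rw [Set.nonempty_iff_ne_empty]
      intro h
      rw [h, sInf_empty] at hw
      exact lt_irrefl _ hw
    obtain ⟨i, hi, hi'⟩ := csInf_mem hne
    rw [hi, tsub_le_iff_left]
    exact_mod_cast depth_le_width p h1 hi'
  · obtain ⟨p, hp, rs, i, hrs, hi, hv⟩ := exists_prime g h1 h2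
    have hd : ringDepth (Localization.AtPrime p) = (i + g : ℕ) := by
      refine le_antisymm (depth_le_width p h1 hv) (le_sSup ⟨rs, by rw [hi], hrs.mem, ?_⟩)
      exact (IsLocalRing.isRegular_iff_isWeaklyRegular_of_subset_maximalIdeal (fun _ hr => hrs.mem _ hr)).2
        hrs.reg
    have hw : modWidth (Localization.AtPrime p) (LocalizedModule p.primeCompl M) = i := by
      rw [width_eq]
      refine le_antisymm (sInf_le ⟨i, rfl, hv⟩) (le_sInf ?_)
      rintro _ ⟨j, rfl, hj⟩
      by_contra hlt
      have hlt1 : j < i := by exact_mod_cast not_le.1 hlt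
      have hlt2 : j + g < rs.length := by omega
      have hv2 : Subsingleton (TL p j (ModuleCat.of R M)) :=
        gid_van p hrs.mem hrs.reg g j hlt2 (M := ModuleCat.of R M) h1
      exact hj hv2
    refine ⟨p, hp, ?_, ?_⟩
    · rw [hw]; exact ENat.coe_lt_top i
    · rw [hd, hw]
      rw [← ENat.coe_sub]
      congr 1
      omega
end

section
/- Let R be a commutative noetherian local ring and let M be a nonzero finitely generated R-module of finite Gorenstein injective dimension. Then Gid_R(M) = depth(R). -/
/-!
Bass formula: if `R` is a commutative noetherian local ring and `M` is a nonzero finitely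
generated `R`-module of finite Gorenstein injective dimension, then `Gid_R M = depth R`.
-/

universe u

open CategoryTheory

namespace GidBass

open CategoryTheory.Abelian

section Modules

variable {R : Type u} [CommRing R]

/-- There is a short exact sequence `0 → A → B → C → 0`. -/
def Rel (A B C : ModuleCat.{u} R) : Prop :=
  ∃ (f : A →ₗ[R] B) (g : B →ₗ[R] C), Function.Injective f ∧ Function.Exact f g ∧
    Function.Surjective g

theorem exists_factor {H M X : Type u} [AddCommGroup H] [Module R H] [AddCommGroup M] [Module R M]
    [AddCommGroup X] [Module R X] (g : H →ₗ[R] M) (hg : Function.Surjective g) (k : H →ₗ[R] X)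
    (h : ∀ x, g x = 0 → k x = 0) : ∃ m : M →ₗ[R] X, ∀ x, m (g x) = k x := by
  refine ⟨((LinearMap.ker g).liftQ k (fun x hx => h x hx)).comp
    (g.quotKerEquivOfSurjective hg).symm.toLinearMap, fun x => ?_⟩
  have : (g.quotKerEquivOfSurjective hg).symm (g x) = Submodule.Quotient.mk x := by
    rw [LinearEquiv.symm_apply_eq]; rfl
  rw [LinearMap.comp_apply, LinearEquiv.coe_coe, this]
  exact Submodule.liftQ_apply _ _ _

theorem exists_lift {H M X : Type u} [AddCommGroup H] [Module R H] [AddCommGroup M] [Module R M]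
    [AddCommGroup X] [Module R X] (f : M →ₗ[R] H) (hf : Function.Injective f) (k : X →ₗ[R] H)
    (h : ∀ x, ∃ y, f y = k x) : ∃ m : X →ₗ[R] M, ∀ x, f (m x) = k x := by
  refine ⟨(LinearEquiv.ofInjective f hf).symm.toLinearMap.comp
    (k.codRestrict (LinearMap.range f) h), fun x => ?_⟩
  have := LinearEquiv.apply_symm_apply (LinearEquiv.ofInjective f hf)
    (k.codRestrict (LinearMap.range f) h x)
  exact congrArg Subtype.val this

/-- Quotient of a submodule. -/
theorem rel_quot {A B : ModuleCat.{u} R} (f : A →ₗ[R] B) (hf : Function.Injective f) :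
    Rel A B (ModuleCat.of R (B ⧸ LinearMap.range f)) :=
  ⟨f, (LinearMap.range f).mkQ, hf, LinearMap.exact_map_mkQ_range f, Submodule.mkQ_surjective _⟩

theorem rel_ker {B C : ModuleCat.{u} R} (g : B →ₗ[R] C) (hg : Function.Surjective g) :
    Rel (ModuleCat.of R (LinearMap.ker g)) B C :=
  ⟨(LinearMap.ker g).subtype, g, Subtype.val_injective, g.exact_subtype_ker_map, hg⟩

theorem octa_sub {B I P M H' : ModuleCat.{u} R} (h1 : Rel B I P) (h2 : Rel M P H') :
    ∃ H : ModuleCat.{u} R, Rel H I H' ∧ Rel B H M := by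
  obtain ⟨b, q, hb, hbq, hq⟩ := h1
  obtain ⟨m, r, hm, hmr, hr⟩ := h2
  refine ⟨_, rel_ker (r.comp q) (hr.comp hq), ?_⟩
  obtain ⟨t, ht⟩ := exists_lift m hm (q.comp (LinearMap.ker (r.comp q)).subtype)
    (fun x => (hmr _).1 x.2)
  refine ⟨b.codRestrict _ (fun x => by simp [hbq.apply_apply_eq_zero]), t, ?_, ?_, ?_⟩
  · intro x y hxy
    exact hb (congrArg Subtype.val hxy)
  · intro x
    constructor
    · intro hx
      have : q x = 0 := by
        have := ht x
        rw [hx] at this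
        simpa using this.symm
      obtain ⟨y, hy⟩ := (hbq _).1 this
      exact ⟨y, Subtype.ext hy⟩
    · rintro ⟨y, rfl⟩
      apply hm
      rw [ht]
      simp [hbq.apply_apply_eq_zero]
  · intro y
    obtain ⟨i, hi⟩ := hq (m y)
    refine ⟨⟨i, by simp [hi, hmr.apply_apply_eq_zero]⟩, hm ?_⟩
    rw [ht]
    exact hi

theorem octa_quot {B H M E C : ModuleCat.{u} R} (h1 : Rel B H M) (h2 : Rel H E C) :
    ∃ J : ModuleCat.{u} R, Rel B E J ∧ Rel M J C := by
  obtain ⟨b, q, hb, hbq, hq⟩ := h1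
  obtain ⟨m, r, hm, hmr, hr⟩ := h2
  refine ⟨_, rel_quot (m.comp b) (hm.comp hb), ?_⟩
  obtain ⟨t, ht⟩ := exists_factor q hq ((LinearMap.range (m.comp b)).mkQ.comp m) (fun x hx => by
    obtain ⟨y, rfl⟩ := (hbq _).1 hx
    simp only [LinearMap.comp_apply, Submodule.mkQ_apply, Submodule.Quotient.mk_eq_zero]
    exact ⟨y, rfl⟩)
  refine ⟨t, (LinearMap.range (m.comp b)).liftQ r ?_, ?_, ?_, ?_⟩
  · rintro _ ⟨y, rfl⟩
    simp [hmr.apply_apply_eq_zero]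
  · rw [← LinearMap.ker_eq_bot, LinearMap.ker_eq_bot']
    intro x hx
    obtain ⟨h, rfl⟩ := hq x
    rw [ht] at hx
    simp only [LinearMap.comp_apply, Submodule.mkQ_apply, Submodule.Quotient.mk_eq_zero] at hx
    obtain ⟨y, hy⟩ := hx
    rw [← hm hy]
    exact hbq.apply_apply_eq_zero y
  · intro x
    obtain ⟨e, rfl⟩ := Submodule.Quotient.mk_surjective _ x
    constructor
    · intro he
      obtain ⟨h, rfl⟩ := (hmr _).1 he
      exact ⟨q h, ht h⟩
    · rintro ⟨y, hy⟩
      obtain ⟨h, rfl⟩ := hq y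
      rw [← hy, ht]
      simp [hmr.apply_apply_eq_zero]
  · intro c
    obtain ⟨e, rfl⟩ := hr c
    exact ⟨Submodule.Quotient.mk e, rfl⟩

theorem rel_pullback {M J M' B' H' : ModuleCat.{u} R} (h1 : Rel M J M') (h2 : Rel B' H' M') :
    ∃ P : ModuleCat.{u} R, Rel B' P J ∧ Rel M P H' := by
  obtain ⟨f, g, hf, hfg, hg⟩ := h1
  obtain ⟨b, q, hb, hbq, hq⟩ := h2
  let P : Submodule R (J × H') :=
    LinearMap.ker (g.comp (LinearMap.fst R J H') - q.comp (LinearMap.snd R J H'))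
  have hP : ∀ x : J × H', x ∈ P ↔ g x.1 = q x.2 := fun x => by simp [P, sub_eq_zero]
  refine ⟨ModuleCat.of R P, ⟨((LinearMap.inr R J H').comp b).codRestrict P ?_,
    (LinearMap.fst R J H').comp P.subtype, ?_, ?_, ?_⟩,
    ⟨((LinearMap.inl R J H').comp f).codRestrict P ?_,
    (LinearMap.snd R J H').comp P.subtype, ?_, ?_, ?_⟩⟩
  · intro x; simp [hP, hbq.apply_apply_eq_zero]
  · intro x y hxy
    exact hb (congrArg (fun z : P => z.1.2) hxy)
  · rintro ⟨⟨x, y⟩, hxy⟩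
    have hxy' := (hP _).1 hxy
    constructor
    · intro hx
      change x = 0 at hx
      subst hx
      obtain ⟨z, hz⟩ := (hbq y).1 (by simpa using hxy'.symm)
      exact ⟨z, Subtype.ext (Prod.ext rfl hz)⟩
    · rintro ⟨z, hz⟩
      exact (congrArg (fun z : P => z.1.1) hz).symm
  · intro j
    obtain ⟨h, hh⟩ := hq (g j)
    exact ⟨⟨(j, h), (hP _).2 hh.symm⟩, rfl⟩
  · intro x; simp [hP, hfg.apply_apply_eq_zero]
  · intro x y hxy
    exact hf (congrArg (fun z : P => z.1.1) hxy)
  · rintro ⟨⟨x, y⟩, hxy⟩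
    have hxy' := (hP _).1 hxy
    constructor
    · intro hy
      change y = 0 at hy
      subst hy
      obtain ⟨z, hz⟩ := (hfg x).1 (by simpa using hxy')
      exact ⟨z, Subtype.ext (Prod.ext hz rfl)⟩
    · rintro ⟨z, hz⟩
      exact (congrArg (fun z : P => z.1.2) hz).symm
  · intro h
    obtain ⟨j, hj⟩ := hg (q h)
    exact ⟨⟨(j, h), (hP _).2 hj⟩, rfl⟩

theorem Rel.shortExact {A B C : ModuleCat.{u} R} (h : Rel A B C) :
    ∃ (f : A ⟶ B) (g : B ⟶ C) (w : f ≫ g = 0), (ShortComplex.mk f g w).ShortExact := by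
  obtain ⟨f, g, hf, hfg, hg⟩ := h
  have w : ModuleCat.ofHom f ≫ ModuleCat.ofHom g = 0 := by
    ext x; exact hfg.apply_apply_eq_zero x
  exact ⟨ModuleCat.ofHom f, ModuleCat.ofHom g, w,
    ModuleCat.shortComplex_shortExact _ hfg hf hg⟩

theorem horseshoe {A X C Za Ia Zc Ic : ModuleCat.{u} R} (h : Rel A X C) (ha : Rel Za Ia A)
    (hc : Rel Zc Ic C) (hext : ∀ e : Ext Ic A 1, e = 0) :
    ∃ Z : ModuleCat.{u} R, Rel Z (ModuleCat.of R (Ia × Ic)) X ∧ Rel Za Z Zc := by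
  obtain ⟨f, g, hf, hfg, hg⟩ := h
  obtain ⟨za, qa, hza, hqa, sa⟩ := ha
  obtain ⟨zc, qc, hzc, hqc, sc⟩ := hc
  have w : ModuleCat.ofHom f ≫ ModuleCat.ofHom g = 0 := by
    ext x; exact hfg.apply_apply_eq_zero x
  have hS : (ShortComplex.mk _ _ w).ShortExact := ModuleCat.shortComplex_shortExact _ hfg hf hg
  obtain ⟨l, hl⟩ := Ext.covariant_sequence_exact₃ Ic hS (Ext.mk₀ (ModuleCat.ofHom qc))
    (zero_add 1) (hext _)
  obtain ⟨l, rfl⟩ := Ext.homEquiv₀.symm.surjective l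
  have hl' : ∀ x, g (l.hom x) = qc x := by
    intro x
    simp only [Ext.homEquiv₀_symm_apply, Ext.mk₀_comp_mk₀] at hl
    have := Ext.homEquiv₀.symm.injective hl
    exact congrArg (fun z : Ic ⟶ C => z.hom x) this
  let π : (Ia × Ic) →ₗ[R] X := LinearMap.coprod (f.comp qa) l.hom
  have hπ : ∀ x, π x = f (qa x.1) + l.hom x.2 := fun x => by simp [π]
  have hπs : Function.Surjective π := by
    intro x
    obtain ⟨c, hc⟩ := sc (g x)
    obtain ⟨a, ha⟩ := (hfg (x - l.hom c)).1 (by rw [map_sub, hl', hc, sub_self])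
    obtain ⟨i, rfl⟩ := sa a
    exact ⟨(i, c), by simp [hπ, ha]⟩
  have hgπ : ∀ x, g (π x) = qc x.2 := fun x => by
    simp [hπ, hl', hfg.apply_apply_eq_zero]
  refine ⟨_, rel_ker (B := ModuleCat.of R (Ia × Ic)) π hπs, ?_⟩
  obtain ⟨t, ht⟩ := exists_lift zc hzc ((LinearMap.snd R Ia Ic).comp (LinearMap.ker π).subtype)
    (fun x => (hqc _).1 (by
      have := hgπ x.1
      rw [x.2, map_zero] at this
      exact this.symm))
  have ht' : ∀ x : LinearMap.ker π, zc (t x) = x.1.2 := ht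
  refine ⟨((LinearMap.inl R Ia Ic).comp za).codRestrict (LinearMap.ker π) ?_, t, ?_, ?_, ?_⟩
  · intro x; simp [hπ, hqa.apply_apply_eq_zero]
  · intro x y hxy
    exact hza (congrArg (fun z : LinearMap.ker π => z.1.1) hxy)
  · rintro ⟨⟨x, y⟩, hxy⟩
    constructor
    · intro h0
      have h1 := ht' ⟨⟨x, y⟩, hxy⟩
      rw [h0, map_zero] at h1
      change 0 = y at h1
      subst h1
      have h2 : f (qa x) = 0 := by simpa [hπ] using hxy
      obtain ⟨z, hz⟩ := (hqa x).1 (hf (by rw [h2, map_zero]))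
      exact ⟨z, Subtype.ext (Prod.ext hz rfl)⟩
    · rintro ⟨z, hz⟩
      apply hzc
      rw [ht', map_zero]
      exact (congrArg (fun z : LinearMap.ker π => z.1.2) hz).symm
  · intro y
    obtain ⟨a, ha⟩ := (hfg (l.hom (zc y))).1 (by rw [hl', hqc.apply_apply_eq_zero])
    obtain ⟨i, hi⟩ := sa (-a)
    refine ⟨⟨(i, zc y), ?_⟩, hzc ?_⟩
    · simp [hπ, hi, ha]
    · rw [ht']

end Modules

section GI

variable {R : Type u} [CommRing R]

/-- Vanishing of an Ext group. -/
def V (X Y : ModuleCat.{u} R) (j : ℕ) : Prop := ∀ e : Ext X Y j, e = 0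

theorem V.of_injective (X : ModuleCat.{u} R) {Y : ModuleCat.{u} R} (hY : Injective Y) (j : ℕ) :
    V X Y (j + 1) := fun e => Ext.eq_zero_of_injective e

theorem Rel.V1 {A B C : ModuleCat.{u} R} (h : Rel A B C) {X : ModuleCat.{u} R} {j : ℕ}
    (hC : V X C j) (hB : V X B (j + 1)) : V X A (j + 1) := by
  obtain ⟨f, g, w, hS⟩ := h.shortExact
  intro e
  obtain ⟨x, hx⟩ := Ext.covariant_sequence_exact₁ X hS e (hB _) rfl
  rw [← hx, hC x, Ext.zero_comp]

theorem Rel.V2 {A B C : ModuleCat.{u} R} (h : Rel A B C) {X : ModuleCat.{u} R} {j : ℕ}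
    (hA : V X A j) (hC : V X C j) : V X B j := by
  obtain ⟨f, g, w, hS⟩ := h.shortExact
  intro e
  obtain ⟨x, hx⟩ := Ext.covariant_sequence_exact₂ X hS e (hC _)
  rw [← hx, hA x, Ext.zero_comp]

theorem Rel.V3 {A B C : ModuleCat.{u} R} (h : Rel A B C) {X : ModuleCat.{u} R} {j : ℕ}
    (hB : V X B j) (hA : V X A (j + 1)) : V X C j := by
  obtain ⟨f, g, w, hS⟩ := h.shortExact
  intro e
  obtain ⟨x, hx⟩ := Ext.covariant_sequence_exact₃ X hS e rfl (hA _)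
  rw [← hx, hB x, Ext.zero_comp]

/-- Modules right Ext-orthogonal to all injective modules. -/
def Orth (Y : ModuleCat.{u} R) : Prop :=
  ∀ E : ModuleCat.{u} R, Injective E → ∀ j : ℕ, V E Y (j + 1)

/-- Coinductive description of Gorenstein injective modules. -/
def GI (X : ModuleCat.{u} R) : Prop :=
  ∃ C : ModuleCat.{u} R → Prop, C X ∧ ∀ Y, C Y → Orth Y ∧
    ∃ Z I : ModuleCat.{u} R, Injective I ∧ Rel Z I Y ∧ C Z

theorem GI.orth {X : ModuleCat.{u} R} (h : GI X) : Orth X := by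
  obtain ⟨C, hX, hC⟩ := h
  exact (hC X hX).1

theorem GI.syz {X : ModuleCat.{u} R} (h : GI X) :
    ∃ Z I : ModuleCat.{u} R, Injective I ∧ Rel Z I X ∧ GI Z := by
  obtain ⟨C, hX, hC⟩ := h
  obtain ⟨Z, I, hI, hr, hZ⟩ := (hC X hX).2
  exact ⟨Z, I, hI, hr, C, hZ, hC⟩

theorem Orth.of_injective {X : ModuleCat.{u} R} (h : Injective X) : Orth X :=
  fun _ _ j => V.of_injective _ h j

theorem Rel.zero_left (X : ModuleCat.{u} R) : Rel (ModuleCat.of R PUnit) X X := by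
  refine ⟨0, LinearMap.id, fun _ _ _ => rfl, ?_, Function.surjective_id⟩
  intro x
  constructor
  · intro h
    exact ⟨0, h.symm⟩
  · rintro ⟨y, rfl⟩
    rfl

theorem injective_zero : Injective (ModuleCat.of R PUnit.{u + 1}) := by
  refine ⟨fun g f _ => ⟨0, ?_⟩⟩
  ext x

theorem GI.of_injective {X : ModuleCat.{u} R} (h : Injective X) : GI X :=
  ⟨fun Y => Injective Y, h, fun Y hY =>
    ⟨Orth.of_injective hY, _, Y, hY, Rel.zero_left Y, injective_zero⟩⟩

theorem GI.cosyz {X E Y : ModuleCat.{u} R} (h : GI X) (hE : Injective E) (hr : Rel X E Y) :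
    GI Y := by
  refine ⟨fun Z => GI Z ∨ Z = Y, Or.inr rfl, ?_⟩
  rintro Z (hZ | rfl)
  · obtain ⟨Z', I, hI, hr, hZ'⟩ := hZ.syz
    exact ⟨hZ.orth, Z', I, hI, hr, Or.inl hZ'⟩
  · exact ⟨fun E' hE' j => hr.V3 (V.of_injective _ hE j) (h.orth E' hE' _),
      X, E, hE, hr, Or.inl h⟩

theorem injective_prod {A B : ModuleCat.{u} R} (hA : Injective A) (hB : Injective B) :
    Injective (ModuleCat.of R (A × B)) := by
  have h : Rel A (ModuleCat.of R (A × B)) B :=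
    ⟨LinearMap.inl R A B, LinearMap.snd R A B, LinearMap.inl_injective, Function.Exact.inl_snd,
      Prod.snd_surjective⟩
  rw [injective_iff_subsingleton_ext_one]
  exact fun Y => ⟨fun a b => by
    rw [h.V2 (V.of_injective _ hA 0) (V.of_injective _ hB 0) a,
      h.V2 (V.of_injective _ hA 0) (V.of_injective _ hB 0) b]⟩

theorem GI.ext {A X C : ModuleCat.{u} R} (hr : Rel A X C) (hA : GI A) (hC : GI C) : GI X := by
  refine ⟨fun Y => ∃ A C, Rel A Y C ∧ GI A ∧ GI C, ⟨A, C, hr, hA, hC⟩, ?_⟩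
  rintro Y ⟨A, C, hr, hA, hC⟩
  refine ⟨fun E hE j => hr.V2 (hA.orth E hE j) (hC.orth E hE j), ?_⟩
  obtain ⟨Za, Ia, hIa, hra, hZa⟩ := hA.syz
  obtain ⟨Zc, Ic, hIc, hrc, hZc⟩ := hC.syz
  obtain ⟨Z, h1, h2⟩ := horseshoe hr hra hrc (hA.orth Ic hIc 0)
  exact ⟨Z, _, injective_prod hIa hIc, h1, Za, Zc, h2, hZa, hZc⟩

theorem exists_embed (X : ModuleCat.{u} R) :
    ∃ E C : ModuleCat.{u} R, Injective E ∧ Rel X E C := by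
  let ⟨I, hI, f, hf⟩ := EnoughInjectives.presentation X
  exact ⟨I, _, hI, rel_quot f.hom ((ModuleCat.mono_iff_injective f).mp hf)⟩

/-- Inductive description of Gorenstein injective dimension at most `n`. -/
def W : ℕ → ModuleCat.{u} R → Prop
  | 0, M => GI M
  | n + 1, M => ∃ J M' : ModuleCat.{u} R, Rel M J M' ∧ GI J ∧ W n M'

theorem Rel.id1 {A B C : ModuleCat.{u} R} (h : Rel A B C) (n : ℕ)
    (hC : HasInjectiveDimensionLT C n) (hB : HasInjectiveDimensionLT B (n + 1)) :
    HasInjectiveDimensionLT A (n + 1) := by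
  obtain ⟨f, g, w, hS⟩ := h.shortExact
  exact hS.hasInjectiveDimensionLT_X₁ n hC hB

theorem Rel.id3 {A B C : ModuleCat.{u} R} (h : Rel A B C) (n : ℕ)
    (hB : HasInjectiveDimensionLT B n) (hA : HasInjectiveDimensionLT A (n + 1)) :
    HasInjectiveDimensionLT C n := by
  obtain ⟨f, g, w, hS⟩ := h.shortExact
  exact hS.hasInjectiveDimensionLT_X₃ n hB hA

theorem claimA (n : ℕ) (M : ModuleCat.{u} R) (h : W n M) :
    ∃ B H : ModuleCat.{u} R, GI B ∧ HasInjectiveDimensionLT H (n + 1) ∧ Rel B H M := by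
  induction n generalizing M with
  | zero =>
    obtain ⟨Z, I, hI, hr, hZ⟩ := GI.syz h
    exact ⟨Z, I, hZ, inferInstance, hr⟩
  | succ n ih =>
    obtain ⟨J, M', hr, hJ, hM'⟩ := h
    obtain ⟨B', H', hB', hH', hr'⟩ := ih M' hM'
    obtain ⟨P, h1, h2⟩ := rel_pullback hr hr'
    obtain ⟨B, I, hI, h3, hB⟩ := (GI.ext h1 hB' hJ).syz
    obtain ⟨H, h4, h5⟩ := octa_sub h3 h2
    exact ⟨B, H, hB, h4.id1 _ hH' (hasInjectiveDimensionLT_of_ge I 1 _ (by omega)), h5⟩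

theorem claimB (n : ℕ) (B H M : ModuleCat.{u} R) (hB : GI B)
    (hH : HasInjectiveDimensionLT H (n + 1)) (hr : Rel B H M) : W n M := by
  induction n generalizing B H M with
  | zero => exact GI.cosyz hB (injective_iff_hasInjectiveDimensionLT_one.2 hH) hr
  | succ n ih =>
    obtain ⟨E, C, hE, h1⟩ := exists_embed H
    obtain ⟨J, h2, h3⟩ := octa_quot hr h1
    exact ⟨J, C, h3, GI.cosyz hB hE h2, ih _ C C (GI.of_injective injective_zero)
      (h1.id3 _ (hasInjectiveDimensionLT_of_ge E 1 _ (by omega)) hH) (Rel.zero_left C)⟩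

/-- Baer's criterion for injective dimension. -/
theorem baer_dim (n : ℕ) (H : ModuleCat.{u} R)
    (h : ∀ J : Ideal R, V (ModuleCat.of R (R ⧸ J)) H (n + 1)) :
    HasInjectiveDimensionLT H (n + 1) := by
  induction n generalizing H with
  | zero =>
    rw [zero_add, ← injective_iff_hasInjectiveDimensionLT_one,
      ← Module.injective_iff_injective_object R H]
    apply Module.Baer.injective
    intro J g
    have hr : Rel (ModuleCat.of R J) (ModuleCat.of R R) (ModuleCat.of R (R ⧸ J)) :=
      ⟨J.subtype, J.mkQ, Subtype.val_injective, LinearMap.exact_subtype_mkQ J,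
        Submodule.mkQ_surjective _⟩
    have w : ModuleCat.ofHom J.subtype ≫ ModuleCat.ofHom J.mkQ = 0 := by
      ext x; exact (LinearMap.exact_subtype_mkQ J).apply_apply_eq_zero x
    have hS : (ShortComplex.mk _ _ w).ShortExact := ModuleCat.shortComplex_shortExact _
      (LinearMap.exact_subtype_mkQ J) Subtype.val_injective (Submodule.mkQ_surjective _)
    obtain ⟨l, hl⟩ := Ext.contravariant_sequence_exact₁ hS H
      (Ext.mk₀ (ModuleCat.ofHom (Y := H) g)) (add_zero 1) (h J _)
    obtain ⟨l, rfl⟩ := Ext.homEquiv₀.symm.surjective l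
    refine ⟨l.hom, fun x hx => ?_⟩
    simp only [Ext.homEquiv₀_symm_apply, Ext.mk₀_comp_mk₀] at hl
    have := Ext.homEquiv₀.symm.injective hl
    exact congrArg (fun z : ModuleCat.of R J ⟶ H => z.hom ⟨x, hx⟩) this
  | succ n ih =>
    obtain ⟨E, C, hE, hr⟩ := exists_embed H
    exact hr.id1 _ (ih C fun J => hr.V3 (V.of_injective _ hE _) (h J))
      (hasInjectiveDimensionLT_of_ge E 1 _ (by omega))

end GI

section Kill

variable {R : Type u} [CommRing R]

/-- `s` annihilates an Ext group. -/
def K (s : R) (X Y : ModuleCat.{u} R) (j : ℕ) : Prop := ∀ e : Ext X Y j, s • e = 0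

theorem K.mul_right {s : R} {X Y : ModuleCat.{u} R} {j : ℕ} (h : K s X Y j) (t : R) :
    K (s * t) X Y j := fun e => by rw [mul_smul, h]

theorem K.c3 {A B C N : ModuleCat.{u} R} (h : Rel A B C) {a b : R} {j : ℕ} (hA : K a A N j)
    (hB : K b B N (j + 1)) : K (a * b) C N (j + 1) := by
  obtain ⟨f, g, w, hS⟩ := h.shortExact
  intro e
  obtain ⟨x, hx⟩ := Ext.contravariant_sequence_exact₃ hS N (b • e)
    (by rw [Ext.comp_smul]; exact hB _) (add_comm 1 j)
  rw [mul_smul, ← hx, ← Ext.comp_smul, hA, Ext.comp_zero]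

theorem K.of_smul_eq_zero {X Y : ModuleCat.{u} R} {s : R} (h : ∀ x : X, s • x = 0) (j : ℕ) :
    K s X Y j := by
  intro e
  have h1 : s • e = (Ext.mk₀ (s • 𝟙 X)).comp e (zero_add j) := by simp [Ext.mk₀_smul]
  have h2 : s • 𝟙 X = 0 := by
    ext x
    exact h x
  rw [h1, h2]
  simp

theorem K.of_GI {T : ModuleCat.{u} R} {s : R} {t : ℕ} (k : ℕ) :
    ∀ (B : ModuleCat.{u} R), GI B → ∀ i, t < i + 1 + k →
    (∀ N : ModuleCat.{u} R, ∀ j, t < j → K s T N j) → K s T B (i + 1) := by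
  induction k with
  | zero => intro B hB i hi hT; exact hT B _ hi
  | succ k ih =>
    intro B hB i hi hT e
    obtain ⟨Z, I, hI, hr, hZ⟩ := hB.syz
    obtain ⟨f, g, w, hS⟩ := hr.shortExact
    have h1 := ih Z hZ (i + 1) (by omega) hT
    obtain ⟨x, hx⟩ := Ext.covariant_sequence_exact₃ T hS (s • e) rfl
      (by rw [Ext.smul_comp]; exact h1 _)
    rw [← hx, V.of_injective T hI i x, Ext.zero_comp]

theorem rel_colon (I : Ideal R) (x : R) :
    Rel (ModuleCat.of R (R ⧸ I.colon {x})) (ModuleCat.of R (R ⧸ I))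
      (ModuleCat.of R (R ⧸ (I ⊔ Ideal.span {x}))) := by
  refine ⟨(I.colon {x}).mapQ I (LinearMap.lsmul R R x) ?_, Submodule.factor le_sup_left,
    ?_, ?_, Submodule.factor_surjective _⟩
  · intro y hy
    have := Submodule.mem_colon_singleton.1 hy
    simpa [mul_comm] using this
  · rw [← LinearMap.ker_eq_bot, LinearMap.ker_eq_bot']
    intro y hy
    obtain ⟨y, rfl⟩ := Submodule.Quotient.mk_surjective _ y
    rw [Submodule.mapQ_apply, Submodule.Quotient.mk_eq_zero] at hy
    rw [Submodule.Quotient.mk_eq_zero, Submodule.mem_colon_singleton]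
    simpa [mul_comm] using hy
  · intro y
    obtain ⟨y, rfl⟩ := Submodule.Quotient.mk_surjective _ y
    constructor
    · intro hy
      have hy' : y ∈ I ⊔ Ideal.span {x} := (Submodule.Quotient.mk_eq_zero _).1 hy
      obtain ⟨a, ha, b, hb, rfl⟩ := Submodule.mem_sup.1 hy'
      obtain ⟨c, rfl⟩ := Ideal.mem_span_singleton'.1 hb
      refine ⟨Submodule.Quotient.mk c, ?_⟩
      rw [Submodule.mapQ_apply, Submodule.Quotient.eq]
      have : (LinearMap.lsmul R R x) c - (a + c * x) = - a := by
        simp; ring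
      rw [this]
      exact I.neg_mem ha
    · rintro ⟨c, hc⟩
      obtain ⟨c, rfl⟩ := Submodule.Quotient.mk_surjective _ c
      rw [← hc]
      refine (Submodule.Quotient.mk_eq_zero _).2 ?_
      exact Submodule.mem_sup_right (Ideal.mem_span_singleton'.2 ⟨c, by simp [mul_comm]⟩)

theorem rel_colon_ker (I : Ideal R) (x : R) :
    ∃ N : ModuleCat.{u} R, Rel N (ModuleCat.of R (R ⧸ I)) (ModuleCat.of R (R ⧸ I.colon {x})) ∧
      ∀ s : R, (∀ y, x * y ∈ I → s * y ∈ I) → ∀ z : N, s • z = 0 := by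
  have hle : I ≤ I.colon {x} := fun y hy =>
    Submodule.mem_colon_singleton.2 (I.mul_mem_right _ hy)
  refine ⟨_, rel_ker (B := ModuleCat.of R (R ⧸ I)) (C := ModuleCat.of R (R ⧸ I.colon {x}))
    (Submodule.factor hle) (Submodule.factor_surjective _), ?_⟩
  rintro s hs ⟨z, hz⟩
  obtain ⟨z, rfl⟩ := Submodule.Quotient.mk_surjective _ z
  have hz' : z ∈ I.colon {x} := (Submodule.Quotient.mk_eq_zero _).1 hz
  refine Subtype.ext ?_
  refine (Submodule.Quotient.mk_eq_zero _).2 (hs z ?_)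
  simpa [mul_comm] using Submodule.mem_colon_singleton.1 hz'

/-- Generic step. -/
theorem kill_step {I : Ideal R} {x s a : R} {t : ℕ} (hs : ∀ y, x * y ∈ I → s * y ∈ I)
    (ha : ∀ N : ModuleCat.{u} R, ∀ j, t < j → K a (ModuleCat.of R (R ⧸ I)) N j) :
    ∀ N : ModuleCat.{u} R, ∀ j, t + 1 < j →
      K (s * a * a) (ModuleCat.of R (R ⧸ (I ⊔ Ideal.span {x}))) N j := by
  intro N j hj
  obtain ⟨j, rfl⟩ : ∃ j', j = j' + 1 + 1 := ⟨j - 2, by omega⟩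
  obtain ⟨L, hL, hk⟩ := rel_colon_ker I x
  exact K.c3 (rel_colon I x) (K.c3 hL (K.of_smul_eq_zero (hk s hs) j) (ha N _ (by omega)))
    (ha N _ (by omega))

theorem exists_elt [IsNoetherianRing R] (p : Ideal R) [p.IsPrime] (I : Ideal R) (hI : I ≤ p)
    (hp : ¬ IsAssociatedPrime p (R ⧸ I)) :
    ∃ x ∈ p, ∃ s ∉ p, ∀ y, x * y ∈ I → s * y ∈ I := by
  let S : Set (Ideal R) := {q | q ∈ associatedPrimes R (R ⧸ I) ∧ q ≤ p}
  have hS : S.Finite := (associatedPrimes.finite R (R ⧸ I)).subset fun q hq => hq.1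
  have h1 : ¬ ((p : Set R) ⊆ ⋃ i ∈ (↑hS.toFinset : Set (Ideal R)), (i : Set R)) := by
    rw [Ideal.subset_union_prime (f := fun i : Ideal R => i) ⊥ ⊥
      (fun i hi _ _ => (hS.mem_toFinset.1 hi).1.isPrime)]
    rintro ⟨q, hq, hpq⟩
    have hq' := hS.mem_toFinset.1 hq
    have : q = p := le_antisymm hq'.2 hpq
    exact hp (this ▸ hq'.1)
  obtain ⟨x, hxp, hx⟩ := Set.not_subset.1 h1
  have hx' : ∀ q, IsAssociatedPrime q (R ⧸ I) → q ≤ p → x ∉ q := by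
    intro q hq hqp hxq
    exact hx (Set.mem_biUnion (hS.mem_toFinset.2 ⟨hq, hqp⟩) hxq)
  refine ⟨x, hxp, ?_⟩
  let N : Submodule R (R ⧸ I) := LinearMap.ker (LinearMap.lsmul R (R ⧸ I) x)
  have h2 : ¬ (Module.annihilator R N ≤ p) := by
    intro hle
    obtain ⟨q, hq, hqp⟩ := Ideal.exists_minimalPrimes_le hle
    have hqa : IsAssociatedPrime q N :=
      Module.associatedPrimes.minimalPrimes_annihilator_subset_associatedPrimes R N hq
    refine hx' q (hqa.map_of_injective N.subtype Subtype.val_injective) hqp ?_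
    obtain ⟨_, f, hf⟩ := (isAssociatedPrime_iff_exists_injective_linearMap _ _).1 hqa
    have h3 : f (Submodule.Quotient.mk x) = 0 := by
      have : (Submodule.Quotient.mk x : R ⧸ q) = x • Submodule.Quotient.mk 1 := by
        rw [← Submodule.Quotient.mk_smul]; simp
      rw [this, map_smul]
      exact Subtype.ext (f (Submodule.Quotient.mk 1)).2
    exact (Submodule.Quotient.mk_eq_zero q).1 (hf (by rw [h3, map_zero]))
  obtain ⟨s, hs, hsp⟩ := Set.not_subset.1 h2
  refine ⟨s, hsp, fun y hy => ?_⟩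
  have := Module.mem_annihilator.1 hs ⟨Submodule.Quotient.mk y, by
    change x • (Submodule.Quotient.mk y : R ⧸ I) = 0
    rw [← Submodule.Quotient.mk_smul]
    exact (Submodule.Quotient.mk_eq_zero _).2 hy⟩
  have := congrArg Subtype.val this
  change s • (Submodule.Quotient.mk y : R ⧸ I) = 0 at this
  rw [← Submodule.Quotient.mk_smul] at this
  exact (Submodule.Quotient.mk_eq_zero _).1 this

theorem weaklyRegular_append {rs : List R} {x : R}
    (h : RingTheory.Sequence.IsWeaklyRegular R rs)
    (hx : ∀ y, x * y ∈ Ideal.ofList rs → y ∈ Ideal.ofList rs) :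
    RingTheory.Sequence.IsWeaklyRegular R (rs ++ [x]) := by
  rw [RingTheory.Sequence.isWeaklyRegular_append_iff,
    RingTheory.Sequence.isWeaklyRegular_singleton_iff]
  refine ⟨h, ?_⟩
  have : Ideal.ofList rs • (⊤ : Submodule R R) = Ideal.ofList rs := by simp
  rw [this, isSMulRegular_iff_right_eq_zero_of_smul]
  intro y hy
  obtain ⟨y, rfl⟩ := Submodule.Quotient.mk_surjective _ y
  rw [← Submodule.Quotient.mk_smul, Submodule.Quotient.mk_eq_zero] at hy
  exact (Submodule.Quotient.mk_eq_zero _).2 (hx y hy)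

theorem exists_good [IsNoetherianRing R] [IsLocalRing R] (p : Ideal R) [p.IsPrime] :
    ∃ rs : List R, IsAssociatedPrime p (R ⧸ Ideal.ofList rs) ∧ (∀ r ∈ rs, r ∈ p) ∧
      (p = IsLocalRing.maximalIdeal R → RingTheory.Sequence.IsWeaklyRegular R rs) ∧
      ∃ s ∉ p, ∀ N : ModuleCat.{u} R, ∀ j, rs.length < j →
        K s (ModuleCat.of R (R ⧸ Ideal.ofList rs)) N j := by
  suffices H : ∀ I : Ideal R, ∀ rs : List R, I = Ideal.ofList rs → (∀ r ∈ rs, r ∈ p) →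
      (p = IsLocalRing.maximalIdeal R → RingTheory.Sequence.IsWeaklyRegular R rs) →
      (∃ s ∉ p, ∀ N : ModuleCat.{u} R, ∀ j, rs.length < j →
        K s (ModuleCat.of R (R ⧸ Ideal.ofList rs)) N j) →
      ∃ rs : List R, IsAssociatedPrime p (R ⧸ Ideal.ofList rs) ∧ (∀ r ∈ rs, r ∈ p) ∧
      (p = IsLocalRing.maximalIdeal R → RingTheory.Sequence.IsWeaklyRegular R rs) ∧
      ∃ s ∉ p, ∀ N : ModuleCat.{u} R, ∀ j, rs.length < j →
        K s (ModuleCat.of R (R ⧸ Ideal.ofList rs)) N j by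
    refine H _ [] rfl (by simp) (fun _ => RingTheory.Sequence.IsWeaklyRegular.nil R R)
      ⟨1, fun h => Ideal.IsPrime.ne_top ‹_› (p.eq_top_iff_one.2 h), ?_⟩
    intro N j hj e
    obtain ⟨j, rfl⟩ : ∃ j', j = j' + 1 := ⟨j - 1, by simp at hj; omega⟩
    have : Module.Projective R (R ⧸ Ideal.ofList ([] : List R)) := by
      rw [Ideal.ofList_nil]
      exact Module.Projective.of_equiv (Submodule.quotEquivOfEqBot (⊥ : Ideal R) rfl).symm
    have : Projective (ModuleCat.of R (R ⧸ Ideal.ofList ([] : List R))) :=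
      (IsProjective.iff_projective _).1 this
    rw [one_smul]
    exact Ext.eq_zero_of_projective e
  intro I
  induction I using (IsNoetherian.wf ‹IsNoetherianRing R› : WellFounded ((· > ·) : Ideal R → _ → _)).induction with
  | _ I ih =>
    rintro rs rfl hrs hreg ⟨a, hap, ha⟩
    by_cases hass : IsAssociatedPrime p (R ⧸ Ideal.ofList rs)
    · exact ⟨rs, hass, hrs, hreg, a, hap, ha⟩
    have hle : Ideal.ofList rs ≤ p := Ideal.span_le.2 fun r hr => hrs r hr
    obtain ⟨x, hxp, s, hsp, hs⟩ := exists_elt p _ hle hass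
    have hxI : x ∉ Ideal.ofList rs := fun hx =>
      hsp (hle (by simpa using hs 1 (by simpa using hx)))
    have hof : Ideal.ofList (rs ++ [x]) = Ideal.ofList rs ⊔ Ideal.span {x} := by
      rw [Ideal.ofList_append, Ideal.ofList_singleton]
    refine ih (Ideal.ofList (rs ++ [x])) ?_ (rs ++ [x]) rfl ?_ ?_ ?_
    · rw [hof]
      refine lt_of_le_of_ne le_sup_left fun h => hxI ?_
      rw [h]
      exact Submodule.mem_sup_right (Ideal.mem_span_singleton_self x)
    · intro r hr
      rcases List.mem_append.1 hr with h | h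
      · exact hrs r h
      · rw [List.mem_singleton.1 h]; exact hxp
    · intro hpm
      refine weaklyRegular_append (hreg hpm) fun y hy => ?_
      have hu : IsUnit s := by
        by_contra hns
        exact hsp (hpm ▸ (IsLocalRing.mem_maximalIdeal s).2 hns)
      exact (Ideal.unit_mul_mem_iff_mem _ hu).1 (hs y hy)
    · refine ⟨s * a * a, fun h => ?_, ?_⟩
      · rcases Ideal.IsPrime.mem_or_mem ‹_› h with h | h
        · rcases Ideal.IsPrime.mem_or_mem ‹_› h with h | h
          · exact hsp h
          · exact hap h
        · exact hap h
      · rw [hof]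
        simpa using kill_step hs ha

end Kill

section ClaimC

variable {R : Type u} [CommRing R]

theorem Rel.V2c {A B C : ModuleCat.{u} R} (h : Rel A B C) {Y : ModuleCat.{u} R} {j : ℕ}
    (hA : V A Y j) (hC : V C Y j) : V B Y j := by
  obtain ⟨f, g, w, hS⟩ := h.shortExact
  intro e
  obtain ⟨x, hx⟩ := Ext.contravariant_sequence_exact₂ hS Y e (hA _)
  rw [← hx, hC x, Ext.comp_zero]

theorem V.of_dimLT {H : ModuleCat.{u} R} {n : ℕ} (h : HasInjectiveDimensionLT H n)
    (X : ModuleCat.{u} R) : V X H n := fun e => e.eq_zero_of_hasInjectiveDimensionLT n le_rfl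

theorem smul_eq_comp {X Y : ModuleCat.{u} R} {j : ℕ} (s : R) (e : Ext X Y j) :
    s • e = (Ext.mk₀ (ModuleCat.ofHom (LinearMap.lsmul R X s))).comp e (zero_add j) := by
  have h2 : ModuleCat.ofHom (LinearMap.lsmul R X s) = s • 𝟙 X := by
    ext x
    rfl
  rw [h2]
  simp [Ext.mk₀_smul]

theorem exact_prime (p : Ideal R) (x : R) (hx : ∀ y, x * y ∈ p → y ∈ p) :
    ∃ (w : ModuleCat.ofHom (LinearMap.lsmul R (R ⧸ p) x) ≫
      ModuleCat.ofHom (Submodule.factor (le_sup_left : p ≤ p ⊔ Ideal.span {x})) = 0),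
      (ShortComplex.mk (ModuleCat.ofHom (LinearMap.lsmul R (R ⧸ p) x))
        (ModuleCat.ofHom (Submodule.factor (le_sup_left : p ≤ p ⊔ Ideal.span {x}))) w).ShortExact := by
  have hex : Function.Exact (LinearMap.lsmul R (R ⧸ p) x)
      (Submodule.factor (le_sup_left : p ≤ p ⊔ Ideal.span {x})) := by
    intro y
    obtain ⟨y, rfl⟩ := Submodule.Quotient.mk_surjective _ y
    constructor
    · intro hy
      have hy' : y ∈ p ⊔ Ideal.span {x} := (Submodule.Quotient.mk_eq_zero _).1 hy
      obtain ⟨a, ha, b, hb, hab⟩ := Submodule.mem_sup.1 hy'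
      obtain ⟨c, rfl⟩ := Ideal.mem_span_singleton'.1 hb
      refine ⟨Submodule.Quotient.mk c, ?_⟩
      change x • (Submodule.Quotient.mk c : R ⧸ p) = _
      rw [← Submodule.Quotient.mk_smul, Submodule.Quotient.eq, ← hab]
      have : x • c - (a + c * x) = - a := by rw [smul_eq_mul]; ring
      rw [this]
      exact p.neg_mem ha
    · rintro ⟨z, hz⟩
      obtain ⟨z, rfl⟩ := Submodule.Quotient.mk_surjective _ z
      rw [← hz]
      change Submodule.Quotient.mk (x • z) = _
      rw [Submodule.Quotient.mk_eq_zero]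
      exact Submodule.mem_sup_right (Ideal.mul_mem_right _ _ (Ideal.mem_span_singleton_self x))
  have w : ModuleCat.ofHom (LinearMap.lsmul R (R ⧸ p) x) ≫
      ModuleCat.ofHom (Submodule.factor (le_sup_left : p ≤ p ⊔ Ideal.span {x})) = 0 := by
    exact ModuleCat.hom_ext (LinearMap.ext fun y => hex.apply_apply_eq_zero y)
  refine ⟨w, ModuleCat.shortComplex_shortExact _ hex ?_ (Submodule.factor_surjective le_sup_left)⟩
  refine (injective_iff_map_eq_zero (LinearMap.lsmul R (R ⧸ p) x)).2 ?_
  intro y hy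
  obtain ⟨y, rfl⟩ := Submodule.Quotient.mk_surjective _ y
  have hy' : (Submodule.Quotient.mk (x • y) : R ⧸ p) = 0 := hy
  exact (Submodule.Quotient.mk_eq_zero _).2 (hx y ((Submodule.Quotient.mk_eq_zero _).1 hy'))

theorem finite_of_ker_le {A B C : Type*} [AddCommGroup A] [Module R A] [AddCommGroup B]
    [Module R B] [AddCommGroup C] [Module R C] [IsNoetherianRing R] [Module.Finite R C]
    (f : A →ₗ[R] B) (hf : Function.Surjective f) (g : A →ₗ[R] C)
    (h : ∀ a, g a = 0 → f a = 0) : Module.Finite R B := by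
  have h1 : Module.Finite R (LinearMap.range g) := inferInstance
  have h2 : Module.Finite R (A ⧸ LinearMap.ker g) :=
    Module.Finite.equiv g.quotKerEquivRange.symm
  exact Module.Finite.of_surjective ((LinearMap.ker g).liftQ f fun x hx => h x hx) fun b => by
    obtain ⟨a, rfl⟩ := hf b
    exact ⟨Submodule.Quotient.mk a, rfl⟩

variable [IsNoetherianRing R] [IsLocalRing R]

theorem claimC {n : ℕ} {B H M : ModuleCat.{u} R} (hB : GI B) (hr : Rel B H M)
    [hM : Module.Finite R M] (hH : HasInjectiveDimensionLT H (n + 1 + 1))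
    (hreg : ∀ rs : List R, (∀ r ∈ rs, r ∈ IsLocalRing.maximalIdeal R) →
      RingTheory.Sequence.IsRegular R rs → rs.length < n + 1) (J : Ideal R) :
    V (ModuleCat.of R (R ⧸ J)) H (n + 1) := by
  induction J using (IsNoetherian.wf ‹IsNoetherianRing R› :
    WellFounded ((· > ·) : Ideal R → _ → _)).induction with
  | _ p ih =>
  by_contra hV
  have hcolon : ∀ x ∉ p, ∀ y, x * y ∈ p → y ∈ p := by
    intro x hx y hxy
    by_contra hy
    refine hV ((rel_colon p x).V2c (ih _ ?_) (ih _ ?_))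
    · refine lt_of_le_of_ne (fun z hz => Submodule.mem_colon_singleton.2 (Ideal.mul_mem_right _ _ hz))
        fun h => hy ?_
      rw [h]
      exact Submodule.mem_colon_singleton.2 (by simpa [mul_comm] using hxy)
    · exact lt_of_le_of_ne le_sup_left fun h => hx (by
        rw [h]; exact Submodule.mem_sup_right (Ideal.mem_span_singleton_self x))
  have hp : Ideal.IsPrime p := by
    refine ⟨fun h => hV fun e => ?_, fun {x y} hxy => ?_⟩
    · subst h
      have : K (1 : R) (ModuleCat.of R (R ⧸ (⊤ : Ideal R))) H (n + 1) :=
        K.of_smul_eq_zero (fun x => by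
          have : Subsingleton (R ⧸ (⊤ : Ideal R)) := Submodule.Quotient.subsingleton_iff.2 rfl
          exact Subsingleton.elim (α := R ⧸ (⊤ : Ideal R)) _ _) _
      simpa using this e
    · by_cases hx : x ∈ p
      · exact Or.inl hx
      · exact Or.inr (hcolon x hx y hxy)
  have hinj : ∀ x ∉ p, ∀ e : Ext (ModuleCat.of R (R ⧸ p)) H (n + 1), x • e = 0 → e = 0 := by
    intro x hx e he
    obtain ⟨w, hS⟩ := exact_prime p x (hcolon x hx)
    rw [smul_eq_comp] at he
    obtain ⟨z, hz⟩ := Ext.contravariant_sequence_exact₂ hS H e he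
    rw [← hz, ih (p ⊔ Ideal.span {x}) (lt_of_le_of_ne le_sup_left fun h => hx (by
        rw [h]; exact Submodule.mem_sup_right (Ideal.mem_span_singleton_self x))) z, Ext.comp_zero]
  have hsurj : ∀ x ∉ p, ∀ e : Ext (ModuleCat.of R (R ⧸ p)) H (n + 1), ∃ e', x • e' = e := by
    intro x hx e
    obtain ⟨w, hS⟩ := exact_prime p x (hcolon x hx)
    obtain ⟨z, hz⟩ := Ext.contravariant_sequence_exact₁ hS H e (add_comm 1 (n + 1))
      (V.of_dimLT hH _ _)
    exact ⟨z, by rw [smul_eq_comp]; exact hz⟩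
  obtain ⟨rs, hass, hrs, hwr, s, hsp, hs⟩ := exists_good p
  obtain ⟨_, f, hf⟩ := (isAssociatedPrime_iff_exists_injective_linearMap _ _).1 hass
  let T : ModuleCat.{u} R := ModuleCat.of R (R ⧸ Ideal.ofList rs)
  let P : ModuleCat.{u} R := ModuleCat.of R (R ⧸ p)
  let F : P ⟶ T := ModuleCat.ofHom f
  have hres : ∀ e : Ext P H (n + 1), ∃ e' : Ext T H (n + 1),
      (Ext.mk₀ F).comp e' (zero_add _) = e := by
    intro e
    have w : F ≫ ModuleCat.ofHom (LinearMap.range f).mkQ = 0 := by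
      exact ModuleCat.hom_ext (LinearMap.ext fun y =>
        (LinearMap.exact_map_mkQ_range f).apply_apply_eq_zero y)
    have hS : (ShortComplex.mk F (ModuleCat.ofHom (LinearMap.range f).mkQ) w).ShortExact :=
      ModuleCat.shortComplex_shortExact _ (LinearMap.exact_map_mkQ_range f) hf
        (Submodule.mkQ_surjective _)
    exact Ext.contravariant_sequence_exact₁ hS H e (add_comm 1 (n + 1)) (V.of_dimLT hH _ _)
  by_cases hpm : p = IsLocalRing.maximalIdeal R
  · have hlt : rs.length < n + 1 := by
      refine hreg rs (fun r hr => hpm ▸ hrs r hr) ⟨hwr hpm, ?_⟩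
      intro h
      have h1 : Ideal.ofList rs = ⊤ := by simpa using h.symm
      have h2 : Ideal.ofList rs ≤ p := Ideal.span_le.2 fun r hr => hrs r hr
      exact hp.ne_top (top_le_iff.1 (h1 ▸ h2))
    refine hV fun e => ?_
    refine hinj s hsp e ?_
    obtain ⟨e', rfl⟩ := hres e
    rw [← Ext.comp_smul, hs H _ hlt e', Ext.comp_zero]
  · obtain ⟨φ, g, w, hS⟩ := hr.shortExact
    have hker : ∀ e : Ext T H (n + 1), e.comp (Ext.mk₀ g) (add_zero _) = 0 →
        (Ext.mk₀ F).comp e (zero_add _) = 0 := by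
      intro e he
      refine hinj s hsp _ ?_
      obtain ⟨z, hz⟩ := Ext.covariant_sequence_exact₂ T hS e he
      have : s • z = 0 := K.of_GI (t := rs.length) rs.length B hB n (by omega) hs z
      rw [← Ext.comp_smul, ← hz, ← Ext.smul_comp, this, Ext.zero_comp, Ext.comp_zero]
    have hTf : Module.Finite R T := inferInstanceAs (Module.Finite R (R ⧸ Ideal.ofList rs))
    have hfin : Module.Finite R (Ext T M (n + 1)) := inferInstance
    have hfin2 : Module.Finite R (Ext P H (n + 1)) :=
      finite_of_ker_le ((Ext.mk₀ F).precompOfLinear R H (zero_add (n + 1))) hres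
        ((Ext.mk₀ g).postcompOfLinear R T (add_zero (n + 1))) hker
    obtain ⟨x, hxm, hxp⟩ : ∃ x ∈ IsLocalRing.maximalIdeal R, x ∉ p := by
      by_contra hcon
      push Not at hcon
      exact hpm (le_antisymm (IsLocalRing.le_maximalIdeal hp.ne_top) hcon)
    have hbot : (⊤ : Submodule R (Ext P H (n + 1))) = ⊥ := by
      refine Submodule.eq_bot_of_le_smul_of_le_jacobson_bot (IsLocalRing.maximalIdeal R) _
        hfin2.fg_top ?_ (IsLocalRing.maximalIdeal_le_jacobson _)
      intro e _
      obtain ⟨e', rfl⟩ := hsurj x hxp e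
      exact Submodule.smul_mem_smul hxm trivial
    exact hV fun e => (Submodule.mem_bot R).1 (hbot ▸ (trivial : e ∈ (⊤ : Submodule R _)))

end ClaimC

section Lower

open scoped Pointwise

variable {R : Type u} [CommRing R]

theorem exact_quotSMulTop (T : Type u) [AddCommGroup T] [Module R T] (x : R)
    (hx : IsSMulRegular T x) :
    ∃ (w : ModuleCat.ofHom (LinearMap.lsmul R T x) ≫
      ModuleCat.ofHom (Submodule.mkQ (x • (⊤ : Submodule R T))) = 0),
      (ShortComplex.mk (ModuleCat.ofHom (LinearMap.lsmul R T x))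
        (ModuleCat.ofHom (Submodule.mkQ (x • (⊤ : Submodule R T)))) w).ShortExact := by
  have hex : Function.Exact (LinearMap.lsmul R T x) (Submodule.mkQ (x • (⊤ : Submodule R T))) := by
    intro y
    rw [Submodule.mkQ_apply, Submodule.Quotient.mk_eq_zero, Submodule.mem_smul_pointwise_iff_exists]
    simp
  have w : ModuleCat.ofHom (LinearMap.lsmul R T x) ≫
      ModuleCat.ofHom (Submodule.mkQ (x • (⊤ : Submodule R T))) = 0 :=
    ModuleCat.hom_ext (LinearMap.ext fun y => hex.apply_apply_eq_zero y)
  exact ⟨w, ModuleCat.shortComplex_shortExact _ hex hx (Submodule.mkQ_surjective _)⟩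

theorem V.of_W {n : ℕ} {M : ModuleCat.{u} R} (h : W n M) {T : ModuleCat.{u} R} {t : ℕ}
    (hT : ∀ N : ModuleCat.{u} R, ∀ j, t < j → V T N j) (j : ℕ) (hj : n < j) : V T M j := by
  have hGI : ∀ J : ModuleCat.{u} R, GI J → ∀ i, V T J (i + 1) := fun J hJ i e => by
    have := K.of_GI (T := T) (s := 1) (t := t) t J hJ i (by omega)
      (fun N j hj e => by rw [one_smul]; exact hT N j hj e) e
    rwa [one_smul] at this
  induction n generalizing M j with
  | zero =>
    obtain ⟨j, rfl⟩ : ∃ j', j = j' + 1 := ⟨j - 1, by omega⟩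
    exact hGI M h j
  | succ n ih =>
    obtain ⟨j, rfl⟩ : ∃ j', j = j' + 1 := ⟨j - 1, by omega⟩
    obtain ⟨J, M', hr, hJ, hM'⟩ := h
    exact hr.V1 (ih hM' j (by omega)) (hGI J hJ j)

variable [IsNoetherianRing R] [IsLocalRing R]

theorem lower_aux {M : ModuleCat.{u} R} [Module.Finite R M] (rs : List R)
    (hrs : ∀ r ∈ rs, r ∈ IsLocalRing.maximalIdeal R) :
    ∀ (T : Type u) [AddCommGroup T] [Module R T] [Module.Finite R T] (i : ℕ),
    RingTheory.Sequence.IsWeaklyRegular T rs → ¬ V (ModuleCat.of R T) M i →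
    (∀ N : ModuleCat.{u} R, ∀ j, i < j → V (ModuleCat.of R T) N j) →
    ∃ T' : ModuleCat.{u} R, ¬ V T' M (i + rs.length) ∧
      ∀ N : ModuleCat.{u} R, ∀ j, i + rs.length < j → V T' N j := by
  induction rs with
  | nil => intro T _ _ _ i _ h1 h2; exact ⟨_, h1, h2⟩
  | cons x rs ih =>
    intro T _ _ _ i hreg h1 h2
    rw [RingTheory.Sequence.isWeaklyRegular_cons_iff] at hreg
    obtain ⟨w, hS⟩ := exact_quotSMulTop T x hreg.1
    have hxm := hrs x (by simp)
    obtain ⟨T', h3, h4⟩ := ih (fun r hr => hrs r (by simp [hr])) (QuotSMulTop x T) (i + 1) hreg.2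
      (by
        intro hV
        have hTf : Module.Finite R (ModuleCat.of R T) := inferInstanceAs (Module.Finite R T)
        have hfin : Module.Finite R (Ext (ModuleCat.of R T) M i) := inferInstance
        have hbot : (⊤ : Submodule R (Ext (ModuleCat.of R T) M i)) = ⊥ := by
          refine Submodule.eq_bot_of_le_smul_of_le_jacobson_bot (IsLocalRing.maximalIdeal R) _
            hfin.fg_top ?_ (IsLocalRing.maximalIdeal_le_jacobson _)
          intro e _
          obtain ⟨e', he'⟩ := Ext.contravariant_sequence_exact₁ hS M e (add_comm 1 i) (hV _)
          have he'' : x • e' = e := by rw [smul_eq_comp]; exact he'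
          rw [← he'']
          exact Submodule.smul_mem_smul hxm trivial
        exact h1 fun e => (Submodule.mem_bot R).1 (hbot ▸ (trivial : e ∈ (⊤ : Submodule R _))))
      (by
        intro N j hj e
        obtain ⟨j, rfl⟩ : ∃ j', j = j' + 1 := ⟨j - 1, by omega⟩
        obtain ⟨z, hz⟩ := Ext.contravariant_sequence_exact₃ hS N e (h2 N _ (by omega) _)
          (add_comm 1 j)
        rw [← hz, h2 N j (by omega) z, Ext.comp_zero])
    have hl : i + (x :: rs).length = i + 1 + rs.length := by simp; omega
    rw [hl]
    exact ⟨T', h3, h4⟩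

theorem lower {n : ℕ} {M : ModuleCat.{u} R} [Module.Finite R M] [Nontrivial M] (h : W n M)
    (rs : List R) (hrs : ∀ r ∈ rs, r ∈ IsLocalRing.maximalIdeal R)
    (hreg : RingTheory.Sequence.IsWeaklyRegular R rs) : rs.length ≤ n := by
  have hproj : Projective (ModuleCat.of R R) :=
    (IsProjective.iff_projective _).1 (inferInstanceAs (Module.Projective R R))
  obtain ⟨T', h1, h2⟩ := lower_aux (M := M) rs hrs R 0 hreg
    (by
      intro hV
      obtain ⟨m, hm⟩ := exists_ne (0 : M)
      have h0 := hV (Ext.mk₀ (ModuleCat.ofHom (LinearMap.toSpanSingleton R M m)))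
      rw [Ext.mk₀_eq_zero_iff] at h0
      have := congrArg (fun f => f.hom (1 : R)) h0
      simp only [ModuleCat.hom_ofHom, LinearMap.toSpanSingleton_apply, one_smul] at this
      exact hm this)
    (by
      intro N j hj e
      obtain ⟨j, rfl⟩ : ∃ j', j = j' + 1 := ⟨j - 1, by omega⟩
      exact Ext.eq_zero_of_projective e)
  by_contra hlt
  exact h1 (V.of_W h h2 _ (by omega))

end Lower

section Conv

variable {R : Type u} [CommRing R]

theorem GI.of_equiv {X Y : ModuleCat.{u} R} (e : X ≃ₗ[R] Y) (h : GI Y) : GI X := by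
  refine GI.ext (A := ModuleCat.of R PUnit) (C := Y) ⟨0, e.toLinearMap, fun _ _ _ => rfl, ?_,
    e.surjective⟩ (GI.of_injective injective_zero) h
  intro x
  constructor
  · intro hx
    exact ⟨0, by
      have : x = 0 := e.injective (by simpa using hx)
      rw [this]; rfl⟩
  · rintro ⟨y, rfl⟩
    exact map_zero e

theorem lift_of_V {A B C E : ModuleCat.{u} R} (f : A →ₗ[R] B) (g : B →ₗ[R] C)
    (hf : Function.Injective f) (hfg : Function.Exact f g) (hg : Function.Surjective g)
    (hV : V E A 1) (q : E →ₗ[R] C) : ∃ l : E →ₗ[R] B, ∀ x, g (l x) = q x := by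
  have w : ModuleCat.ofHom f ≫ ModuleCat.ofHom g = 0 := by
    ext x; exact hfg.apply_apply_eq_zero x
  have hS : (ShortComplex.mk _ _ w).ShortExact := ModuleCat.shortComplex_shortExact _ hfg hf hg
  obtain ⟨l, hl⟩ := Ext.covariant_sequence_exact₃ E hS (Ext.mk₀ (ModuleCat.ofHom q))
    (zero_add 1) (hV _)
  obtain ⟨l, rfl⟩ := Ext.homEquiv₀.symm.surjective l
  refine ⟨l.hom, fun x => ?_⟩
  simp only [Ext.homEquiv₀_symm_apply, Ext.mk₀_comp_mk₀] at hl
  have := Ext.homEquiv₀.symm.injective hl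
  exact congrArg (fun z : E ⟶ C => z.hom x) this

theorem V_of_lift {A B C E : ModuleCat.{u} R} (f : A →ₗ[R] B) (g : B →ₗ[R] C)
    (hf : Function.Injective f) (hfg : Function.Exact f g) (hg : Function.Surjective g)
    (hB : V E B 1) (hl : ∀ q : E →ₗ[R] C, ∃ l : E →ₗ[R] B, ∀ x, g (l x) = q x) : V E A 1 := by
  have w : ModuleCat.ofHom f ≫ ModuleCat.ofHom g = 0 := by
    ext x; exact hfg.apply_apply_eq_zero x
  have hS : (ShortComplex.mk _ _ w).ShortExact := ModuleCat.shortComplex_shortExact _ hfg hf hg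
  intro e
  obtain ⟨x, hx⟩ := Ext.covariant_sequence_exact₁ E hS e (hB _) (zero_add 1)
  obtain ⟨q, rfl⟩ := Ext.homEquiv₀.symm.surjective x
  obtain ⟨l, hl⟩ := hl q.hom
  have hq : q = ModuleCat.ofHom l ≫ ModuleCat.ofHom g := by
    ext x; exact (hl x).symm
  rw [← hx, hq, Ext.homEquiv₀_symm_apply, ← Ext.mk₀_comp_mk₀]
  rw [Ext.comp_assoc_of_second_deg_zero, hS.comp_extClass, Ext.comp_zero]

theorem GI.of_isGI {J : Type u} [AddCommGroup J] [Module R J] (h : IsGorensteinInjective R J) :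
    GI (ModuleCat.of R J) := by
  obtain ⟨w⟩ := h
  letI := w.acg
  letI := w.mod
  let Kc : ℤ → ModuleCat.{u} R := fun i => ModuleCat.of R (LinearMap.ker (w.d i))
  let Ic : ℤ → ModuleCat.{u} R := fun i => ModuleCat.of R (w.I i)
  have hI : ∀ i, Injective (Ic i) := fun i => (Module.injective_iff_injective_object R _).1 (w.inj i)
  let g : ∀ i, Ic (i + 1 + 1) →ₗ[R] Kc i := fun i =>
    (w.d (i + 1)).codRestrict (LinearMap.ker (w.d i)) fun x =>
      LinearMap.congr_fun (w.d_comp_d i) x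
  let f : ∀ i, Kc i →ₗ[R] Ic (i + 1) := fun i => (LinearMap.ker (w.d i)).subtype
  have hf : ∀ i, Function.Injective (f i) := fun i => Subtype.val_injective
  have hfg : ∀ i, Function.Exact (f (i + 1)) (g i) := by
    intro i x
    constructor
    · intro hx
      exact ⟨⟨x, congrArg Subtype.val hx⟩, rfl⟩
    · rintro ⟨y, rfl⟩
      exact Subtype.ext y.2
  have hg : ∀ i, Function.Surjective (g i) := by
    rintro i ⟨x, hx⟩
    have hx' := hx
    rw [w.exact i] at hx'
    obtain ⟨y, hy⟩ := hx'
    exact ⟨y, Subtype.ext hy⟩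
  have hrel : ∀ i, Rel (Kc (i + 1)) (Ic (i + 1 + 1)) (Kc i) := fun i =>
    ⟨f (i + 1), g i, hf _, hfg i, hg i⟩
  have horth : ∀ j i, ∀ E : ModuleCat.{u} R, Injective E → V E (Kc i) (j + 1) := by
    intro j
    induction j with
    | zero =>
      intro i E hE
      obtain ⟨i, rfl⟩ : ∃ k, i = k + 1 := ⟨i - 1, by ring⟩
      refine V_of_lift _ _ (hf _) (hfg i) (hg i) (V.of_injective _ (hI _) 0) fun q => ?_
      obtain ⟨l, hl⟩ := w.hom_exact E ((Module.injective_iff_injective_object R _).2 hE) i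
        ((f i).comp q) (LinearMap.ext fun x => (q x).2)
      exact ⟨l, fun x => Subtype.ext (LinearMap.congr_fun hl x)⟩
    | succ j ih =>
      intro i E hE
      obtain ⟨i, rfl⟩ : ∃ k, i = k + 1 := ⟨i - 1, by ring⟩
      exact (hrel i).V1 (ih i E hE) (V.of_injective _ (hI _) _)
  obtain ⟨e⟩ := w.ker_iso
  refine GI.of_equiv (Y := Kc (-1)) e ⟨fun Y => ∃ i, Y = Kc i, ⟨-1, rfl⟩, ?_⟩
  rintro _ ⟨i, rfl⟩
  exact ⟨fun E hE j => horth j i E hE, _, _, hI _, hrel i, i + 1, rfl⟩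

theorem isGI_of_GI {J : Type u} [AddCommGroup J] [Module R J] (h : GI (ModuleCat.of R J)) :
    IsGorensteinInjective R J := by
  have hnext : ∀ X : {X : ModuleCat.{u} R // GI X}, ∃ Z : {X : ModuleCat.{u} R // GI X},
      ∃ I : ModuleCat.{u} R, Injective I ∧ Rel Z.1 I X.1 := by
    rintro ⟨X, hX⟩
    obtain ⟨Z, I, hI, hr, hZ⟩ := hX.syz
    exact ⟨⟨Z, hZ⟩, I, hI, hr⟩
  have hprev : ∀ X : {X : ModuleCat.{u} R // GI X}, ∃ Z : {X : ModuleCat.{u} R // GI X},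
      ∃ I : ModuleCat.{u} R, Injective I ∧ Rel X.1 I Z.1 := by
    rintro ⟨X, hX⟩
    obtain ⟨I, Z, hI, hr⟩ := exists_embed X
    exact ⟨⟨Z, hX.cosyz hI hr⟩, I, hI, hr⟩
  choose next hnext using hnext
  choose prev hprev using hprev
  let X0 : {X : ModuleCat.{u} R // GI X} := ⟨ModuleCat.of R J, h⟩
  let f0 : ℤ → {X : ModuleCat.{u} R // GI X} := fun i => match i with
    | Int.ofNat n => next^[n] X0
    | Int.negSucc n => prev^[n + 1] X0
  have hf0 : ∀ i, ∃ I : ModuleCat.{u} R, Injective I ∧ Rel (f0 (i + 1)).1 I (f0 i).1 := by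
    intro i
    match i with
    | Int.ofNat n =>
      have : f0 (Int.ofNat n + 1) = next (f0 (Int.ofNat n)) :=
        Function.iterate_succ_apply' next n X0
      rw [this]
      exact hnext _
    | Int.negSucc 0 => exact hprev X0
    | Int.negSucc (n + 1) =>
      have : f0 (Int.negSucc (n + 1)) = prev (f0 (Int.negSucc (n + 1) + 1)) :=
        Function.iterate_succ_apply' prev (n + 1) X0
      rw [this]
      exact hprev _
  let f : ℤ → ModuleCat.{u} R := fun i => (f0 (i - 1)).1
  have hfGI : ∀ i, GI (f i) := fun i => (f0 (i - 1)).2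
  have hf : ∀ i, ∃ I : ModuleCat.{u} R, Injective I ∧ Rel (f (i + 1)) I (f i) := by
    intro i
    have := hf0 (i - 1)
    rwa [show i - 1 + 1 = i + 1 - 1 by ring] at this
  choose I hI ι π hι hex hπ using hf
  have hlift : ∀ i (E : ModuleCat.{u} R), Injective E → ∀ q : E →ₗ[R] f i,
      ∃ l : E →ₗ[R] I i, ∀ x, π i (l x) = q x := fun i E hE q =>
    lift_of_V (ι i) (π i) (hι i) (hex i) (hπ i) ((hfGI (i + 1)).orth E hE 0) q
  have hker : ∀ i x, ((ι i).comp (π (i + 1))) x = 0 ↔ ∃ y, ι (i + 1) y = x := by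
    intro i x
    rw [LinearMap.comp_apply, ← map_zero (ι i), (hι i).eq_iff]
    exact hex (i + 1) x
  refine ⟨{ I := fun i => I i
            inj := fun i => (Module.injective_iff_injective_object R _).2 (hI i)
            d := fun i => (ι i).comp (π (i + 1))
            d_comp_d := fun i => LinearMap.ext fun x => (hker i _).2 ⟨_, rfl⟩
            exact := ?_
            hom_exact := ?_
            ker_iso := ?_ }⟩
  · intro i
    ext x
    rw [LinearMap.mem_ker, hker]
    constructor
    · rintro ⟨y, rfl⟩
      obtain ⟨z, rfl⟩ := hπ _ y
      exact ⟨z, rfl⟩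
    · rintro ⟨z, rfl⟩
      exact ⟨_, rfl⟩
  · intro E _ _ hE i φ hφ
    obtain ⟨m, hm⟩ := exists_lift (ι (i + 1)) (hι (i + 1)) φ
      (fun x => (hker i _).1 (LinearMap.congr_fun hφ x))
    obtain ⟨l, hl⟩ := hlift (i + 1 + 1) (ModuleCat.of R E)
      ((Module.injective_iff_injective_object R _).1 hE) m
    refine ⟨l, LinearMap.ext fun x => ?_⟩
    rw [← hm x, ← hl x]
    rfl
  · have hk : LinearMap.ker ((ι (-1)).comp (π (-1 + 1))) = LinearMap.range (ι (-1 + 1)) := by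
      ext x
      rw [LinearMap.mem_ker, hker]
      rfl
    have e1 : f (-1 + 1 + 1) ≃ₗ[R] LinearMap.range (ι (-1 + 1)) :=
      LinearEquiv.ofInjective (ι (-1 + 1)) (hι (-1 + 1))
    exact ⟨e1.trans (LinearEquiv.ofEq _ _ hk.symm)⟩

theorem W.of_witness (n : ℕ) : ∀ (M : Type u) [AddCommGroup M] [Module R M],
    Nonempty (GidWitness R M n) → W n (ModuleCat.of R M) := by
  induction n with
  | zero =>
    rintro M _ _ ⟨w⟩
    letI := w.acg
    letI := w.mod
    have hs : Function.Surjective w.ε := by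
      intro x
      have : x ∈ LinearMap.ker (w.d 0) := (w.triv (0 + 1) (by omega)).elim _ _
      rw [w.exact_zero] at this
      exact this
    exact GI.of_equiv (Y := ModuleCat.of R (w.J 0)) (LinearEquiv.ofBijective w.ε ⟨w.ε_inj, hs⟩)
      (GI.of_isGI (w.gi 0 le_rfl))
  | succ n ih =>
    rintro M _ _ ⟨w⟩
    letI := w.acg
    letI := w.mod
    refine ⟨ModuleCat.of R (w.J 0), _, rel_quot (A := ModuleCat.of R M) (B := ModuleCat.of R (w.J 0))
      w.ε w.ε_inj, GI.of_isGI (w.gi 0 (by omega)), ih _ ⟨?_⟩⟩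
    exact
      { J := fun i => w.J (i + 1)
        gi := fun i hi => w.gi (i + 1) (by omega)
        triv := fun i hi => w.triv (i + 1) (by omega)
        ε := (LinearMap.range w.ε).liftQ (w.d 0) (le_of_eq w.exact_zero.symm)
        ε_inj := by
          rw [← LinearMap.ker_eq_bot]
          exact Submodule.ker_liftQ_eq_bot _ _ _ (le_of_eq w.exact_zero)
        d := fun i => w.d (i + 1)
        exact_zero := by
          rw [Submodule.range_liftQ]
          exact w.exact 0
        exact := fun i => w.exact (i + 1) }

theorem witness_of_W (n : ℕ) : ∀ (M : ModuleCat.{u} R), W n M → Nonempty (GidWitness R M n) := by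
  induction n with
  | zero =>
    intro M h
    let Jc : ℕ → ModuleCat.{u} R := fun i => match i with
      | 0 => M
      | _ + 1 => ModuleCat.of R PUnit
    have hsub : ∀ i, Subsingleton (Jc (i + 1)) := fun i => inferInstanceAs (Subsingleton PUnit)
    refine ⟨{ J := fun i => Jc i
              gi := ?_
              triv := ?_
              ε := (LinearMap.id : M →ₗ[R] M)
              ε_inj := Function.injective_id
              d := fun i => 0
              exact_zero := ?_
              exact := ?_ }⟩
    · intro i hi
      obtain rfl : i = 0 := by omega
      exact isGI_of_GI (J := M) h
    · intro i hi
      obtain ⟨i, rfl⟩ : ∃ j, i = j + 1 := ⟨i - 1, by omega⟩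
      exact hsub i
    · ext x
      exact ⟨fun _ => ⟨x, rfl⟩, fun _ => rfl⟩
    · intro i
      ext x
      have := hsub i
      exact ⟨fun _ => ⟨0, Subsingleton.elim _ _⟩, fun _ => rfl⟩
  | succ n ih =>
    rintro M ⟨J0, M', ⟨f, g, hf, hfg, hg⟩, hJ0, hM'⟩
    obtain ⟨w⟩ := ih M' hM'
    letI := w.acg
    letI := w.mod
    let Jc : ℕ → ModuleCat.{u} R := fun i => match i with
      | 0 => J0
      | i + 1 => ModuleCat.of R (w.J i)
    let dc : ∀ i : ℕ, Jc i →ₗ[R] Jc (i + 1) := fun i => match i with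
      | 0 => w.ε.comp g
      | i + 1 => w.d i
    refine ⟨{ J := fun i => Jc i
              gi := ?_
              triv := ?_
              ε := f
              ε_inj := hf
              d := dc
              exact_zero := ?_
              exact := ?_ }⟩
    · intro i hi
      match i with
      | 0 => exact isGI_of_GI (J := J0) hJ0
      | i + 1 => exact w.gi i (by omega)
    · intro i hi
      obtain ⟨i, rfl⟩ : ∃ j, i = j + 1 := ⟨i - 1, by omega⟩
      exact w.triv i (by omega)
    · ext x
      constructor
      · intro hx
        exact (hfg x).1 (w.ε_inj (by rw [map_zero]; exact hx))
      · rintro ⟨y, rfl⟩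
        change w.ε (g (f y)) = 0
        rw [hfg.apply_apply_eq_zero, map_zero]
    · intro i
      match i with
      | 0 =>
        change LinearMap.ker (w.d 0) = LinearMap.range (w.ε.comp g)
        rw [w.exact_zero, LinearMap.range_comp, LinearMap.range_eq_top.2 hg, Submodule.map_top]
      | i + 1 => exact w.exact i

end Conv

theorem main
    (R : Type u) [CommRing R] [IsNoetherianRing R] [IsLocalRing R]
    (M : Type u) [AddCommGroup M] [Module R M] [Module.Finite R M] [Nontrivial M]
    (hfin : gid R M < ⊤) :
    gid R M = ringDepth R := by
  classical
  have hne : ∃ n : ℕ, Nonempty (GidWitness R M n) := by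
    by_contra hcon
    push Not at hcon
    have : gid R M = ⊤ := by
      unfold gid
      rw [sInf_eq_top]
      rintro c ⟨n, _, hn⟩
      exact absurd hn (by simpa using hcon n)
    exact hfin.ne this
  let n := Nat.find hne
  have hn : Nonempty (GidWitness R M n) := Nat.find_spec hne
  have hmin : ∀ m, Nonempty (GidWitness R M m) → n ≤ m := fun m hm => Nat.find_min' hne hm
  have hgid : gid R M = n := by
    refine le_antisymm (sInf_le ⟨n, rfl, hn⟩) (le_sInf ?_)
    rintro c ⟨m, rfl, hm⟩
    exact_mod_cast hmin m hm
  have hMf : Module.Finite R (ModuleCat.of R M) := inferInstanceAs (Module.Finite R M)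
  have hMn : Nontrivial (ModuleCat.of R M) := inferInstanceAs (Nontrivial M)
  have hW := W.of_witness n M hn
  rw [hgid]
  refine le_antisymm ?_ (sSup_le ?_)
  · by_contra hlt
    rw [not_le] at hlt
    have hreg : ∀ rs : List R, (∀ r ∈ rs, r ∈ IsLocalRing.maximalIdeal R) →
        RingTheory.Sequence.IsRegular R rs → rs.length < n := by
      intro rs h1 h2
      have : (rs.length : ℕ∞) ≤ ringDepth R := le_sSup ⟨rs, rfl, h1, h2⟩
      exact_mod_cast this.trans_lt hlt
    clear_value n
    obtain _ | k := n
    · exact absurd hlt (by simp)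
    obtain ⟨B, H, hB, hH, hr⟩ := claimA (k + 1) _ hW
    have hH' := baer_dim k H (claimC hB hr hH hreg)
    have := hmin k (witness_of_W k _ (claimB k B H _ hB hH' hr))
    omega
  · rintro c ⟨rs, rfl, h1, h2⟩
    exact_mod_cast lower hW rs h1 h2.toIsWeaklyRegular

end GidBass

theorem gid_eq_depth_of_finite_gid
    (R : Type u) [CommRing R] [IsNoetherianRing R] [IsLocalRing R]
    (M : Type u) [AddCommGroup M] [Module R M] [Module.Finite R M] [Nontrivial M]
    (hfin : gid R M < ⊤) :
    gid R M = ringDepth R := by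
  exact GidBass.main R M hfin
end

section
/- Let R be a commutative noetherian ring, let J be a Gorenstein injective R-module, let p be a prime ideal of R, and let T be an R_p-module of finite projective dimension. Then Ext^i_{R_p}(T, J_p) = 0 for all i > 0. -/
/-!
Let `R` be a commutative noetherian ring, `J` a Gorenstein injective `R`-module, `p` a
prime ideal, and `T` an `R_p`-module of finite projective dimension. Then
`Ext^i_{R_p}(T, J_p) = 0` for all `i > 0`.
-/

universe u

open CategoryTheory

/-- A witness for an exact sequence `0 → Pₙ → ⋯ → P₁ → P₀ → T → 0` with each `Pᵢ`
a projective `A`-module (modules beyond index `n` are trivial). -/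
structure FinProjResWitness (A : Type u) [CommRing A]
    (T : Type u) [AddCommGroup T] [Module A T] (n : ℕ) : Type (u + 1) where
  P : ℕ → Type u
  [acg : ∀ i, AddCommGroup (P i)]
  [mod : ∀ i, Module A (P i)]
  proj : ∀ i ≤ n, Module.Projective A (P i)
  triv : ∀ i, n < i → Subsingleton (P i)
  π : P 0 →ₗ[A] T
  π_surj : Function.Surjective π
  d : ∀ i : ℕ, P (i + 1) →ₗ[A] P i
  exact_zero : LinearMap.ker π = LinearMap.range (d 0)
  exact : ∀ i : ℕ, LinearMap.ker (d i) = LinearMap.range (d (i + 1))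

attribute [local instance] HasDerivedCategory.standard
attribute [local instance] CategoryTheory.hasExt_of_hasDerivedCategory

set_option synthInstance.maxHeartbeats 1000000
set_option maxHeartbeats 1000000

lemma hasProjectiveDimensionLT_of_witness {A : Type u} [CommRing A] (n : ℕ) :
    ∀ (T : Type u) [AddCommGroup T] [Module A T], FinProjResWitness A T n →
      HasProjectiveDimensionLT (ModuleCat.of A T) (n + 1) := by
  induction n with
  | zero =>
    intro T _ _ w
    letI := w.acg
    letI := w.mod
    have := w.triv 1 (by norm_num)
    have h0 : LinearMap.ker w.π = ⊥ := by
      rw [w.exact_zero, LinearMap.range_eq_bot]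
      ext x
      rw [Subsingleton.elim x 0, map_zero, map_zero]
    let e : w.P 0 ≃ₗ[A] T :=
      LinearEquiv.ofBijective w.π ⟨LinearMap.ker_eq_bot.mp h0, w.π_surj⟩
    have := w.proj 0 le_rfl
    have : Module.Projective A T := Module.Projective.of_equiv e
    have : Projective (ModuleCat.of A T) := (IsProjective.iff_projective T).mp this
    infer_instance
  | succ n ih =>
    intro T _ _ w
    letI := w.acg
    letI := w.mod
    let K := LinearMap.ker w.π
    let f : w.P 1 →ₗ[A] K := (w.d 0).codRestrict K (fun x => by
      have : w.d 0 x ∈ LinearMap.range (w.d 0) := ⟨x, rfl⟩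
      rwa [← w.exact_zero] at this)
    have hK := ih K
      { P := fun i => w.P (i + 1)
        proj := fun i hi => w.proj (i + 1) (by lia)
        triv := fun i hi => w.triv (i + 1) (by lia)
        π := f
        π_surj := by
          rintro ⟨y, hy⟩
          have hy' : y ∈ LinearMap.range (w.d 0) := by rwa [← w.exact_zero]
          obtain ⟨x, rfl⟩ := hy'
          exact ⟨x, rfl⟩
        d := fun i => w.d (i + 1)
        exact_zero := by
          rw [LinearMap.ker_codRestrict]
          exact w.exact 0
        exact := fun i => w.exact (i + 1) }
    have hS := ModuleCat.shortComplex_shortExact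
      (ModuleCat.shortComplexOfCompEqZero K.subtype w.π
        (LinearMap.exact_subtype_ker_map w.π).linearMap_comp_eq_zero)
      (LinearMap.exact_subtype_ker_map w.π) K.injective_subtype w.π_surj
    have := w.proj 0 (by lia)
    have : Projective (ModuleCat.of A (w.P 0)) := (IsProjective.iff_projective _).mp this
    have h2 : HasProjectiveDimensionLT (ModuleCat.of A (w.P 0)) (n + 1 + 1) :=
      hasProjectiveDimensionLT_of_ge _ 1 _ (by lia)
    exact hS.hasProjectiveDimensionLT_X₃ (n + 1) hK h2

lemma ext_eq_zero_of_witness (R : Type u) [CommRing R] [IsNoetherianRing R]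
    (J : Type u) [AddCommGroup J] [Module R J] (w : GorensteinInjectiveWitness R J)
    (p : Ideal R) [p.IsPrime] (T : ModuleCat.{u} (Localization.AtPrime p))
    (N : ℕ) [HasProjectiveDimensionLT T N] (m : ℕ) :
    letI := w.acg
    letI := w.mod
    ∀ (i : ℤ) (M : Type u) [AddCommGroup M] [Module R M]
      (_ : M ≃ₗ[R] LinearMap.ker (w.d i)) (j : ℕ), 0 < j → N ≤ j + m →
      ∀ x : Abelian.Ext T
        (ModuleCat.of (Localization.AtPrime p) (LocalizedModule p.primeCompl M)) j, x = 0 := by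
  let := w.acg
  let := w.mod
  induction m with
  | zero =>
    intro i M _ _ e j hj hN x
    exact x.eq_zero_of_hasProjectiveDimensionLT N hN
  | succ m ih =>
    intro i M _ _ e j hj hN x
    let f : w.I (i + 1 + 1) →ₗ[R] LinearMap.ker (w.d i) :=
      (w.d (i + 1)).codRestrict _ (fun y => by
        have : w.d (i + 1) y ∈ LinearMap.range (w.d (i + 1)) := ⟨y, rfl⟩
        rwa [← w.exact] at this)
    let g : w.I (i + 1 + 1) →ₗ[R] M := e.symm.toLinearMap ∘ₗ f
    have hker : LinearMap.ker g = LinearMap.ker (w.d (i + 1)) := by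
      rw [LinearEquiv.ker_comp, LinearMap.ker_codRestrict]
    have hf : Function.Surjective f := by
      rintro ⟨y, hy⟩
      have hy' : y ∈ LinearMap.range (w.d (i + 1)) := by rwa [← w.exact]
      obtain ⟨z, rfl⟩ := hy'
      exact ⟨z, rfl⟩
    have hg : Function.Surjective g := e.symm.surjective.comp hf
    let k := (LinearMap.ker (w.d (i + 1))).subtype
    have hkg : Function.Exact k g := by
      rw [LinearMap.exact_iff, hker, Submodule.range_subtype]
    have hex : Function.Exact (LocalizedModule.map p.primeCompl k)
        (LocalizedModule.map p.primeCompl g) := LocalizedModule.map_exact p.primeCompl k g hkg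
    have hS := ModuleCat.shortComplex_shortExact
      (ModuleCat.shortComplexOfCompEqZero (LocalizedModule.map p.primeCompl k)
        (LocalizedModule.map p.primeCompl g) hex.linearMap_comp_eq_zero) hex
      (LocalizedModule.map_injective p.primeCompl k (Submodule.injective_subtype _))
      (LocalizedModule.map_surjective p.primeCompl g hg)
    have := w.inj (i + 1 + 1)
    have hinj : Module.Injective (Localization.AtPrime p)
        (LocalizedModule p.primeCompl (w.I (i + 1 + 1))) :=
      Module.injective_of_isLocalizedModule p.primeCompl
        (LocalizedModule.mkLinearMap p.primeCompl (w.I (i + 1 + 1)))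
    have : Injective (ModuleCat.of (Localization.AtPrime p)
        (LocalizedModule p.primeCompl (w.I (i + 1 + 1)))) :=
      Module.injective_object_of_injective_module _ _
    obtain ⟨y, rfl⟩ := Abelian.Ext.covariant_sequence_exact₃ T hS x rfl
      (ih (i + 1) _ (LinearEquiv.refl _ _) (j + 1) (by lia) (by lia) _)
    obtain ⟨j, rfl⟩ : ∃ j', j = j' + 1 := ⟨j - 1, by lia⟩
    have hy : y = 0 := Abelian.Ext.eq_zero_of_injective (I := ModuleCat.of (Localization.AtPrime p)
        (LocalizedModule p.primeCompl (w.I (i + 1 + 1)))) y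
    rw [hy, Abelian.Ext.zero_comp]

theorem ext_vanishing_of_finite_projdim_of_isGorensteinInjective
    (R : Type u) [CommRing R] [IsNoetherianRing R]
    (J : Type u) [AddCommGroup J] [Module R J] (hJ : IsGorensteinInjective R J)
    (p : Ideal R) [p.IsPrime]
    (T : Type u) [AddCommGroup T] [Module (Localization.AtPrime p) T]
    (hT : ∃ n : ℕ, Nonempty (FinProjResWitness (Localization.AtPrime p) T n)) :
    ∀ i : ℕ, 0 < i →
      Subsingleton (Abelian.Ext (ModuleCat.of (Localization.AtPrime p) T)
        (ModuleCat.of (Localization.AtPrime p) (LocalizedModule p.primeCompl J)) i) := by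
  obtain ⟨n, ⟨wT⟩⟩ := hT
  obtain ⟨w⟩ := hJ
  intro i hi
  have := hasProjectiveDimensionLT_of_witness n T wT
  obtain ⟨e⟩ := w.ker_iso
  have h := ext_eq_zero_of_witness R J w p (ModuleCat.of _ T) (n + 1) (n + 1) (-1) J e i hi (by lia)
  exact ⟨fun a b => by rw [h a, h b]⟩
end
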